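/- Let 𝔮 be a primary saturated ideal of the ring O(ℝⁿ) of real-analytic functions on ℝⁿ. Then 𝔮 is a principal ideal if and only if its radical √𝔮 is a principal ideal. -/

import Mathlib

/-!
The two implications are of very different depth.

If `√q = (f)`, let `k` be minimal with `f ^ k ∈ q`. For `g ∈ q` one shows `f ^ m ∣ g` by induction
on `m ≤ k`: if `g = f ^ m * h` with `m < k`, then `f ^ m ∉ q`, so `h ∈ √q = (f)` as `q` is primary.
Hence `q = (f ^ k)`, in any commutative ring (`principal_of_radical`).

Conversely let `q = (g)` with `g ≠ 0`. The ring of germs of analytic functions at a point, realised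
as the ring `CPS n` of convergent power series, is factorial by Weierstrass division and
preparation (`instUFD`). The squarefree part of the germ of `g` at a point generates the radical of
the germ of `(g)` at all nearby points as well, because squarefreeness is an open condition
(`squarefree_nhds`): a squarefree regular germ and its derivative have a nonzero combination that
does not involve the distinguished variable. These local generators are glued to a global `f` by
the second Cousin problem (`cousin`, `exists_global_isRad`). It remains to see that a power of `f`
lies in `(g)` (`radical_principal`); locally this is clear, but the exponents might be unbounded.
As `q` is proper, `g` has a zero `x₀`; let `p` be a prime factor of the germ of `g` at `x₀`, of
multiplicity `m`, and let `u` be the `m`-th derivative of `g` in a direction along which `g` does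
not vanish identically near `x₀`. Then `g` divides `f ^ m * u` at every point, while `p` does not
divide the germ of `u` at `x₀`, so no power of `u` lies in `(g)`. As `(g)` is primary,
`f ^ m ∈ (g)`.

The second Cousin problem is solved through `H¹(ℝⁿ, 𝒪) = 0` (`cousin_one`). An additive cocycle of
real-analytic functions is complexified near `ℝⁿ ⊆ ℂⁿ` and split there by a partition of unity into
`C¹` functions `W i`, whose common `∂̄`-derivative agrees near `ℝⁿ` with an integrable `σ`
(`exists_cutoff`). By the Bochner–Martinelli formula (`FS`) the restriction of `W i` to `ℝⁿ` differs
by an analytic function from a multiple of the potential of `σ` for the Bochner–Martinelli kernel,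
which does not depend on `i` (`analytic_correction`). For the multiplicative problem this is
applied to the logarithms of the absolute values of the transition functions, and the remaining
signs are removed by extending analytic square roots from ball to ball (`exists_sqrt`).
-/

/-- The ring of real-analytic functions on `ℝⁿ`, as a subring of the pointwise function ring. -/
noncomputable def ORn (n : ℕ) : Subring ((Fin n → ℝ) → ℝ) where
  carrier := {f | ∀ x, AnalyticAt ℝ f x}
  mul_mem' hf hg x := (hf x).mul (hg x)
  one_mem' _ := analyticAt_const
  add_mem' hf hg x := (hf x).add (hg x)
  zero_mem' _ := analyticAt_const
  neg_mem' hf x := (hf x).neg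

/-- The saturation of a set of global real-analytic functions on `ℝⁿ`. -/
def saturation (n : ℕ) (a : Set (ORn n)) : Set (ORn n) :=
  {g | ∀ x : Fin n → ℝ, ∃ U : Set (Fin n → ℝ), IsOpen U ∧ x ∈ U ∧
    ∃ (r : ℕ) (A : Fin r → ORn n) (c : Fin r → ((Fin n → ℝ) → ℝ)),
      (∀ i, A i ∈ a) ∧ (∀ i, ∀ y ∈ U, AnalyticAt ℝ (c i) y) ∧
      ∀ y ∈ U, (g : (Fin n → ℝ) → ℝ) y = ∑ i, c i y * (A i : (Fin n → ℝ) → ℝ) y}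

/-! ### Weighted norms and evaluation of formal power series -/

namespace RA

open scoped ENNReal NNReal Topology
open Filter

section Toolkit
variable {ι : Type*} [Fintype ι]

/-- The monomial `y ^ α = ∏ i, y i ^ α i`. -/
def mono {R : Type*} [CommMonoid R] (y : ι → R) (α : ι →₀ ℕ) : R := ∏ i, y i ^ α i

lemma mono_add {R : Type*} [CommMonoid R] (y : ι → R) (α β : ι →₀ ℕ) :
    mono y (α + β) = mono y α * mono y β := by
  simp [mono, pow_add, Finset.prod_mul_distrib]

@[simp] lemma mono_zero {R : Type*} [CommMonoid R] (y : ι → R) : mono y (0 : ι →₀ ℕ) = 1 := by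
  simp [mono]

variable {𝕜 : Type*} [NormedField 𝕜]

/-- The weighted `ℓ¹` norm `∑ ‖a_α‖ ρ^α` of a formal power series. -/
noncomputable def nrm (ρ : ι → ℝ≥0) (a : MvPowerSeries ι 𝕜) : ℝ≥0∞ :=
  ∑' α, ‖MvPowerSeries.coeff α a‖ₑ * (mono ρ α : ℝ≥0)

/-- The sum of a formal power series at a point. -/
noncomputable def evalS (a : MvPowerSeries ι 𝕜) (y : ι → 𝕜) : 𝕜 :=
  ∑' α, MvPowerSeries.coeff α a * mono y α

lemma nrm_add_le (ρ : ι → ℝ≥0) (a b : MvPowerSeries ι 𝕜) :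
    nrm ρ (a + b) ≤ nrm ρ a + nrm ρ b := by
  unfold nrm
  rw [← ENNReal.tsum_add]
  refine ENNReal.tsum_le_tsum fun α => ?_
  rw [← add_mul, map_add]
  gcongr
  exact enorm_add_le _ _

lemma nrm_neg (ρ : ι → ℝ≥0) (a : MvPowerSeries ι 𝕜) : nrm ρ (-a) = nrm ρ a := by
  simp [nrm]

@[simp] lemma nrm_zero (ρ : ι → ℝ≥0) : nrm ρ (0 : MvPowerSeries ι 𝕜) = 0 := by
  simp [nrm]

lemma nrm_mul_le (ρ : ι → ℝ≥0) (a b : MvPowerSeries ι 𝕜) :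
    nrm ρ (a * b) ≤ nrm ρ a * nrm ρ b := by
  classical
  have key : nrm ρ a * nrm ρ b = ∑' x : (Σ α : ι →₀ ℕ, Finset.HasAntidiagonal.antidiagonal α),
      (‖MvPowerSeries.coeff (x.2 : (ι →₀ ℕ) × (ι →₀ ℕ)).1 a‖ₑ * (mono ρ (x.2 : (ι →₀ ℕ) × (ι →₀ ℕ)).1 : ℝ≥0)) *
      (‖MvPowerSeries.coeff (x.2 : (ι →₀ ℕ) × (ι →₀ ℕ)).2 b‖ₑ * (mono ρ (x.2 : (ι →₀ ℕ) × (ι →₀ ℕ)).2 : ℝ≥0)) := by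
    unfold nrm
    rw [← ENNReal.tsum_mul_right]
    simp_rw [← ENNReal.tsum_mul_left]
    rw [← ENNReal.tsum_prod, ← Finset.HasAntidiagonal.sigmaAntidiagonalEquivProd.tsum_eq]
    rfl
  rw [key, ENNReal.tsum_sigma']
  refine ENNReal.tsum_le_tsum fun α => ?_
  rw [tsum_fintype, MvPowerSeries.coeff_mul, ← Finset.sum_coe_sort]
  refine (mul_le_mul_left (enorm_sum_le _ _) _).trans ?_
  rw [Finset.sum_mul]
  refine Finset.sum_le_sum fun x _ => ?_
  have h := x.2
  rw [Finset.HasAntidiagonal.mem_antidiagonal] at h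
  rw [enorm_mul]
  have : (mono ρ α : ℝ≥0) = mono ρ x.1.1 * mono ρ x.1.2 := by rw [← mono_add, h]
  rw [this, ENNReal.coe_mul]
  apply le_of_eq; ring

lemma nrm_mono {ρ ρ' : ι → ℝ≥0} (h : ρ ≤ ρ') (a : MvPowerSeries ι 𝕜) : nrm ρ a ≤ nrm ρ' a := by
  refine ENNReal.tsum_le_tsum fun α => ?_
  gcongr
  unfold mono
  gcongr with i
  exact h i

lemma nrm_one (ρ : ι → ℝ≥0) : nrm ρ (1 : MvPowerSeries ι 𝕜) = 1 := by
  classical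
  unfold nrm
  rw [tsum_eq_single 0]
  · simp
  · intro α hα
    simp [MvPowerSeries.coeff_one, hα]

lemma nrm_C (ρ : ι → ℝ≥0) (c : 𝕜) : nrm ρ (MvPowerSeries.C c : MvPowerSeries ι 𝕜) = ‖c‖ₑ := by
  classical
  unfold nrm
  rw [tsum_eq_single 0]
  · simp
  · intro α hα
    simp [MvPowerSeries.coeff_C, hα]

lemma nrm_X (ρ : ι → ℝ≥0) (i : ι) : nrm ρ (MvPowerSeries.X i : MvPowerSeries ι 𝕜) = ρ i := by
  classical
  unfold nrm
  rw [tsum_eq_single (Finsupp.single i 1)]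
  · simp [mono, MvPowerSeries.coeff_X, Finsupp.single_apply]
  · intro α hα
    simp [MvPowerSeries.coeff_X, hα]

lemma nrm_pow_le (ρ : ι → ℝ≥0) (a : MvPowerSeries ι 𝕜) (k : ℕ) : nrm ρ (a ^ k) ≤ nrm ρ a ^ k := by
  induction k with
  | zero => simp [nrm_one]
  | succ k ih =>
    rw [pow_succ, pow_succ]
    exact (nrm_mul_le _ _ _).trans (by gcongr)

lemma nrm_sum_le {κ : Type*} (s : Finset κ) (ρ : ι → ℝ≥0) (a : κ → MvPowerSeries ι 𝕜) :
    nrm ρ (∑ k ∈ s, a k) ≤ ∑ k ∈ s, nrm ρ (a k) := by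
  classical
  induction s using Finset.induction_on with
  | empty => simp
  | insert i s hi ih =>
    rw [Finset.sum_insert hi, Finset.sum_insert hi]
    exact (nrm_add_le _ _ _).trans (by gcongr)

lemma enorm_coeff_le (ρ : ι → ℝ≥0) (a : MvPowerSeries ι 𝕜) (α : ι →₀ ℕ) :
    ‖MvPowerSeries.coeff α a‖ₑ * (mono ρ α : ℝ≥0) ≤ nrm ρ a :=
  ENNReal.le_tsum (f := fun α => ‖MvPowerSeries.coeff α a‖ₑ * (mono ρ α : ℝ≥0)) α

lemma enorm_mono_le {ρ : ι → ℝ≥0} {y : ι → 𝕜} (hy : ∀ i, ‖y i‖₊ ≤ ρ i) (α : ι →₀ ℕ) :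
    ‖mono y α‖₊ ≤ mono ρ α := by
  unfold mono
  rw [nnnorm_prod]
  simp_rw [nnnorm_pow]
  gcongr with i
  exact hy i

lemma summable_norm_evalS {ρ : ι → ℝ≥0} {a : MvPowerSeries ι 𝕜} (h : nrm ρ a ≠ ∞)
    {y : ι → 𝕜} (hy : ∀ i, ‖y i‖₊ ≤ ρ i) :
    Summable fun α => ‖MvPowerSeries.coeff α a * mono y α‖ := by
  have h2 : ∑' α, ((‖MvPowerSeries.coeff α a * mono y α‖₊ : ℝ≥0) : ℝ≥0∞) ≠ ∞ := by
    refine ne_top_of_le_ne_top h (ENNReal.tsum_le_tsum fun α => ?_)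
    rw [nnnorm_mul, ENNReal.coe_mul]
    gcongr
    · exact le_rfl
    · exact enorm_mono_le hy α
  rw [ENNReal.tsum_coe_ne_top_iff_summable] at h2
  exact NNReal.summable_coe.2 h2

lemma enorm_evalS_le [CompleteSpace 𝕜] {ρ : ι → ℝ≥0} {a : MvPowerSeries ι 𝕜} 
    {y : ι → 𝕜} (hy : ∀ i, ‖y i‖₊ ≤ ρ i) : ‖evalS a y‖ₑ ≤ nrm ρ a := by
  unfold evalS
  refine (enorm_tsum_le_tsum_enorm (f := fun α => MvPowerSeries.coeff α a * mono y α)).trans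
    (ENNReal.tsum_le_tsum fun α => ?_)
  rw [enorm_mul]
  gcongr
  exact ENNReal.coe_le_coe.2 (enorm_mono_le hy α)

lemma tsum_mul_aux [CompleteSpace 𝕜] {A : Type*} [AddCommMonoid A] [Finset.HasAntidiagonal A]
    {f g : A → 𝕜} (hf : Summable fun α => ‖f α‖) (hg : Summable fun α => ‖g α‖) :
    (∑' α, f α) * (∑' α, g α) = ∑' α, ∑ x ∈ Finset.HasAntidiagonal.antidiagonal α, f x.1 * g x.2 :=
  Summable.tsum_mul_tsum_eq_tsum_sum_antidiagonal hf.of_norm hg.of_norm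
    (summable_mul_of_summable_norm hf hg)

lemma evalS_mul [CompleteSpace 𝕜] {ρ : ι → ℝ≥0} {a b : MvPowerSeries ι 𝕜}
    (ha : nrm ρ a ≠ ∞) (hb : nrm ρ b ≠ ∞)
    {y : ι → 𝕜} (hy : ∀ i, ‖y i‖₊ ≤ ρ i) : evalS (a * b) y = evalS a y * evalS b y := by
  classical
  have h3 := tsum_mul_aux (summable_norm_evalS ha hy) (summable_norm_evalS hb hy)
  unfold evalS
  rw [h3]
  refine tsum_congr fun α => ?_
  rw [MvPowerSeries.coeff_mul, Finset.sum_mul]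
  refine Finset.sum_congr rfl fun x hx => ?_
  have hx' : x.1 + x.2 = α := Finset.HasAntidiagonal.mem_antidiagonal.1 hx
  rw [← hx', mono_add]; ring

lemma evalS_add [CompleteSpace 𝕜] {ρ : ι → ℝ≥0} {a b : MvPowerSeries ι 𝕜} (ha : nrm ρ a ≠ ∞) (hb : nrm ρ b ≠ ∞)
    {y : ι → 𝕜} (hy : ∀ i, ‖y i‖₊ ≤ ρ i) : evalS (a + b) y = evalS a y + evalS b y := by
  unfold evalS
  rw [← (summable_norm_evalS ha hy).of_norm.tsum_add (summable_norm_evalS hb hy).of_norm]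
  simp [add_mul]

lemma evalS_neg (a : MvPowerSeries ι 𝕜) (y : ι → 𝕜) : evalS (-a) y = - evalS a y := by
  simp [evalS, tsum_neg]

@[simp] lemma evalS_zero (y : ι → 𝕜) : evalS (0 : MvPowerSeries ι 𝕜) y = 0 := by
  simp [evalS]

@[simp] lemma evalS_C (c : 𝕜) (y : ι → 𝕜) : evalS (MvPowerSeries.C c : MvPowerSeries ι 𝕜) y = c := by
  classical
  unfold evalS
  rw [tsum_eq_single 0]
  · simp
  · intro α hα
    simp [MvPowerSeries.coeff_C, hα]

@[simp] lemma evalS_one (y : ι → 𝕜) : evalS (1 : MvPowerSeries ι 𝕜) y = 1 := by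
  simpa using evalS_C (1 : 𝕜) y

@[simp] lemma evalS_X (i : ι) (y : ι → 𝕜) : evalS (MvPowerSeries.X i : MvPowerSeries ι 𝕜) y = y i := by
  classical
  unfold evalS
  rw [tsum_eq_single (Finsupp.single i 1)]
  · simp [mono, MvPowerSeries.coeff_X, Finsupp.single_apply]
  · intro α hα
    simp [MvPowerSeries.coeff_X, hα]

@[simp] lemma evalS_at_zero (a : MvPowerSeries ι 𝕜) :
    evalS a 0 = MvPowerSeries.constantCoeff a := by
  classical
  unfold evalS
  rw [tsum_eq_single 0]
  · simp
  · intro α hα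
    obtain ⟨i, hi⟩ := Finsupp.ne_iff.1 hα
    have : mono (0 : ι → 𝕜) α = 0 := by
      unfold mono
      exact Finset.prod_eq_zero (Finset.mem_univ i) (by simpa using hi)
    simp [this]
end Toolkit
end RA

/-! ### Power series expansions of analytic functions -/

namespace RA

open scoped ENNReal NNReal Topology
open Filter

section Analytic
variable {ι : Type*} [Fintype ι] {𝕜 : Type*} [NontriviallyNormedField 𝕜] [CompleteSpace 𝕜]

lemma mono_const {R : Type*} [CommMonoid R] (r : R) (α : ι →₀ ℕ) :
    mono (fun _ : ι => r) α = r ^ α.degree := by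
  unfold mono
  rw [Finset.prod_pow_eq_pow_sum, Finsupp.degree_eq_sum]

lemma mono_single {R : Type*} [CommMonoid R] (y : ι → R) (i : ι) :
    mono y (Finsupp.single i 1) = y i := by
  classical
  unfold mono
  rw [Finset.prod_eq_single i]
  · simp
  · intro j _ hj
    simp [Finsupp.single_apply, hj.symm]
  · simp

/-- The multi-index counting the letters of a word. -/
noncomputable def cnt {k : ℕ} (w : Fin k → ι) : ι →₀ ℕ := ∑ i, Finsupp.single (w i) 1

lemma mono_cnt {R : Type*} [CommMonoid R] {k : ℕ} (y : ι → R) (w : Fin k → ι) :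
    mono y (cnt w) = ∏ i, y (w i) := by
  have h : ∀ s : Finset (Fin k), mono y (∑ i ∈ s, Finsupp.single (w i) 1) = ∏ i ∈ s, y (w i) := by
    classical
    intro s
    induction s using Finset.induction_on with
    | empty => simp
    | insert i s hi ih => rw [Finset.sum_insert hi, Finset.prod_insert hi, mono_add, ih, mono_single]
  exact h _

lemma exists_word (k : ℕ) : ∀ α : ι →₀ ℕ, α.degree = k → ∃ w : Fin k → ι, cnt w = α := by
  classical
  induction k with
  | zero =>
    intro α h
    exact ⟨Fin.elim0, by simpa [cnt, eq_comm] using ((Finsupp.degree_eq_zero_iff _).1 h).symm⟩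
  | succ k ih =>
    intro α h
    have : α ≠ 0 := by rintro rfl; simp at h
    obtain ⟨i, hi⟩ := Finsupp.ne_iff.1 this
    have hle : Finsupp.single i 1 ≤ α := by
      rw [Finsupp.single_le_iff]
      exact Nat.one_le_iff_ne_zero.2 hi
    obtain ⟨β, rfl⟩ := exists_add_of_le hle
    obtain ⟨w, hw⟩ := ih β (by rw [map_add] at h; simp at h; omega)
    refine ⟨Fin.cons i w, ?_⟩
    simp [cnt, Fin.sum_univ_succ, ← hw]

/-- The monomial `y ^ α` comes from a continuous multilinear map of norm at most `1`. -/
lemma exists_multilinear (k : ℕ) (α : ι →₀ ℕ) : ∃ M : (ι → 𝕜) [×k]→L[𝕜] 𝕜, ‖M‖ ≤ 1 ∧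
    (α.degree = k → ∀ y, M (fun _ => y) = mono y α) := by
  classical
  by_cases h : α.degree = k
  swap
  · exact ⟨0, by simp, fun h' => absurd h' h⟩
  obtain ⟨w, hw⟩ : ∃ w : Fin k → ι, ∀ y : ι → 𝕜, (∏ i, y (w i)) = mono y α := by
    obtain ⟨w, rfl⟩ := exists_word k α h
    exact ⟨w, fun y => (mono_cnt y w).symm⟩
  refine ⟨(ContinuousMultilinearMap.mkPiAlgebraFin 𝕜 k 𝕜).compContinuousLinearMap
    (fun i => ContinuousLinearMap.proj (w i)), ?_, fun _ y => ?_⟩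
  · refine (ContinuousMultilinearMap.norm_compContinuousLinearMap_le _ _).trans ?_
    refine mul_le_one₀ (ContinuousMultilinearMap.norm_mkPiAlgebraFin.le)
      (Finset.prod_nonneg fun i _ => norm_nonneg _) (Finset.prod_le_one (fun i _ => norm_nonneg _) fun i _ => ?_)
    refine ContinuousLinearMap.opNorm_le_bound _ zero_le_one fun y => ?_
    simpa using norm_le_pi_norm y (w i)
  · simp [List.prod_ofFn, hw]

/-- The homogeneous parts of a formal power series as multilinear maps. -/
noncomputable def toFMS [DecidableEq ι] (a : MvPowerSeries ι 𝕜) :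
    FormalMultilinearSeries 𝕜 (ι → 𝕜) 𝕜 := fun k => ∑ α ∈ Finset.finsuppAntidiag (Finset.univ : Finset ι) k,
    MvPowerSeries.coeff α a • (exists_multilinear (𝕜 := 𝕜) k α).choose

lemma mem_fsa [DecidableEq ι] {k : ℕ} {α : ι →₀ ℕ} :
    α ∈ Finset.finsuppAntidiag (Finset.univ : Finset ι) k ↔ α.degree = k := by
  simp [Finset.mem_finsuppAntidiag, Finsupp.degree_eq_sum]

lemma toFMS_apply [DecidableEq ι] (a : MvPowerSeries ι 𝕜) (k : ℕ) (y : ι → 𝕜) :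
    toFMS a k (fun _ => y) = ∑ α ∈ Finset.finsuppAntidiag (Finset.univ : Finset ι) k,
      MvPowerSeries.coeff α a * mono y α := by
  unfold toFMS
  simp only [ContinuousMultilinearMap.sum_apply, ContinuousMultilinearMap.smul_apply, smul_eq_mul]
  refine Finset.sum_congr rfl fun α hα => ?_
  rw [(exists_multilinear (𝕜 := 𝕜) k α).choose_spec.2 (mem_fsa.1 hα)]

lemma evalS_hasFPowerSeriesOnBall [DecidableEq ι] {a : MvPowerSeries ι 𝕜} {r : ℝ≥0} (hr : 0 < r)
    (ha : nrm (fun _ => r) a ≠ ∞) : HasFPowerSeriesOnBall (evalS a) (toFMS a) 0 r := by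
  classical
  refine ⟨?_, by exact_mod_cast hr, ?_⟩
  · refine FormalMultilinearSeries.le_radius_of_bound _ (nrm (fun _ => r) a).toReal fun k => ?_
    rw [← ENNReal.toReal_ofReal (show 0 ≤ ‖toFMS a k‖ * (r : ℝ) ^ k by positivity)]
    refine ENNReal.toReal_mono ha ?_
    have h0 : ENNReal.ofReal (‖toFMS a k‖ * (r : ℝ) ^ k) = ‖toFMS a k‖ₑ * (r : ℝ≥0∞) ^ k := by
      rw [ENNReal.ofReal_mul (norm_nonneg _), ofReal_norm, ENNReal.ofReal_pow r.coe_nonneg,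
        ENNReal.ofReal_coe_nnreal]
    rw [h0]
    have h1 : ‖toFMS a k‖ₑ ≤ ∑ α ∈ Finset.finsuppAntidiag (Finset.univ : Finset ι) k,
        ‖MvPowerSeries.coeff α a‖ₑ := by
      unfold toFMS
      refine le_trans (enorm_sum_le (ε := (ι → 𝕜) [×k]→L[𝕜] 𝕜) _ _) ?_
      have : ∀ α : ι →₀ ℕ, ‖MvPowerSeries.coeff α a • (exists_multilinear (𝕜 := 𝕜) k α).choose‖ₑ
          ≤ ‖MvPowerSeries.coeff α a‖ₑ := by
        intro α
        have h2 := (exists_multilinear (𝕜 := 𝕜) k α).choose_spec.1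
        rw [← ofReal_norm, ← ofReal_norm]
        refine ENNReal.ofReal_le_ofReal ?_
        rw [norm_smul]
        exact mul_le_of_le_one_right (norm_nonneg _) h2
      exact Finset.sum_le_sum fun α _ => this α
    refine (mul_le_mul_left h1 _).trans ?_
    rw [Finset.sum_mul]
    refine le_trans (le_of_eq ?_) (ENNReal.sum_le_tsum
      (f := fun α => ‖MvPowerSeries.coeff α a‖ₑ * (mono (fun _ : ι => r) α : ℝ≥0))
      (Finset.finsuppAntidiag (Finset.univ : Finset ι) k))
    refine Finset.sum_congr rfl fun α hα => ?_
    rw [mono_const, mem_fsa.1 hα]; simp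
  · intro y hy
    have hy' : ‖y‖₊ < r := by
      simpa [Metric.mem_eball, enorm_eq_nnnorm, ← NNReal.coe_lt_coe] using hy
    have hs : Summable fun α => MvPowerSeries.coeff α a * mono y α :=
      (summable_norm_evalS ha (fun i => (nnnorm_le_pi_nnnorm y i).trans hy'.le)).of_norm
    have h1 := hs.hasSum
    rw [← (Equiv.sigmaFiberEquiv (fun α : ι →₀ ℕ => α.degree)).hasSum_iff] at h1
    rw [zero_add]
    refine h1.sigma fun k => ?_
    rw [toFMS_apply]
    letI : Fintype {α : ι →₀ ℕ // α.degree = k} :=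
      Fintype.subtype (Finset.finsuppAntidiag (Finset.univ : Finset ι) k) fun α => mem_fsa
    rw [Finset.sum_subtype (p := fun α : ι →₀ ℕ => α.degree = k) _ (fun α => mem_fsa)]
    exact hasSum_fintype _

lemma evalS_analyticAt {a : MvPowerSeries ι 𝕜} {r : ℝ≥0}
    (ha : nrm (fun _ => r) a ≠ ∞) {y : ι → 𝕜} (hy : ‖y‖ < r) : AnalyticAt 𝕜 (evalS a) y := by
  have hr : 0 < r := by
    have := (norm_nonneg y).trans_lt hy
    exact_mod_cast this
  classical
  refine (evalS_hasFPowerSeriesOnBall hr ha).analyticAt_of_mem ?_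
  simpa [Metric.mem_eball, enorm_eq_nnnorm, ← NNReal.coe_lt_coe] using hy

/-- Uniqueness of power series expansions. -/
lemma eq_zero_of_evalS {a : MvPowerSeries ι 𝕜} {r : ℝ≥0} (hr : 0 < r)
    (ha : nrm (fun _ => r) a ≠ ∞) (h : evalS a =ᶠ[𝓝 0] 0) : a = 0 := by
  classical
  have h1 : HasFPowerSeriesAt 0 (toFMS a) (0 : ι → 𝕜) :=
    (evalS_hasFPowerSeriesOnBall hr ha).hasFPowerSeriesAt.congr h
  ext α
  have h2 : (∑ β ∈ Finset.finsuppAntidiag (Finset.univ : Finset ι) α.degree,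
      MvPolynomial.monomial β (MvPowerSeries.coeff β a)) = 0 := by
    haveI : Infinite 𝕜 := NontriviallyNormedField.infinite 𝕜
    refine MvPolynomial.funext fun y => ?_
    have h3 := h1.apply_eq_zero α.degree y
    rw [toFMS_apply] at h3
    rw [map_sum, map_zero, ← h3]
    refine Finset.sum_congr rfl fun β _ => ?_
    rw [MvPolynomial.eval_monomial, Finsupp.prod_fintype _ _ (by simp)]
    rfl
  have h4 := congrArg (MvPolynomial.coeff α) h2
  rw [MvPolynomial.coeff_sum] at h4
  simp only [MvPolynomial.coeff_monomial, MvPolynomial.coeff_zero] at h4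
  rw [Finset.sum_ite_eq_of_mem' _ _ _ (mem_fsa.2 rfl)] at h4
  simpa using h4

/-- An analytic function is locally the sum of an absolutely convergent multi-index series. -/
lemma exists_evalS {f : (ι → 𝕜) → 𝕜} {x : ι → 𝕜} (hf : AnalyticAt 𝕜 f x) :
    ∃ r : ℝ≥0, 0 < r ∧ ∃ a : MvPowerSeries ι 𝕜, nrm (fun _ => r) a ≠ ∞ ∧
      ∀ y, ‖y‖ < r → f (x + y) = evalS a y := by
  classical
  obtain ⟨p, R, hp⟩ := hf
  obtain ⟨s, hs0, hsR⟩ := ENNReal.lt_iff_exists_nnreal_btwn.1 hp.r_pos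
  have hs0' : 0 < s := by exact_mod_cast hs0
  set N : ℝ≥0 := Fintype.card ι + 1 with hN
  have hNpos : 0 < N := by positivity
  set r := s / N with hr
  have hr0 : 0 < r := by positivity
  have hrs : r ≤ s := div_le_self s.2 (by rw [hN]; exact le_add_of_nonneg_left (by positivity))
  set c : (Σ k : ℕ, (Fin k → ι)) → 𝕜 := fun w => p w.1 (fun i => Pi.single (w.2 i) 1) with hc
  have hcn : ∀ w, ‖c w‖ₑ ≤ ‖p w.1‖ₑ := by
    intro w
    rw [← ofReal_norm, ← ofReal_norm]
    refine ENNReal.ofReal_le_ofReal ((p w.1).le_opNorm _ |>.trans ?_)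
    have : ∀ i : Fin w.1, ‖(Pi.single (w.2 i) 1 : ι → 𝕜)‖ = 1 := fun i => by
      rw [Pi.norm_single]; simp
    simp [this]
  have hfin : ∑' w : (Σ k : ℕ, (Fin k → ι)), ‖c w‖ₑ * (r : ℝ≥0∞) ^ w.1 ≠ ∞ := by
    have h1 := p.summable_norm_mul_pow (r := s) (hsR.trans_le hp.r_le)
    have h2 : Summable fun k => ‖p k‖₊ * s ^ k := by
      rw [← NNReal.summable_coe]; simpa using h1
    rw [← ENNReal.tsum_coe_ne_top_iff_summable] at h2
    refine ne_top_of_le_ne_top h2 ?_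
    rw [ENNReal.tsum_sigma']
    refine ENNReal.tsum_le_tsum fun k => ?_
    rw [tsum_fintype]
    refine (Finset.sum_le_sum fun w _ => mul_le_mul_left (hcn ⟨k, w⟩) _).trans ?_
    have h3 : (Fintype.card ι : ℝ≥0) ^ k * r ^ k ≤ s ^ k := by
      rw [← mul_pow]
      gcongr
      rw [hr, mul_div_assoc']
      rw [div_le_iff₀ hNpos, mul_comm]
      gcongr
      rw [hN]; exact le_add_of_nonneg_right zero_le_one
    have h4 : ((Fintype.card ι ^ k : ℕ) : ℝ≥0∞) * (‖p k‖ₑ * (r : ℝ≥0∞) ^ k) =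
        ((‖p k‖₊ * ((Fintype.card ι : ℝ≥0) ^ k * r ^ k) : ℝ≥0) : ℝ≥0∞) := by
      push_cast
      rw [enorm_eq_nnnorm]; ring
    have h9 : (∑ _w : Fin k → ι, ‖p k‖ₑ * (r : ℝ≥0∞) ^ k) =
        ((Fintype.card ι ^ k : ℕ) : ℝ≥0∞) * (‖p k‖ₑ * (r : ℝ≥0∞) ^ k) := by
      rw [Finset.sum_const, Finset.card_univ, Fintype.card_fun, Fintype.card_fin, nsmul_eq_mul]
    refine le_trans (le_of_eq (h9.trans h4)) ?_
    exact ENNReal.coe_le_coe.2 (mul_le_mul_right h3 _)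
  let φ : (Σ k : ℕ, (Fin k → ι)) → (ι →₀ ℕ) := fun w => cnt w.2
  let a : MvPowerSeries ι 𝕜 := fun α => ∑' w : {w // φ w = α}, c w
  have ha : ∀ α, MvPowerSeries.coeff α a = ∑' w : {w // φ w = α}, c w := fun α => rfl
  have hdeg : ∀ w, (mono (fun _ : ι => r) (φ w) : ℝ≥0) = r ^ w.1 := by
    intro w
    simp [φ, mono_cnt]
  refine ⟨r, hr0, a, ?_, ?_⟩
  · refine ne_top_of_le_ne_top hfin ?_
    rw [← (Equiv.sigmaFiberEquiv φ).tsum_eq, ENNReal.tsum_sigma']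
    refine ENNReal.tsum_le_tsum fun α => ?_
    rw [ha]
    refine (mul_le_mul_left (enorm_tsum_le_tsum_enorm (f := fun w : {w // φ w = α} => c w)) _).trans ?_
    rw [← ENNReal.tsum_mul_right]
    refine ENNReal.tsum_le_tsum fun w => ?_
    have h5 := hdeg w.1
    rw [w.2] at h5
    rw [h5]; simp [Equiv.sigmaFiberEquiv]
  · intro y hy
    have hyn : ∀ i, ‖y i‖₊ ≤ r := fun i =>
      (nnnorm_le_pi_nnnorm y i).trans (by exact_mod_cast hy.le)
    have hsum : Summable fun w : (Σ k : ℕ, (Fin k → ι)) => ‖c w * mono y (φ w)‖ := by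
      have : ∑' w : (Σ k : ℕ, (Fin k → ι)), ((‖c w * mono y (φ w)‖₊ : ℝ≥0) : ℝ≥0∞) ≠ ∞ := by
        refine ne_top_of_le_ne_top hfin (ENNReal.tsum_le_tsum fun w => ?_)
        rw [nnnorm_mul, ENNReal.coe_mul]
        have h6 : ‖mono y (φ w)‖₊ ≤ r ^ w.1 := by
          rw [← hdeg w]; exact enorm_mono_le hyn _
        refine mul_le_mul' le_rfl ?_
        exact_mod_cast h6
      rw [ENNReal.tsum_coe_ne_top_iff_summable] at this
      exact NNReal.summable_coe.2 this
    have hsum' := hsum.of_norm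
    have e1 : f (x + y) = ∑' w : (Σ k : ℕ, (Fin k → ι)), c w * mono y (φ w) := by
      have h7 := hp.hasSum (y := y) (by
        simp only [Metric.mem_eball, edist_zero_right]
        refine lt_of_lt_of_le ?_ hsR.le
        rw [enorm_eq_nnnorm]
        have : ‖y‖₊ < s := lt_of_lt_of_le (by exact_mod_cast hy) hrs
        exact_mod_cast this)
      rw [hsum'.tsum_sigma' (fun k => (hasSum_fintype _).summable), ← h7.tsum_eq]
      refine tsum_congr fun k => ?_
      rw [tsum_fintype]
      have hy2 : y = ∑ i, y i • (Pi.single i 1 : ι → 𝕜) := by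
        ext j; simp [Finset.sum_apply, Pi.single_apply]
      have h8 : p k (fun _ => y) = p k (fun _ => ∑ i, y i • (Pi.single i 1 : ι → 𝕜)) := by
        rw [← hy2]
      rw [h8, ContinuousMultilinearMap.map_sum]
      refine Finset.sum_congr rfl fun w _ => ?_
      rw [ContinuousMultilinearMap.map_smul_univ]
      simp only [hc, φ, mono_cnt, smul_eq_mul]
      ring
    rw [e1, ← (Equiv.sigmaFiberEquiv φ).tsum_eq]
    have hs2 := (Equiv.sigmaFiberEquiv φ).summable_iff.2 hsum'
    have hs3 := (Equiv.sigmaFiberEquiv φ).summable_iff.2 hsum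
    refine hs2.tsum_sigma.trans (tsum_congr fun α => ?_)
    rw [ha, ← tsum_mul_right]
    refine tsum_congr fun w => ?_
    simp [Equiv.sigmaFiberEquiv, w.2]

end Analytic
end RA

/-! ### The ring of convergent power series and Taylor series -/

namespace RA

open scoped ENNReal NNReal Topology
open Filter

section SumS
variable {ι : Type*} [Fintype ι] {𝕜 : Type*} [NormedField 𝕜] [CompleteSpace 𝕜] {κ : Type*}

/-- Coefficientwise sum of a family of formal power series. -/
noncomputable def sumS (t : κ → MvPowerSeries ι 𝕜) : MvPowerSeries ι 𝕜 :=
  fun α => ∑' k, MvPowerSeries.coeff α (t k)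

lemma coeff_sumS (t : κ → MvPowerSeries ι 𝕜) (α : ι →₀ ℕ) :
    MvPowerSeries.coeff α (sumS t) = ∑' k, MvPowerSeries.coeff α (t k) := rfl

lemma mono_pos {ρ : ι → ℝ≥0} (hρ : ∀ i, 0 < ρ i) (α : ι →₀ ℕ) : 0 < mono ρ α :=
  Finset.prod_pos fun i _ => pow_pos (hρ i) _

lemma summable_coeff {ρ : ι → ℝ≥0} (hρ : ∀ i, 0 < ρ i) {t : κ → MvPowerSeries ι 𝕜}
    (ht : ∑' k, nrm ρ (t k) ≠ ∞) (α : ι →₀ ℕ) :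
    Summable fun k => ‖MvPowerSeries.coeff α (t k)‖ := by
  have h : ∑' k, ‖MvPowerSeries.coeff α (t k)‖ₑ ≠ ∞ := by
    have h1 : (∑' k, ‖MvPowerSeries.coeff α (t k)‖ₑ) * (mono ρ α : ℝ≥0) ≠ ∞ := by
      refine ne_top_of_le_ne_top ht ?_
      rw [← ENNReal.tsum_mul_right]
      exact ENNReal.tsum_le_tsum fun k => enorm_coeff_le ρ (t k) α
    intro h2
    rw [h2, ENNReal.top_mul] at h1
    · exact h1 rfl
    · exact_mod_cast (mono_pos hρ α).ne'
  simp_rw [enorm_eq_nnnorm] at h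
  rw [ENNReal.tsum_coe_ne_top_iff_summable] at h
  exact NNReal.summable_coe.2 h

lemma nrm_sumS_le (ρ : ι → ℝ≥0) (t : κ → MvPowerSeries ι 𝕜) :
    nrm ρ (sumS t) ≤ ∑' k, nrm ρ (t k) := by
  unfold nrm
  rw [ENNReal.tsum_comm]
  refine ENNReal.tsum_le_tsum fun α => ?_
  rw [ENNReal.tsum_mul_right, coeff_sumS]
  gcongr
  exact enorm_tsum_le_tsum_enorm

lemma hasSum_swap_aux {A : Type*} {F : κ → A → 𝕜} {G : A → 𝕜}
    (h : Summable fun x : κ × A => ‖F x.1 x.2‖) (hG : ∀ α, G α = ∑' k, F k α) :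
    HasSum (fun k => ∑' α, F k α) (∑' α, G α) := by
  have h3 : Summable fun x : κ × A => F x.1 x.2 := h.of_norm
  have h5 := h3.hasSum.prod_fiberwise (fun k => (h3.prod_factor k).hasSum)
  have h6 : ∑' α, G α = ∑' x : κ × A, F x.1 x.2 := by
    simp_rw [hG]
    rw [h3.tsum_prod]
    exact (Summable.tsum_comm (f := fun α k => F k α) h3.prod_symm).symm
  rw [h6]
  exact h5

lemma evalS_sumS {ρ : ι → ℝ≥0} {t : κ → MvPowerSeries ι 𝕜}
    (ht : ∑' k, nrm ρ (t k) ≠ ∞) {y : ι → 𝕜} (hy : ∀ i, ‖y i‖₊ ≤ ρ i) :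
    HasSum (fun k => evalS (t k) y) (evalS (sumS t) y) := by
  have h : Summable fun x : κ × (ι →₀ ℕ) => ‖MvPowerSeries.coeff x.2 (t x.1) * mono y x.2‖ := by
    have h2 : ∑' x : κ × (ι →₀ ℕ), ((‖MvPowerSeries.coeff x.2 (t x.1) * mono y x.2‖₊ : ℝ≥0) : ℝ≥0∞) ≠ ∞ := by
      rw [ENNReal.tsum_prod']
      refine ne_top_of_le_ne_top ht (ENNReal.tsum_le_tsum fun k => ENNReal.tsum_le_tsum fun α => ?_)
      dsimp only
      rw [nnnorm_mul, ENNReal.coe_mul]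
      refine mul_le_mul' le_rfl ?_
      exact ENNReal.coe_le_coe.2 (enorm_mono_le hy α)
    rw [ENNReal.tsum_coe_ne_top_iff_summable] at h2
    exact NNReal.summable_coe.2 h2
  exact hasSum_swap_aux h (fun α => by rw [coeff_sumS, tsum_mul_right])

end SumS

section CPS

/-- The ring of convergent power series in `n` variables, which is the ring of germs of
real-analytic functions at any point of `ℝⁿ`. -/
noncomputable def CPS (n : ℕ) : Subring (MvPowerSeries (Fin n) ℝ) where
  carrier := {a | ∃ r : ℝ≥0, 0 < r ∧ nrm (fun _ => r) a ≠ ∞}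
  mul_mem' := by
    rintro a b ⟨r, hr, ha⟩ ⟨s, hs, hb⟩
    refine ⟨min r s, lt_min hr hs, ne_top_of_le_ne_top (ENNReal.mul_ne_top ha hb)
      ((nrm_mul_le _ _ _).trans ?_)⟩
    gcongr
    · exact nrm_mono (fun _ => min_le_left _ _) a
    · exact nrm_mono (fun _ => min_le_right _ _) b
  one_mem' := ⟨1, one_pos, by simp [nrm_one]⟩
  add_mem' := by
    rintro a b ⟨r, hr, ha⟩ ⟨s, hs, hb⟩
    refine ⟨min r s, lt_min hr hs, ne_top_of_le_ne_top (ENNReal.add_ne_top.2 ⟨ha, hb⟩)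
      ((nrm_add_le _ _ _).trans ?_)⟩
    gcongr
    · exact nrm_mono (fun _ => min_le_left _ _) a
    · exact nrm_mono (fun _ => min_le_right _ _) b
  zero_mem' := ⟨1, one_pos, by simp⟩
  neg_mem' := by
    rintro a ⟨r, hr, ha⟩
    exact ⟨r, hr, by rwa [nrm_neg]⟩

variable {n : ℕ}

lemma CPS.common (s : Finset (CPS n)) :
    ∃ r : ℝ≥0, 0 < r ∧ ∀ a ∈ s, nrm (fun _ => r) (a : MvPowerSeries (Fin n) ℝ) ≠ ∞ := by
  classical
  induction s using Finset.induction_on with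
  | empty => exact ⟨1, one_pos, by simp⟩
  | insert a s _ ih =>
    obtain ⟨r, hr, h⟩ := ih
    obtain ⟨r', hr', h'⟩ := a.2
    refine ⟨min r r', lt_min hr hr', fun b hb => ?_⟩
    rcases Finset.mem_insert.1 hb with rfl | hb
    · exact ne_top_of_le_ne_top h' (nrm_mono (fun _ => min_le_right _ _) _)
    · exact ne_top_of_le_ne_top (h b hb) (nrm_mono (fun _ => min_le_left _ _) _)

lemma eventually_le {r : ℝ≥0} (hr : 0 < r) : ∀ᶠ y : Fin n → ℝ in 𝓝 0, ∀ i, ‖y i‖₊ ≤ r := by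
  filter_upwards [Metric.ball_mem_nhds (0 : Fin n → ℝ) (show (0 : ℝ) < r from hr)] with y hy i
  refine (nnnorm_le_pi_nnnorm y i).trans ?_
  have : ‖y‖ < r := by simpa using hy
  exact_mod_cast this.le

lemma CPS.evalS_mul (a b : CPS n) :
    ∀ᶠ y in 𝓝 0, evalS ((a * b : CPS n) : MvPowerSeries (Fin n) ℝ) y
      = evalS (a : MvPowerSeries (Fin n) ℝ) y * evalS (b : MvPowerSeries (Fin n) ℝ) y := by
  classical
  obtain ⟨r, hr, h⟩ := CPS.common {a, b}
  filter_upwards [eventually_le hr] with y hy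
  exact RA.evalS_mul (h a (by simp)) (h b (by simp)) hy

lemma CPS.evalS_add (a b : CPS n) :
    ∀ᶠ y in 𝓝 0, evalS ((a + b : CPS n) : MvPowerSeries (Fin n) ℝ) y
      = evalS (a : MvPowerSeries (Fin n) ℝ) y + evalS (b : MvPowerSeries (Fin n) ℝ) y := by
  classical
  obtain ⟨r, hr, h⟩ := CPS.common {a, b}
  filter_upwards [eventually_le hr] with y hy
  exact RA.evalS_add (h a (by simp)) (h b (by simp)) hy

lemma CPS.eq_of_evalS {a b : CPS n} (h : ∀ᶠ y in 𝓝 0, evalS (a : MvPowerSeries (Fin n) ℝ) y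
      = evalS (b : MvPowerSeries (Fin n) ℝ) y) : a = b := by
  have h1 := CPS.evalS_add a (-b)
  obtain ⟨r, hr, h3⟩ := (a + -b).2
  have h2 := eq_zero_of_evalS hr h3 (by
    filter_upwards [h, h1] with y h h1
    rw [h1, h]
    simp [evalS_neg])
  rw [← sub_eq_add_neg] at h2
  have h4 : a - b = 0 := Subtype.ext h2
  exact sub_eq_zero.1 h4

/-- `a` is the Taylor series of `f` at `x`. -/
def IsSer (f : (Fin n → ℝ) → ℝ) (x : Fin n → ℝ) (a : CPS n) : Prop :=
  ∀ᶠ y in 𝓝 0, f (x + y) = evalS (a : MvPowerSeries (Fin n) ℝ) y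

open Classical in
/-- The Taylor series of `f` at `x`, as an element of the ring of convergent power series; it is
`0` if `f` is not analytic at `x`. -/
noncomputable def ser (f : (Fin n → ℝ) → ℝ) (x : Fin n → ℝ) : CPS n :=
  if h : ∃ a : CPS n, IsSer f x a then h.choose else 0

variable {f g : (Fin n → ℝ) → ℝ} {x : Fin n → ℝ}

lemma IsSer.eq {a : CPS n} (h : IsSer f x a) : ser f x = a := by
  have h' : ∃ a : CPS n, IsSer f x a := ⟨a, h⟩
  unfold ser
  rw [dif_pos h']
  have h2 := h'.choose_spec
  refine CPS.eq_of_evalS ?_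
  unfold IsSer at h h2
  filter_upwards [h, h2] with y h h2
  exact h2.symm.trans h

lemma ser_spec (hf : AnalyticAt ℝ f x) : IsSer f x (ser f x) := by
  have h' : ∃ a : CPS n, IsSer f x a := by
    obtain ⟨r, hr, a, ha, h⟩ := exists_evalS hf
    refine ⟨⟨a, r, hr, ha⟩, ?_⟩
    filter_upwards [Metric.ball_mem_nhds (0 : Fin n → ℝ) (show (0 : ℝ) < r from hr)] with y hy
    exact h y (by simpa using hy)
  unfold ser
  rw [dif_pos h']
  exact h'.choose_spec

/-- The function with Taylor series `a` at `x`. -/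
noncomputable def rep (a : CPS n) (x : Fin n → ℝ) : (Fin n → ℝ) → ℝ :=
  fun y => evalS (a : MvPowerSeries (Fin n) ℝ) (y - x)

lemma rep_analyticAt (a : CPS n) (x : Fin n → ℝ) : AnalyticAt ℝ (rep a x) x := by
  obtain ⟨r, hr, ha⟩ := a.2
  have h : AnalyticAt ℝ (evalS (a : MvPowerSeries (Fin n) ℝ)) (x - x) := by
    rw [sub_self]
    exact evalS_analyticAt ha (by simpa using hr)
  exact h.comp_of_eq (analyticAt_id.sub analyticAt_const) rfl

lemma ser_rep (a : CPS n) (x : Fin n → ℝ) : ser (rep a x) x = a :=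
  IsSer.eq (Eventually.of_forall fun y => by simp [rep])

lemma rep_self (a : CPS n) (x : Fin n → ℝ) :
    rep a x x = MvPowerSeries.constantCoeff (a : MvPowerSeries (Fin n) ℝ) := by
  simp [rep]

lemma ev_shift {p : (Fin n → ℝ) → Prop} : (∀ᶠ y in 𝓝 0, p (x + y)) ↔ ∀ᶠ y in 𝓝 x, p y := by
  have : 𝓝 x = map (fun y => x + y) (𝓝 0) := by simp
  rw [this, eventually_map]

lemma ser_congr (h : f =ᶠ[𝓝 x] g) : ser f x = ser g x := by
  have h1 : ∀ᶠ y in 𝓝 0, f (x + y) = g (x + y) := ev_shift.2 h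
  have : IsSer f x = IsSer g x := funext fun a => propext <| by
    unfold IsSer
    refine eventually_congr ?_
    filter_upwards [h1] with y hy
    rw [hy]
  by_cases h2 : ∃ a, IsSer g x a
  · obtain ⟨a, ha⟩ := h2
    rw [IsSer.eq ha, IsSer.eq (this ▸ ha)]
  · have h3 : ¬ ∃ a, IsSer f x a := by rwa [this]
    unfold ser
    rw [dif_neg h2, dif_neg h3]

lemma ser_inj (hf : AnalyticAt ℝ f x) (hg : AnalyticAt ℝ g x) (h : ser f x = ser g x) :
    f =ᶠ[𝓝 x] g := by
  have h1 := ser_spec hf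
  have h2 := ser_spec hg
  rw [h] at h1
  refine ev_shift.1 ?_
  unfold IsSer at h1 h2
  filter_upwards [h1, h2] with y h1 h2
  rw [h1, h2]

lemma ser_mul (hf : AnalyticAt ℝ f x) (hg : AnalyticAt ℝ g x) :
    ser (f * g) x = ser f x * ser g x := by
  refine IsSer.eq ?_
  filter_upwards [ser_spec hf, ser_spec hg, CPS.evalS_mul (ser f x) (ser g x)] with y h1 h2 h3
  rw [h3, Pi.mul_apply, h1, h2]

lemma ser_add (hf : AnalyticAt ℝ f x) (hg : AnalyticAt ℝ g x) :
    ser (f + g) x = ser f x + ser g x := by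
  refine IsSer.eq ?_
  filter_upwards [ser_spec hf, ser_spec hg, CPS.evalS_add (ser f x) (ser g x)] with y h1 h2 h3
  rw [h3, Pi.add_apply, h1, h2]

lemma ser_one : ser (1 : (Fin n → ℝ) → ℝ) x = 1 :=
  IsSer.eq (Eventually.of_forall fun y => by simp)

lemma ser_zero : ser (0 : (Fin n → ℝ) → ℝ) x = 0 :=
  IsSer.eq (Eventually.of_forall fun y => by simp)

lemma ser_pow (hf : AnalyticAt ℝ f x) (k : ℕ) : ser (f ^ k) x = ser f x ^ k := by
  induction k with
  | zero => simp [ser_one]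
  | succ k ih => rw [pow_succ, pow_succ, ser_mul (hf.pow k) hf, ih]

lemma ser_prod {κ : Type*} (s : Finset κ) {F : κ → (Fin n → ℝ) → ℝ}
    (hF : ∀ k ∈ s, AnalyticAt ℝ (F k) x) : ser (∏ k ∈ s, F k) x = ∏ k ∈ s, ser (F k) x := by
  classical
  induction s using Finset.induction_on with
  | empty => simp [ser_one]
  | insert i s hi ih =>
    rw [Finset.prod_insert hi, Finset.prod_insert hi, ser_mul (hF i (by simp)), ih]
    · intro k hk; exact hF k (by simp [hk])
    · exact Finset.analyticAt_prod _ fun k hk => hF k (by simp [hk])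

lemma ser_eq_zero_iff (hf : AnalyticAt ℝ f x) : ser f x = 0 ↔ f =ᶠ[𝓝 x] 0 := by
  constructor
  · intro h
    exact ser_inj hf analyticAt_const (by rw [h]; exact ser_zero.symm)
  · intro h
    rw [ser_congr h, ser_zero]

lemma ser_dvd_iff (hf : AnalyticAt ℝ f x) (hg : AnalyticAt ℝ g x) :
    ser f x ∣ ser g x ↔ ∃ c : (Fin n → ℝ) → ℝ, AnalyticAt ℝ c x ∧ g =ᶠ[𝓝 x] f * c := by
  constructor
  · rintro ⟨c, hc⟩
    refine ⟨rep c x, rep_analyticAt c x, ser_inj hg (hf.mul (rep_analyticAt c x)) ?_⟩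
    rw [ser_mul hf (rep_analyticAt c x), ser_rep, hc]
  · rintro ⟨c, hc, h⟩
    exact ⟨ser c x, by rw [ser_congr h, ser_mul hf hc]⟩

lemma constantCoeff_ser (hf : AnalyticAt ℝ f x) :
    MvPowerSeries.constantCoeff (ser f x : MvPowerSeries (Fin n) ℝ) = f x := by
  have h := (ser_spec hf).self_of_nhds
  simpa using h.symm

lemma isUnit_ser_iff (hf : AnalyticAt ℝ f x) : IsUnit (ser f x) ↔ f x ≠ 0 := by
  constructor
  · intro h h0
    have h1 := h.map ((MvPowerSeries.constantCoeff (σ := Fin n) (R := ℝ)).comp (CPS n).subtype)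
    simp [constantCoeff_ser hf, h0] at h1
  · intro h
    refine IsUnit.of_mul_eq_one (ser f⁻¹ x) ?_
    rw [← ser_mul hf (hf.inv h), ← ser_one (x := x)]
    refine ser_congr ?_
    filter_upwards [hf.continuousAt.eventually_ne h] with y hy
    simp [hy]

lemma CPS.isUnit_iff (a : CPS n) :
    IsUnit a ↔ MvPowerSeries.constantCoeff (a : MvPowerSeries (Fin n) ℝ) ≠ 0 := by
  rw [← rep_self a 0, ← isUnit_ser_iff (rep_analyticAt a 0), ser_rep]

instance : IsDomain (CPS n) :=
  haveI : IsDomain (MvPowerSeries (Fin n) ℝ) := NoZeroDivisors.to_isDomain _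
  Subring.instIsDomainSubtypeMem _

end CPS
end RA

/-! ### Weierstrass division -/

namespace RA

open scoped ENNReal NNReal Topology
open Filter

section Weier
variable {n : ℕ}

/-- Formal power series in `n + 1` variables, with `X 0` as the distinguished variable. -/
abbrev MS (n : ℕ) := MvPowerSeries (Fin (n + 1)) ℝ

/-- The quotient of a series by the `d`-th power of the distinguished variable. -/
noncomputable def shiftS (d : ℕ) (a : MS n) : MS n :=
  fun α => MvPowerSeries.coeff (α + Finsupp.single 0 d) a

/-- The part of a series of degree `< d` in the distinguished variable. -/
def lowS (d : ℕ) (a : MS n) : MS n :=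
  fun α => if α 0 < d then MvPowerSeries.coeff α a else 0

lemma coeff_shiftS (d : ℕ) (a : MS n) (α : Fin (n + 1) →₀ ℕ) :
    MvPowerSeries.coeff α (shiftS d a) = MvPowerSeries.coeff (α + Finsupp.single 0 d) a := rfl

lemma coeff_lowS (d : ℕ) (a : MS n) (α : Fin (n + 1) →₀ ℕ) :
    MvPowerSeries.coeff α (lowS d a) = if α 0 < d then MvPowerSeries.coeff α a else 0 := rfl

lemma shiftS_add (d : ℕ) (a b : MS n) : shiftS d (a + b) = shiftS d a + shiftS d b := by
  ext α; simp [coeff_shiftS]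

lemma shiftS_sub (d : ℕ) (a b : MS n) : shiftS d (a - b) = shiftS d a - shiftS d b := by
  ext α; simp [coeff_shiftS]

lemma shiftS_neg (d : ℕ) (a : MS n) : shiftS d (-a) = -shiftS d a := by
  ext α; simp [coeff_shiftS]

lemma shiftS_zero (a : MS n) : shiftS 0 a = a := by
  ext α; simp [coeff_shiftS]

lemma shiftS_of_zero (d : ℕ) : shiftS d (0 : MS n) = 0 := by
  ext α; simp [coeff_shiftS]

lemma shiftS_shiftS (d e : ℕ) (a : MS n) : shiftS d (shiftS e a) = shiftS (d + e) a := by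
  ext α; simp [coeff_shiftS, add_assoc, ← Finsupp.single_add]

lemma shiftS_mul_X_pow (d : ℕ) (a : MS n) :
    shiftS d (a * MvPowerSeries.X 0 ^ d) = a := by
  ext α
  rw [coeff_shiftS, MvPowerSeries.X_pow_eq, MvPowerSeries.coeff_add_mul_monomial, mul_one]

lemma shiftS_succ_mul_X (d : ℕ) (a : MS n) :
    shiftS (d + 1) (a * MvPowerSeries.X 0) = shiftS d a := by
  rw [← shiftS_shiftS, ← pow_one (MvPowerSeries.X 0 : MS n), shiftS_mul_X_pow]

lemma shiftS_lowS (d : ℕ) (a : MS n) : shiftS d (lowS d a) = 0 := by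
  ext α; simp [coeff_shiftS, coeff_lowS]

lemma decompS (d : ℕ) (a : MS n) : shiftS d a * MvPowerSeries.X 0 ^ d + lowS d a = a := by
  classical
  ext α
  rw [map_add, MvPowerSeries.X_pow_eq, MvPowerSeries.coeff_mul_monomial, coeff_lowS]
  by_cases h : α 0 < d
  · rw [if_neg, if_pos h, zero_add]
    intro h2
    have := h2 0
    simp at this
    omega
  · have h2 : Finsupp.single 0 d ≤ α := by
      rw [Finsupp.single_le_iff]; omega
    rw [if_pos h2, if_neg h, coeff_shiftS, tsub_add_cancel_of_le h2]
    simp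

lemma mono_single_pow {ι : Type*} [Fintype ι] {R : Type*} [CommMonoid R] (y : ι → R) (i : ι) (d : ℕ) :
    mono y (Finsupp.single i d) = y i ^ d := by
  classical
  unfold mono
  rw [Finset.prod_eq_single i]
  · simp
  · intro j _ hj; simp [Finsupp.single_apply, hj.symm]
  · simp

lemma nrm_shiftS_le (ρ : Fin (n + 1) → ℝ≥0) (d : ℕ) (a : MS n) :
    nrm ρ (shiftS d a) * (ρ 0 ^ d : ℝ≥0) ≤ nrm ρ a := by
  unfold nrm
  rw [← ENNReal.tsum_mul_right]
  have := ENNReal.tsum_comp_le_tsum_of_injective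
    (f := fun α : Fin (n + 1) →₀ ℕ => α + Finsupp.single 0 d) (add_left_injective _)
    (fun α => ‖MvPowerSeries.coeff α a‖ₑ * (mono ρ α : ℝ≥0))
  refine le_trans (le_of_eq (tsum_congr fun α => ?_)) this
  rw [coeff_shiftS, mono_add, mono_single_pow, ENNReal.coe_mul, mul_assoc]

lemma nrm_lowS_le (ρ : Fin (n + 1) → ℝ≥0) (d : ℕ) (a : MS n) :
    nrm ρ (lowS d a) ≤ nrm ρ a := by
  refine ENNReal.tsum_le_tsum fun α => ?_
  gcongr
  rw [coeff_lowS]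
  split_ifs <;> simp

lemma nrm_ne_top_shiftS {ρ : Fin (n + 1) → ℝ≥0} (hρ : 0 < ρ 0) (d : ℕ) {a : MS n}
    (ha : nrm ρ a ≠ ∞) : nrm ρ (shiftS d a) ≠ ∞ := by
  intro h
  have h2 := nrm_shiftS_le ρ d a
  rw [h, ENNReal.top_mul (by exact_mod_cast (pow_pos hρ d).ne')] at h2
  exact ha (top_le_iff.1 h2)

lemma mem_CPS_of_nrm {ρ : Fin n → ℝ≥0} (hρ : ∀ i, 0 < ρ i) {a : MvPowerSeries (Fin n) ℝ}
    (ha : nrm ρ a ≠ ∞) : a ∈ CPS n := by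
  obtain ⟨r, hr, h⟩ : ∃ r : ℝ≥0, 0 < r ∧ ∀ i, r ≤ ρ i := by
    rcases isEmpty_or_nonempty (Fin n) with h | h
    · exact ⟨1, one_pos, fun i => h.elim i⟩
    · obtain ⟨i, hi⟩ := Finite.exists_min ρ
      exact ⟨ρ i, hρ i, hi⟩
  exact ⟨r, hr, ne_top_of_le_ne_top ha (nrm_mono h a)⟩

lemma shiftS_mem (d : ℕ) {a : MS n} (ha : a ∈ CPS (n + 1)) : shiftS d a ∈ CPS (n + 1) := by
  obtain ⟨r, hr, h⟩ := ha
  exact ⟨r, hr, nrm_ne_top_shiftS hr d h⟩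

lemma lowS_mem (d : ℕ) {a : MS n} (ha : a ∈ CPS (n + 1)) : lowS d a ∈ CPS (n + 1) := by
  obtain ⟨r, hr, h⟩ := ha
  exact ⟨r, hr, ne_top_of_le_ne_top h (nrm_lowS_le _ _ _)⟩

/-- `f` is regular of order `d` in the distinguished variable. -/
def RegS (d : ℕ) (f : MS n) : Prop :=
  (∀ k < d, MvPowerSeries.coeff (Finsupp.single 0 k) f = 0) ∧
    MvPowerSeries.coeff (Finsupp.single 0 d) f ≠ 0

lemma coeff_mul_single (a b : MS n) (hb : ∀ k, MvPowerSeries.coeff (Finsupp.single 0 k) b = 0)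
    (k : ℕ) : MvPowerSeries.coeff (Finsupp.single 0 k) (a * b) = 0 := by
  classical
  rw [MvPowerSeries.coeff_mul]
  refine Finset.sum_eq_zero fun x hx => ?_
  rw [Finset.HasAntidiagonal.mem_antidiagonal] at hx
  have : x.2 = Finsupp.single 0 (x.2 0) := by
    ext i
    by_cases hi : i = 0
    · simp [hi]
    · have := DFunLike.congr_fun hx i
      simp [Finsupp.single_apply, Ne.symm hi] at this ⊢
      exact this.2
  rw [this, hb, mul_zero]

/-- Shrinking the radii of the variables other than the distinguished one makes a series without
pure monomials `X 0 ^ k` small. -/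
lemma exists_small (s : ℝ≥0) (hs : 0 < s) {h : MS n} (hh : nrm (fun _ => s) h ≠ ∞)
    (h0 : ∀ k, MvPowerSeries.coeff (Finsupp.single 0 k) h = 0) {ε : ℝ≥0} (hε : 0 < ε) :
    ∃ ρ : Fin (n + 1) → ℝ≥0, (∀ i, 0 < ρ i) ∧ (∀ i, ρ i ≤ s) ∧ ρ 0 = s ∧ nrm ρ h ≤ ε := by
  obtain ⟨l, hl0, hl1, hl⟩ : ∃ l : ℝ≥0, 0 < l ∧ l ≤ 1 ∧ (l : ℝ≥0∞) * nrm (fun _ => s) h ≤ ε := by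
    lift nrm (fun _ => s) h to ℝ≥0 using hh with N
    refine ⟨min 1 (ε / (N + 1)), lt_min one_pos (by positivity), min_le_left _ _, ?_⟩
    rw [← ENNReal.coe_mul, ENNReal.coe_le_coe]
    calc min 1 (ε / (N + 1)) * N ≤ ε / (N + 1) * (N + 1) := by
          gcongr
          · exact min_le_right _ _
          · simp
      _ = ε := by field_simp
  refine ⟨fun i => if i = 0 then s else l * s, fun i => ?_, fun i => ?_, by simp, ?_⟩
  · dsimp only; split_ifs <;> positivity
  · dsimp only; split_ifs
    · exact le_rfl
    · exact mul_le_of_le_one_left' hl1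
  · refine le_trans ?_ hl
    unfold nrm
    rw [← ENNReal.tsum_mul_left]
    refine ENNReal.tsum_le_tsum fun α => ?_
    by_cases hα : α = Finsupp.single 0 (α 0)
    · rw [hα, h0]; simp
    · rw [mul_left_comm, ← ENNReal.coe_mul]
      gcongr
      obtain ⟨i, hi⟩ : ∃ i : Fin n, α i.succ ≠ 0 := by
        by_contra! hc
        refine hα (Finsupp.ext fun i => ?_)
        refine Fin.cases (by simp) (fun j => ?_) i
        simp [hc j, Finsupp.single_apply, (Fin.succ_ne_zero j).symm]
      unfold mono
      rw [Fin.prod_univ_succ, Fin.prod_univ_succ, mul_left_comm]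
      simp only [if_true, Fin.succ_ne_zero, if_false]
      gcongr
      simp_rw [mul_pow]
      rw [Finset.prod_mul_distrib]
      gcongr
      rw [Finset.prod_pow_eq_pow_sum]
      have : 1 ≤ ∑ i : Fin n, α i.succ :=
        (Nat.one_le_iff_ne_zero.2 hi).trans (Finset.single_le_sum (f := fun i : Fin n => α i.succ) (by simp) (Finset.mem_univ i))
      calc l ^ _ ≤ l ^ 1 := pow_le_pow_of_le_one (by simp) hl1 this
        _ = l := pow_one l

/-- A regular series `f` has a unit multiple of the form `X 0 ^ d - h` where `h` is small for
suitable radii. -/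
lemma RegS.exists_radii {d : ℕ} {f : CPS (n + 1)} (hf : RegS d (f : MS n)) :
    ∃ v h : CPS (n + 1), IsUnit v ∧
      ((v * f : CPS (n + 1)) : MS n) = MvPowerSeries.X 0 ^ d - (h : MS n) ∧
      ∀ S : Finset (CPS (n + 1)), ∃ ρ : Fin (n + 1) → ℝ≥0, (∀ i, 0 < ρ i) ∧ 2 * nrm ρ (h : MS n) ≤ (ρ 0 ^ d : ℝ≥0) ∧ (∀ b ∈ S, nrm ρ (b : MS n) ≠ ∞) := by
  classical
  let u : CPS (n + 1) := ⟨shiftS d (f : MS n), shiftS_mem d f.2⟩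
  let l : CPS (n + 1) := ⟨lowS d (f : MS n), lowS_mem d f.2⟩
  have hu : IsUnit u := by
    rw [CPS.isUnit_iff, ← MvPowerSeries.coeff_zero_eq_constantCoeff_apply]
    simpa [u, coeff_shiftS] using hf.2
  obtain ⟨v, hv⟩ := hu.exists_left_inv
  have hv' : IsUnit v := IsUnit.of_mul_eq_one _ hv
  have hl : ∀ k, MvPowerSeries.coeff (Finsupp.single 0 k) (l : MS n) = 0 := by
    intro k
    simp only [l, coeff_lowS]
    split_ifs with hk
    · exact hf.1 k (by simpa using hk)
    · rfl
  let h : CPS (n + 1) := - (v * l)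
  have hh : ∀ k, MvPowerSeries.coeff (Finsupp.single 0 k) (h : MS n) = 0 := by
    intro k
    have := coeff_mul_single (v : MS n) (l : MS n) hl k
    simp [h, this]
  refine ⟨v, h, hv', ?_, fun S => ?_⟩
  · have h1 := decompS d (f : MS n)
    have h2 : ((v * u : CPS (n + 1)) : MS n) = 1 := by rw [hv]; rfl
    have h3 : (v : MS n) * shiftS d (f : MS n) = 1 := h2
    have h4 : ((v * f : CPS (n + 1)) : MS n) = (v : MS n) * (f : MS n) := rfl
    have h5 : (h : MS n) = - ((v : MS n) * lowS d (f : MS n)) := rfl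
    rw [h4, h5]
    conv_lhs => rw [← h1]
    rw [mul_add, ← mul_assoc, h3]
    ring
  · obtain ⟨s, hs, hS⟩ := CPS.common (insert h S)
    obtain ⟨ρ, hρ, hρs, hρ0, hn⟩ := exists_small s hs (hS h (by simp)) hh
      (ε := s ^ d / 2) (by positivity)
    refine ⟨ρ, hρ, ?_, ?_⟩
    · rw [hρ0]
      calc 2 * nrm ρ (h : MS n) ≤ 2 * ((s ^ d / 2 : ℝ≥0) : ℝ≥0∞) := by gcongr
        _ = _ := by
          rw [show (2 : ℝ≥0∞) = ((2 : ℝ≥0) : ℝ≥0∞) by rfl, ← ENNReal.coe_mul]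
          congr 1
          field_simp
    · intro b hb
      exact ne_top_of_le_ne_top (hS b (by simp [hb])) (nrm_mono hρs _)

/-- Under a smallness condition on `h`, the map `p ↦ shiftS d (p * h)` contracts `nrm ρ` by a factor
`1 / 2`. -/
lemma contr {d : ℕ} {ρ : Fin (n + 1) → ℝ≥0} (hρ : 0 < ρ 0) {h : MS n}
    (hh : 2 * nrm ρ h ≤ (ρ 0 ^ d : ℝ≥0)) (p : MS n) :
    2 * nrm ρ (shiftS d (p * h)) ≤ nrm ρ p := by
  have h1 := (nrm_shiftS_le ρ d (p * h)).trans (nrm_mul_le ρ p h)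
  have h2 : 2 * nrm ρ (shiftS d (p * h)) * (ρ 0 ^ d : ℝ≥0) ≤ nrm ρ p * (ρ 0 ^ d : ℝ≥0) := by
    calc 2 * nrm ρ (shiftS d (p * h)) * (ρ 0 ^ d : ℝ≥0)
        = 2 * (nrm ρ (shiftS d (p * h)) * (ρ 0 ^ d : ℝ≥0)) := by ring
      _ ≤ 2 * (nrm ρ p * nrm ρ h) := by gcongr
      _ = nrm ρ p * (2 * nrm ρ h) := by ring
      _ ≤ _ := by gcongr
  exact (ENNReal.mul_le_mul_iff_left (by exact_mod_cast (pow_pos hρ d).ne') ENNReal.coe_ne_top).1 h2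

lemma nrm_eq_zero {ι : Type*} [Fintype ι] {ρ : ι → ℝ≥0} (hρ : ∀ i, 0 < ρ i) {a : MvPowerSeries ι ℝ} (h : nrm ρ a = 0) : a = 0 := by
  ext α
  have := enorm_coeff_le ρ a α
  rw [h, nonpos_iff_eq_zero, mul_eq_zero] at this
  rcases this with h1 | h1
  · simpa using h1
  · exact absurd h1 (by exact_mod_cast (mono_pos hρ α).ne')

/-- Uniqueness in Weierstrass division. -/
lemma RegS.unique {d : ℕ} {f : CPS (n + 1)} (hf : RegS d (f : MS n)) {q : CPS (n + 1)}
    (h : shiftS d ((q * f : CPS (n + 1)) : MS n) = 0) : q = 0 := by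
  classical
  -- Write `q = p * v`, with `v * f = X 0 ^ d - h`; then `p` is fixed by a contraction.
  obtain ⟨v, k, hv, hvf, hS⟩ := hf.exists_radii
  obtain ⟨w, hw⟩ := hv.exists_left_inv
  obtain ⟨ρ, hρ, hk, hρS⟩ := hS {q * w}
  have h1 : q * f = (q * w) * (v * f) := by
    calc q * f = q * (w * v) * f := by rw [hw, mul_one]
      _ = _ := by ring
  have h2 : ((q * f : CPS (n + 1)) : MS n)
      = ((q * w : CPS (n + 1)) : MS n) * MvPowerSeries.X 0 ^ d
        - ((q * w : CPS (n + 1)) : MS n) * (k : MS n) := by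
    rw [h1, Subring.coe_mul, hvf, mul_sub]
  rw [h2, shiftS_sub, shiftS_mul_X_pow, sub_eq_zero] at h
  have h3 := contr (hρ 0) hk ((q * w : CPS (n + 1)) : MS n)
  rw [← h] at h3
  have h4 : nrm ρ ((q * w : CPS (n + 1)) : MS n) = 0 := by
    have h5 := hρS (q * w) (by simp)
    generalize nrm ρ ((q * w : CPS (n + 1)) : MS n) = N at h3 h5
    lift N to ℝ≥0 using h5
    have h6 : 2 * N ≤ N := by exact_mod_cast h3
    have h7 : N ≤ 0 := by
      have : N + N ≤ N + 0 := by rw [← two_mul, add_zero]; exact h6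
      exact le_of_add_le_add_left this
    simpa using h7
  have h5 : q * w = 0 := Subtype.ext (nrm_eq_zero hρ h4)
  calc q = q * (w * v) := by rw [hw, mul_one]
    _ = q * w * v := by ring
    _ = 0 := by rw [h5, zero_mul]

lemma shiftS_mul_sumS {ρ : Fin (n + 1) → ℝ≥0} (hρ : ∀ i, 0 < ρ i) {t : ℕ → MS n}
    (ht : ∑' k, nrm ρ (t k) ≠ ∞) (h : MS n) (d : ℕ) :
    shiftS d (sumS t * h) = sumS fun k => shiftS d (t k * h) := by
  classical
  ext α
  simp only [coeff_shiftS, coeff_sumS, MvPowerSeries.coeff_mul]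
  rw [Summable.tsum_finsetSum]
  · refine Finset.sum_congr rfl fun x _ => ?_
    rw [tsum_mul_right]
  · intro x _
    exact (summable_coeff hρ ht x.1).of_norm.mul_right _

/-- Existence in Weierstrass division. -/
lemma RegS.division {d : ℕ} {f : CPS (n + 1)} (hf : RegS d (f : MS n)) (a : CPS (n + 1)) :
    ∃ q : CPS (n + 1), shiftS d ((a - q * f : CPS (n + 1)) : MS n) = 0 := by
  classical
  obtain ⟨v, h, hv, hvf, hS⟩ := hf.exists_radii
  obtain ⟨ρ, hρ, hk, hρS⟩ := hS {a}
  let A : MS n := shiftS d (a : MS n)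
  have hA : nrm ρ A ≠ ∞ := nrm_ne_top_shiftS (hρ 0) d (hρS a (by simp))
  let t : ℕ → MS n := fun k => Nat.rec A (fun _ p => shiftS d (p * (h : MS n))) k
  have ht0 : t 0 = A := rfl
  have hts : ∀ k, t (k + 1) = shiftS d (t k * (h : MS n)) := fun k => rfl
  have htn : ∀ k, nrm ρ (t k) ≤ nrm ρ A * (2⁻¹ : ℝ≥0∞) ^ k := by
    intro k
    induction k with
    | zero => simp [ht0]
    | succ k ih =>
      have h1 := contr (hρ 0) hk (t k)
      rw [← hts] at h1
      have h2 : nrm ρ (t (k + 1)) ≤ 2⁻¹ * nrm ρ (t k) := by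
        calc nrm ρ (t (k + 1)) = 2⁻¹ * (2 * nrm ρ (t (k + 1))) := by
              rw [← mul_assoc, ENNReal.inv_mul_cancel (by simp) (by simp), one_mul]
          _ ≤ _ := by gcongr
      refine h2.trans ?_
      calc 2⁻¹ * nrm ρ (t k) ≤ 2⁻¹ * (nrm ρ A * (2⁻¹ : ℝ≥0∞) ^ k) := by gcongr
        _ = _ := by ring
  have hsum : ∑' k, nrm ρ (t k) ≠ ∞ := by
    refine ne_top_of_le_ne_top ?_ (ENNReal.tsum_le_tsum htn)
    rw [ENNReal.tsum_mul_left, ENNReal.tsum_geometric]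
    refine ENNReal.mul_ne_top hA ?_
    simp
  let p : CPS (n + 1) := ⟨sumS t, mem_CPS_of_nrm hρ (ne_top_of_le_ne_top hsum (nrm_sumS_le ρ t))⟩
  have hp : (p : MS n) = A + shiftS d ((p : MS n) * (h : MS n)) := by
    show sumS t = A + shiftS d (sumS t * (h : MS n))
    rw [shiftS_mul_sumS hρ hsum]
    ext α
    rw [map_add, coeff_sumS, coeff_sumS, (summable_coeff hρ hsum α).of_norm.tsum_eq_zero_add]
    rfl
  refine ⟨p * v, ?_⟩
  have h2 : ((a - p * v * f : CPS (n + 1)) : MS n)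
      = (a : MS n) - ((p : MS n) * MvPowerSeries.X 0 ^ d - (p : MS n) * (h : MS n)) := by
    rw [mul_assoc, AddSubgroupClass.coe_sub, Subring.coe_mul, hvf, mul_sub]
  rw [h2, shiftS_sub, shiftS_sub, shiftS_mul_X_pow]
  nth_rewrite 1 [hp]
  simp [A]

end Weier
end RA

/-! ### Polynomials in the distinguished variable -/

namespace RA

open scoped ENNReal NNReal Topology
open Filter

section Poly
variable {n : ℕ}

/-- A series in the last `n` variables, as a series in `n + 1` variables. -/
noncomputable def inclS (a : MvPowerSeries (Fin n) ℝ) : MS n :=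
  fun α => if α 0 = 0 then MvPowerSeries.coeff α.tail a else 0

lemma coeff_inclS (a : MvPowerSeries (Fin n) ℝ) (α : Fin (n + 1) →₀ ℕ) :
    MvPowerSeries.coeff α (inclS a) = if α 0 = 0 then MvPowerSeries.coeff α.tail a else 0 := rfl

lemma tsum_cons_aux {M : Type*} [AddCommMonoid M] [TopologicalSpace M]
    (F : (Fin (n + 1) →₀ ℕ) → M) (G : (Fin n →₀ ℕ) → M)
    (h0 : ∀ α, α 0 ≠ 0 → F α = 0) (h1 : ∀ β, F (Finsupp.cons 0 β) = G β) :
    ∑' α, F α = ∑' β, G β := by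
  rw [← (Finsupp.cons_right_injective (n := n) (M := ℕ) (y := 0)).tsum_eq (f := F)]
  · exact tsum_congr h1
  · intro α hα
    refine ⟨α.tail, ?_⟩
    have : α 0 = 0 := by
      by_contra h
      exact hα (h0 α h)
    rw [← this, Finsupp.cons_tail]

lemma mono_cons_zero {R : Type*} [CommMonoid R] (y : Fin (n + 1) → R) (β : Fin n →₀ ℕ) :
    mono y (Finsupp.cons 0 β) = mono (fun i => y i.succ) β := by
  simp [mono, Fin.prod_univ_succ]

lemma evalS_inclS (a : MvPowerSeries (Fin n) ℝ) (y : Fin (n + 1) → ℝ) :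
    evalS (inclS a) y = evalS a (fun i => y i.succ) := by
  refine tsum_cons_aux (fun α => MvPowerSeries.coeff α (inclS a) * mono y α) _ ?_ ?_
  · intro α h; simp [coeff_inclS, h]
  · intro β; simp only [coeff_inclS, mono_cons_zero]; simp

lemma nrm_inclS (a : MvPowerSeries (Fin n) ℝ) (ρ : Fin (n + 1) → ℝ≥0) :
    nrm ρ (inclS a) = nrm (fun i => ρ i.succ) a := by
  refine tsum_cons_aux (fun α => ‖MvPowerSeries.coeff α (inclS a)‖ₑ * (mono ρ α : ℝ≥0)) _ ?_ ?_
  · intro α h; simp [coeff_inclS, h]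
  · intro β; simp only [coeff_inclS, mono_cons_zero]; simp

lemma tendsto_tail : Tendsto (fun (y : Fin (n + 1) → ℝ) (i : Fin n) => y i.succ) (𝓝 0) (𝓝 0) := by
  have : Continuous (fun (y : Fin (n + 1) → ℝ) (i : Fin n) => y i.succ) := by fun_prop
  exact this.tendsto' _ _ rfl

/-- The inclusion of the convergent power series in the last `n` variables. -/
noncomputable def incl : CPS n →+* CPS (n + 1) where
  toFun a := ⟨inclS a, by
    obtain ⟨r, hr, h⟩ := a.2
    exact ⟨r, hr, by rwa [nrm_inclS]⟩⟩
  map_one' := by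
    refine Subtype.ext ?_
    ext α
    classical
    simp only [coeff_inclS, OneMemClass.coe_one, MvPowerSeries.coeff_one]
    have : α = 0 ↔ α 0 = 0 ∧ α.tail = 0 := by
      constructor
      · rintro rfl; simp; ext; simp [Finsupp.tail_apply]
      · rintro ⟨h1, h2⟩; rw [← Finsupp.cons_tail (t := α), h1, h2, Finsupp.cons_zero_zero]
    simp only [this]
    split_ifs <;> simp_all
  map_zero' := by
    refine Subtype.ext ?_
    ext α
    simp [coeff_inclS]
  map_mul' a b := by
    refine CPS.eq_of_evalS ?_
    filter_upwards [CPS.evalS_mul _ _, tendsto_tail.eventually (CPS.evalS_mul a b)] with y h1 h2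
    rw [h1]
    simp only [evalS_inclS]
    exact h2
  map_add' a b := by
    refine Subtype.ext ?_
    ext α
    simp only [coeff_inclS, Subring.coe_add, map_add]
    split_ifs <;> simp

lemma coe_incl (a : CPS n) : ((incl a : CPS (n + 1)) : MS n) = inclS (a : MvPowerSeries (Fin n) ℝ) := rfl

/-- The distinguished variable. -/
noncomputable def zvar : CPS (n + 1) := ⟨MvPowerSeries.X 0, 1, one_pos, by simp [nrm_X]⟩

lemma coe_zvar : ((zvar : CPS (n + 1)) : MS n) = MvPowerSeries.X 0 := rfl

/-- Polynomials in the distinguished variable as convergent power series. -/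
noncomputable def ev : Polynomial (CPS n) →+* CPS (n + 1) := Polynomial.eval₂RingHom incl zvar

lemma ev_C (c : CPS n) : ev (Polynomial.C c) = incl c := by simp [ev]
lemma ev_X : ev (Polynomial.X : Polynomial (CPS n)) = zvar := by simp [ev]

/-- The part of degree `0` in the distinguished variable. -/
noncomputable def slice (a : CPS (n + 1)) : CPS n :=
  ⟨fun β => MvPowerSeries.coeff (Finsupp.cons 0 β) (a : MS n), by
    obtain ⟨r, hr, h⟩ := a.2
    refine ⟨r, hr, ne_top_of_le_ne_top h ?_⟩
    have := ENNReal.tsum_comp_le_tsum_of_injective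
      (Finsupp.cons_right_injective (n := n) (M := ℕ) (y := 0))
      (fun α => ‖MvPowerSeries.coeff α (a : MS n)‖ₑ * (mono (fun _ => r) α : ℝ≥0))
    refine le_trans (le_of_eq (tsum_congr fun β => ?_)) this
    simp only [mono_cons_zero]
    rfl⟩

lemma coeff_slice (a : CPS (n + 1)) (β : Fin n →₀ ℕ) :
    MvPowerSeries.coeff β (slice a : MvPowerSeries (Fin n) ℝ)
      = MvPowerSeries.coeff (Finsupp.cons 0 β) (a : MS n) := rfl

lemma slice_add_shift (a : CPS (n + 1)) :
    a = incl (slice a) + ⟨shiftS 1 (a : MS n), shiftS_mem 1 a.2⟩ * zvar := by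
  refine Subtype.ext ?_
  have h := decompS 1 (a : MS n)
  have h2 : lowS 1 (a : MS n) = inclS (slice a : MvPowerSeries (Fin n) ℝ) := by
    ext α
    rw [coeff_lowS, coeff_inclS, coeff_slice]
    by_cases h : α 0 = 0
    · rw [if_pos (by omega), if_pos h, ← h, Finsupp.cons_tail]
    · rw [if_neg (by omega), if_neg h]
  rw [Subring.coe_add, Subring.coe_mul, coe_incl, coe_zvar, ← h2]
  rw [pow_one (MvPowerSeries.X 0 : MS n)] at h
  rw [add_comm (lowS 1 (a : MS n))]
  exact h.symm

lemma shiftS_inclS (d : ℕ) (a : MvPowerSeries (Fin n) ℝ) : shiftS (d + 1) (inclS a) = 0 := by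
  ext α
  rw [coeff_shiftS, coeff_inclS, if_neg]
  · simp
  · simp

/-- The series of degree `< d` in the distinguished variable are the polynomials of degree `< d`. -/
lemma exists_ev (d : ℕ) : ∀ a : CPS (n + 1), shiftS d (a : MS n) = 0 →
    ∃ r : Polynomial (CPS n), r.degree < d ∧ ev r = a := by
  induction d with
  | zero =>
    intro a h
    rw [shiftS_zero] at h
    exact ⟨0, by simp, by rw [map_zero]; exact (Subtype.ext h).symm⟩
  | succ d ih =>
    intro a h
    obtain ⟨r, hr, h1⟩ := ih ⟨shiftS 1 (a : MS n), shiftS_mem 1 a.2⟩ (by rw [← h]; exact shiftS_shiftS d 1 _)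
    refine ⟨Polynomial.C (slice a) + r * Polynomial.X, ?_, ?_⟩
    · refine lt_of_le_of_lt (Polynomial.degree_add_le _ _) (max_lt ?_ ?_)
      · exact lt_of_le_of_lt Polynomial.degree_C_le (by exact_mod_cast Nat.succ_pos d)
      · by_cases h0 : r = 0
        · rw [h0, zero_mul, Polynomial.degree_zero]; exact WithBot.bot_lt_coe _
        · rw [Polynomial.degree_mul_X, Nat.cast_add, Nat.cast_one]
          rw [Polynomial.degree_eq_natDegree h0] at hr ⊢
          have : r.natDegree < d := by exact_mod_cast hr
          exact_mod_cast Nat.succ_lt_succ this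
    · rw [map_add, map_mul, ev_C, ev_X, h1]
      exact (slice_add_shift a).symm

lemma shiftS_ev (d : ℕ) : ∀ r : Polynomial (CPS n), r.degree < d → shiftS d (ev r : MS n) = 0 := by
  induction d with
  | zero =>
    intro r hr
    have : r = 0 := by
      by_contra h
      rw [Polynomial.degree_eq_natDegree h] at hr
      have : r.natDegree < 0 := by exact_mod_cast hr
      omega
    rw [this, map_zero]
    exact shiftS_of_zero _
  | succ d ih =>
    intro r hr
    have h1 : r.divX.degree < d := by
      by_cases h0 : r.divX = 0
      · rw [h0, Polynomial.degree_zero]; exact WithBot.bot_lt_coe _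
      · rw [Polynomial.degree_eq_natDegree h0, Polynomial.natDegree_divX_eq_natDegree_tsub_one]
        have hr0 : r ≠ 0 := by rintro rfl; simp at h0
        rw [Polynomial.degree_eq_natDegree hr0] at hr
        have h3 : r.natDegree < d + 1 := by exact_mod_cast hr
        have h4 : r.natDegree ≠ 0 := by
          intro h4
          rw [Polynomial.divX_eq_zero_iff] at h0
          exact h0 (Polynomial.eq_C_of_natDegree_eq_zero h4)
        have : r.natDegree - 1 < d := by omega
        exact_mod_cast this
    have h2 := ih _ h1
    have h3 := congrArg ev (Polynomial.divX_mul_X_add r)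
    rw [map_add, map_mul, ev_C, ev_X] at h3
    rw [← h3, Subring.coe_add, Subring.coe_mul, coe_incl, coe_zvar, shiftS_add,
      shiftS_succ_mul_X, h2, shiftS_inclS, zero_add]

/-- Weierstrass division with a polynomial remainder. -/
lemma RegS.division' {d : ℕ} {f : CPS (n + 1)} (hf : RegS d (f : MS n)) (a : CPS (n + 1)) :
    ∃ (q : CPS (n + 1)) (r : Polynomial (CPS n)), r.degree < d ∧ a = q * f + ev r := by
  obtain ⟨q, hq⟩ := hf.division a
  obtain ⟨r, hr, h⟩ := exists_ev d _ hq
  exact ⟨q, r, hr, by rw [h]; ring⟩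

lemma RegS.unique' {d : ℕ} {f : CPS (n + 1)} (hf : RegS d (f : MS n)) {r : Polynomial (CPS n)}
    (hr : r.degree < d) (h : f ∣ ev r) : ev r = 0 := by
  obtain ⟨q, hq⟩ := h
  have h1 := shiftS_ev d r hr
  rw [hq, mul_comm] at h1
  rw [hq, hf.unique h1, mul_zero]

lemma ev_injective : Function.Injective (ev : Polynomial (CPS n) →+* CPS (n + 1)) := by
  rw [injective_iff_map_eq_zero]
  suffices h : ∀ d : ℕ, ∀ r : Polynomial (CPS n), r.natDegree < d → ev r = 0 → r = 0 from
    fun r hr => h _ r (Nat.lt_succ_self _) hr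
  intro d
  induction d with
  | zero => intro r hr; omega
  | succ d ih =>
    intro r hr h
    have h3 := congrArg ev (Polynomial.divX_mul_X_add r)
    rw [map_add, map_mul, ev_C, ev_X, h] at h3
    have h4 : ev r.divX = 0 := by
      refine Subtype.ext ?_
      have := congrArg (fun a : CPS (n + 1) => shiftS 1 (a : MS n)) h3
      simp only [Subring.coe_add, Subring.coe_mul, coe_incl, coe_zvar, shiftS_add] at this
      rw [shiftS_succ_mul_X, shiftS_inclS, shiftS_zero, add_zero] at this
      rw [this]
      exact shiftS_of_zero _
    have h5 : incl (r.coeff 0) = 0 := by rw [h4, zero_mul, zero_add] at h3; exact h3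
    have h6 : r.coeff 0 = 0 := by
      refine Subtype.ext ?_
      ext β
      have := congrArg (fun a : CPS (n + 1) => MvPowerSeries.coeff (Finsupp.cons 0 β) (a : MS n)) h5
      simpa [coe_incl, coeff_inclS] using this
    have h7 : r.divX = 0 := by
      by_cases h0 : r.natDegree = 0
      · rw [Polynomial.divX_eq_zero_iff]
        exact (Polynomial.eq_C_of_natDegree_eq_zero h0)
      · exact ih _ (by rw [Polynomial.natDegree_divX_eq_natDegree_tsub_one]; omega) h4
    rw [← Polynomial.divX_mul_X_add r, h7, h6]
    simp

end Poly
end RA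

/-! ### Weierstrass preparation and prime factors of regular series -/

namespace RA

open scoped ENNReal NNReal Topology
open Filter

section Ufd
variable {n : ℕ}

/-- Restriction of a series to the axis of the distinguished variable. -/
noncomputable def ax : CPS (n + 1) →+* PowerSeries ℝ where
  toFun a := PowerSeries.mk fun k => MvPowerSeries.coeff (Finsupp.single 0 k) (a : MS n)
  map_one' := by
    classical
    ext k
    simp [MvPowerSeries.coeff_one, PowerSeries.coeff_one]
  map_zero' := by ext k; simp
  map_add' a b := by ext k; simp
  map_mul' a b := by
    classical
    ext k
    rw [PowerSeries.coeff_mk, Subring.coe_mul, MvPowerSeries.coeff_mul, PowerSeries.coeff_mul,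
      Finsupp.antidiagonal_single, Finset.sum_map]
    simp

lemma coeff_ax (a : CPS (n + 1)) (k : ℕ) :
    PowerSeries.coeff k (ax a) = MvPowerSeries.coeff (Finsupp.single 0 k) (a : MS n) := by
  simp [ax]

lemma regS_iff (d : ℕ) (a : CPS (n + 1)) : RegS d (a : MS n) ↔ (ax a).order = d := by
  rw [PowerSeries.order_eq_nat]
  simp only [coeff_ax, RegS]
  tauto

lemma exists_regS_iff (a : CPS (n + 1)) : (∃ d, RegS d (a : MS n)) ↔ ax a ≠ 0 := by
  simp only [regS_iff]
  rw [← PowerSeries.order_finite_iff_ne_zero, lt_top_iff_ne_top, ENat.ne_top_iff_exists]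
  simp only [eq_comm]

lemma isUnit_iff_ax (a : CPS (n + 1)) : IsUnit a ↔ PowerSeries.coeff 0 (ax a) ≠ 0 := by
  rw [CPS.isUnit_iff, coeff_ax]
  simp

/-- The value of a convergent power series at the origin. -/
noncomputable def cc : CPS n →+* ℝ :=
  (MvPowerSeries.constantCoeff (σ := Fin n) (R := ℝ)).comp (CPS n).subtype

lemma isUnit_iff_cc (a : CPS n) : IsUnit a ↔ cc a ≠ 0 := CPS.isUnit_iff a

lemma ax_incl (a : CPS n) : ax (incl a) = PowerSeries.C (cc a) := by
  classical
  ext k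
  rw [coeff_ax, coe_incl, coeff_inclS, PowerSeries.coeff_C]
  by_cases h : k = 0
  · subst h
    simp [cc]
    rw [← MvPowerSeries.coeff_zero_eq_constantCoeff_apply]
    congr 2
    ext i
    simp [Finsupp.tail_apply]
  · simp [h]

lemma ax_zvar : ax (zvar : CPS (n + 1)) = PowerSeries.X := by
  classical
  ext k
  rw [coeff_ax, coe_zvar, MvPowerSeries.coeff_X, PowerSeries.coeff_X]
  congr 1
  rw [eq_iff_iff]
  constructor
  · intro h; exact Finsupp.single_injective _ h
  · rintro rfl; rfl

lemma ax_ev (p : Polynomial (CPS n)) : ax (ev p) = ((p.map cc : Polynomial ℝ) : PowerSeries ℝ) := by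
  have : (ax.comp ev : Polynomial (CPS n) →+* PowerSeries ℝ)
      = (Polynomial.coeToPowerSeries.ringHom).comp (Polynomial.mapRingHom cc) := by
    refine Polynomial.ringHom_ext (fun a => ?_) ?_
    · simp [ev_C, ax_incl]
    · simp [ev_X, ax_zvar]
  exact congrArg (fun φ : Polynomial (CPS n) →+* PowerSeries ℝ => φ p) this

lemma regS_ev {d : ℕ} {p : Polynomial (CPS n)} (hp : p.map cc = Polynomial.X ^ d) :
    RegS d (ev p : MS n) := by
  rw [regS_iff, ax_ev, hp]
  simp

/-- Weierstrass preparation. -/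
lemma RegS.preparation {d : ℕ} {f : CPS (n + 1)} (hf : RegS d (f : MS n)) :
    ∃ w : Polynomial (CPS n), w.Monic ∧ w.map cc = Polynomial.X ^ d ∧
      Associated f (ev w) := by
  obtain ⟨q, r, hr, h⟩ := hf.division' (zvar ^ d)
  have h1 := congrArg ax h
  rw [map_pow, ax_zvar, map_add, map_mul, ax_ev] at h1
  have hf' := (regS_iff d f).1 hf
  have hr0 : r.map cc = 0 := by
    ext k
    rw [Polynomial.coeff_zero]
    by_cases hk : k < d
    · have h2 := congrArg (PowerSeries.coeff k) h1
      rw [PowerSeries.coeff_X_pow, if_neg hk.ne, map_add, Polynomial.coeff_coe] at h2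
      rw [PowerSeries.coeff_of_lt_order, zero_add] at h2
      · exact h2.symm
      · refine lt_of_lt_of_le ?_ (PowerSeries.le_order_mul _ _)
        rw [hf']
        calc (k : ℕ∞) < d := by exact_mod_cast hk
          _ ≤ _ := le_add_self
    · rw [Polynomial.coeff_map, Polynomial.coeff_eq_zero_of_degree_lt, map_zero]
      exact hr.trans_le (by exact_mod_cast not_lt.1 hk)
  rw [hr0, Polynomial.coe_zero, add_zero] at h1
  have hq : IsUnit q := by
    have h2 := congrArg PowerSeries.order h1
    rw [PowerSeries.order_X_pow, PowerSeries.order_mul, hf'] at h2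
    rw [isUnit_iff_ax]
    intro h0
    have h3 : (ax q).order ≠ 0 := by
      intro h3
      have h4 : (ax q).order = ((0 : ℕ) : ℕ∞) := by simpa using h3
      rw [PowerSeries.order_eq_nat] at h4
      exact h4.1 h0
    have h5 : (ax q).order = 0 := by
      have : 0 + (d : ℕ∞) = (ax q).order + d := by rw [zero_add]; exact h2
      exact ((ENat.add_left_injective_of_ne_top (ENat.coe_ne_top d)) this).symm
    exact h3 h5
  refine ⟨Polynomial.X ^ d - r, Polynomial.monic_X_pow_sub hr, ?_, ?_⟩
  · rw [Polynomial.map_sub, hr0]; simp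
  · refine ⟨hq.unit, ?_⟩
    rw [map_sub, map_pow, ev_X, h]
    simp [mul_comm]

/-- A Weierstrass polynomial that is prime in the polynomial ring stays prime as a power series:
by Weierstrass division, divisibility of remainders can be tested on polynomials. -/
lemma prime_ev {d : ℕ} {p : Polynomial (CPS n)} (hm : p.Monic) (hd : p.map cc = Polynomial.X ^ d)
    (hp : Prime p) : Prime (ev p) := by
  have hreg := regS_ev hd
  have hnd : p.natDegree = d := by
    have := congrArg Polynomial.natDegree hd
    rwa [hm.natDegree_map, Polynomial.natDegree_X_pow] at this
  have hd' : p.degree = d := by rw [Polynomial.degree_eq_natDegree hm.ne_zero, hnd]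
  have key : ∀ r : Polynomial (CPS n), ev p ∣ ev r → p ∣ r := by
    intro r hr
    have h1 := Polynomial.modByMonic_add_div r p
    have h2 : (r %ₘ p).degree < d := by
      rw [← hd']; exact Polynomial.degree_modByMonic_lt r hm
    have h3 : ev p ∣ ev (r %ₘ p) := by
      have h4 := congrArg ev h1
      rw [map_add, map_mul] at h4
      rw [← h4] at hr
      exact (dvd_add_left (dvd_mul_right _ _)).1 hr
    have h5 := hreg.unique' h2 h3
    have h6 : r %ₘ p = 0 := ev_injective (by rw [h5, map_zero])
    exact (Polynomial.modByMonic_eq_zero_iff_dvd hm).1 h6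
  refine ⟨fun h => hp.ne_zero (ev_injective (by rw [h, map_zero])), fun h => ?_, fun a b hab => ?_⟩
  · have h1 : ev p ∣ ev 1 := by rw [map_one]; exact h.dvd
    exact hp.not_unit (isUnit_of_dvd_one (key 1 h1))
  · obtain ⟨q1, r, -, ha⟩ := hreg.division' a
    obtain ⟨q2, s, -, hb⟩ := hreg.division' b
    have h1 : ev p ∣ ev (r * s) := by
      have : ev (r * s) = a * b - ev p * (q1 * b + ev r * q2) := by
        rw [map_mul, ha, hb]; ring
      rw [this]
      exact dvd_sub hab (dvd_mul_right _ _)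
    rcases hp.dvd_or_dvd (key _ h1) with h | h
    · left; rw [ha]; exact dvd_add (dvd_mul_left _ _) (map_dvd ev h)
    · right; rw [hb]; exact dvd_add (dvd_mul_left _ _) (map_dvd ev h)

/-- Prime factors of a Weierstrass polynomial stay prime as power series, since they are Weierstrass
polynomials up to a unit. -/
lemma prime_ev_of_dvd {d : ℕ} {w p : Polynomial (CPS n)} (hm : w.Monic)
    (hd : w.map cc = Polynomial.X ^ d) (hp : Prime p) (hpw : p ∣ w) : Prime (ev p) := by
  obtain ⟨q, hq⟩ := hpw
  have h1 : p.leadingCoeff * q.leadingCoeff = 1 := by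
    rw [← Polynomial.leadingCoeff_mul, ← hq]; exact hm
  let p' := p * Polynomial.C q.leadingCoeff
  have hu : IsUnit (Polynomial.C q.leadingCoeff) :=
    Polynomial.isUnit_C.2 (IsUnit.of_mul_eq_one _ (by rw [mul_comm]; exact h1))
  have hass : Associated p p' := ⟨hu.unit, rfl⟩
  have hm' : p'.Monic := by
    unfold Polynomial.Monic
    rw [Polynomial.leadingCoeff_mul, Polynomial.leadingCoeff_C, h1]
  have hdv : p'.map cc ∣ Polynomial.X ^ d := by
    rw [← hd]
    exact Polynomial.map_dvd cc (hass.symm.dvd.trans ⟨q, hq⟩)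
  obtain ⟨e, -, he⟩ := (dvd_prime_pow Polynomial.prime_X d).1 hdv
  have he' : p'.map cc = Polynomial.X ^ e :=
    Polynomial.eq_of_monic_of_associated (hm'.map cc) (Polynomial.monic_X_pow e) he
  have h2 := prime_ev hm' he' (hass.prime hp)
  exact ((hass.map ev).prime_iff).2 h2

/-- A regular series has a factorization into primes. -/
lemma RegS.exists_factors [UniqueFactorizationMonoid (CPS n)] {d : ℕ} {f : CPS (n + 1)}
    (hf : RegS d (f : MS n)) :
    ∃ s : Multiset (CPS (n + 1)), (∀ b ∈ s, Prime b) ∧ Associated s.prod f := by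
  obtain ⟨w, hm, hd, hass⟩ := hf.preparation
  obtain ⟨s, hs, hsw⟩ := UniqueFactorizationMonoid.exists_prime_factors w hm.ne_zero
  refine ⟨s.map ev, fun b hb => ?_, ?_⟩
  · obtain ⟨p, hp, rfl⟩ := Multiset.mem_map.1 hb
    exact prime_ev_of_dvd hm hd (hs p hp) ((Multiset.dvd_prod hp).trans hsw.dvd)
  · rw [Multiset.prod_hom]
    exact (hsw.map ev).trans hass.symm

end Ufd
end RA

/-! ### Changes of coordinates, factoriality and derivatives -/

namespace RA

open scoped ENNReal NNReal Topology
open Filter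

section Lin
variable {n : ℕ}

lemma isSer_lin (L : (Fin n → ℝ) ≃L[ℝ] (Fin n → ℝ)) (a : CPS n) :
    AnalyticAt ℝ (rep a 0 ∘ L) 0 := by
  have h := rep_analyticAt a 0
  exact h.comp_of_eq ((L : (Fin n → ℝ) →L[ℝ] (Fin n → ℝ)).analyticAt 0) (by simp)

/-- The action of a linear change of coordinates on convergent power series. -/
noncomputable def lin (L : (Fin n → ℝ) ≃L[ℝ] (Fin n → ℝ)) : CPS n →+* CPS n where
  toFun a := ser (rep a 0 ∘ L) 0
  map_one' := by
    exact IsSer.eq (Eventually.of_forall fun y => by simp [rep])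
  map_zero' := by
    exact IsSer.eq (Eventually.of_forall fun y => by simp [rep])
  map_add' a b := by
    rw [← ser_add (isSer_lin L a) (isSer_lin L b)]
    refine ser_congr ?_
    have h : Tendsto L (𝓝 0) (𝓝 0) := by simpa using L.continuous.tendsto 0
    filter_upwards [h.eventually (CPS.evalS_add a b)] with y hy
    simpa [rep] using hy
  map_mul' a b := by
    rw [← ser_mul (isSer_lin L a) (isSer_lin L b)]
    refine ser_congr ?_
    have h : Tendsto L (𝓝 0) (𝓝 0) := by simpa using L.continuous.tendsto 0
    filter_upwards [h.eventually (CPS.evalS_mul a b)] with y hy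
    simpa [rep] using hy

lemma lin_apply (L : (Fin n → ℝ) ≃L[ℝ] (Fin n → ℝ)) (a : CPS n) :
    lin L a = ser (rep a 0 ∘ L) 0 := rfl

lemma ser_comp (L : (Fin n → ℝ) ≃L[ℝ] (Fin n → ℝ)) {f : (Fin n → ℝ) → ℝ} {y : Fin n → ℝ}
    (hf : AnalyticAt ℝ f (L y)) : ser (f ∘ L) y = lin L (ser f (L y)) := by
  refine IsSer.eq ?_
  have h : Tendsto L (𝓝 0) (𝓝 0) := by simpa using L.continuous.tendsto 0
  have h1 : IsSer (rep (ser f (L y)) 0 ∘ L) 0 (lin L (ser f (L y))) := ser_spec (isSer_lin L _)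
  have h2 := h.eventually (ser_spec hf)
  unfold IsSer at h1 ⊢
  filter_upwards [h1, h2] with w h1 h2
  rw [← h1]
  simp [rep, h2]

lemma lin_lin_symm (L : (Fin n → ℝ) ≃L[ℝ] (Fin n → ℝ)) (a : CPS n) :
    lin L (lin L.symm a) = a := by
  have h1 : lin L.symm a = ser (rep a 0 ∘ L.symm) (L 0) := by rw [map_zero]; rfl
  have h2 : AnalyticAt ℝ (rep a 0 ∘ L.symm) (L 0) := by
    rw [map_zero]; exact isSer_lin L.symm a
  rw [h1, ← ser_comp L h2]
  have h3 : (rep a 0 ∘ L.symm) ∘ L = rep a 0 := by ext y; simp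
  rw [h3, ser_rep]

/-- A linear change of coordinates, as a ring automorphism. -/
noncomputable def linE (L : (Fin n → ℝ) ≃L[ℝ] (Fin n → ℝ)) : CPS n ≃+* CPS n :=
  RingEquiv.ofRingHom (lin L) (lin L.symm) (RingHom.ext fun a => lin_lin_symm L a)
    (RingHom.ext fun a => lin_lin_symm L.symm a)

lemma linE_apply (L : (Fin n → ℝ) ≃L[ℝ] (Fin n → ℝ)) (a : CPS n) : linE L a = lin L a := rfl

/-- `f` does not vanish identically near `x` on the line through `x` with direction `v`. -/
def LineNZ (f : (Fin n → ℝ) → ℝ) (x v : Fin n → ℝ) : Prop :=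
  ¬ ∀ᶠ t : ℝ in 𝓝 0, f (x + t • v) = 0

lemma analyticAt_line {f : (Fin n → ℝ) → ℝ} {x v : Fin n → ℝ} {t : ℝ}
    (hf : AnalyticAt ℝ f (x + t • v)) : AnalyticAt ℝ (fun t : ℝ => f (x + t • v)) t := by
  have : AnalyticAt ℝ (fun t : ℝ => x + t • v) t :=
    analyticAt_const.add (analyticAt_id.smul analyticAt_const)
  exact hf.comp_of_eq this rfl

/-- Identity theorem along a segment. -/
lemma line_identity {f : (Fin n → ℝ) → ℝ} {x v y : Fin n → ℝ} {r : ℝ}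
    (hf : AnalyticOnNhd ℝ f (Metric.ball x r)) (hy : y ∈ Metric.ball x r)
    {t : ℝ} (ht : y + t • v ∈ Metric.ball x r) (h0 : f (y + t • v) ≠ 0) : LineNZ f y v := by
  intro h
  have hA : AnalyticOnNhd ℝ (fun t : ℝ => f (y + t • v)) ((fun t : ℝ => y + t • v) ⁻¹' Metric.ball x r) :=
    fun s hs => analyticAt_line (hf _ hs)
  have hconv : Convex ℝ ((fun t : ℝ => y + t • v) ⁻¹' Metric.ball x r) := by
    intro s hs s' hs' a b ha hb hab
    have := (convex_ball x r) hs hs' ha hb hab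
    simp only [Set.mem_preimage]
    convert this using 1
    simp only [smul_add, smul_smul, smul_eq_mul, add_smul]
    have : y = a • y + b • y := by rw [← add_smul, hab, one_smul]
    nth_rewrite 1 [this]
    abel
  have := hA.eqOn_zero_of_preconnected_of_eventuallyEq_zero hconv.isPreconnected
    (z₀ := 0) (by simpa using hy) h
  exact h0 (this ht)

lemma LineNZ.nhds {f : (Fin n → ℝ) → ℝ} {x v : Fin n → ℝ} (hf : AnalyticAt ℝ f x)
    (h : LineNZ f x v) : ∀ᶠ y in 𝓝 x, LineNZ f y v := by
  obtain ⟨r, hr, hA⟩ := hf.exists_ball_analyticOnNhd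
  have hc : ContinuousAt (fun t : ℝ => x + t • v) 0 := by fun_prop
  have h1 : ∀ᶠ t : ℝ in 𝓝 0, x + t • v ∈ Metric.ball x r :=
    hc.eventually_mem (by simpa using Metric.ball_mem_nhds x hr)
  obtain ⟨t, ht1, ht2⟩ := ((not_eventually.1 h).and_eventually h1).exists
  have hc2 : ContinuousAt (fun y => y + t • v) x := by fun_prop
  filter_upwards [Metric.ball_mem_nhds x hr, hc2.eventually_mem (Metric.isOpen_ball.mem_nhds ht2),
    (((hA _ ht2).continuousAt).comp (f := fun y => y + t • v) hc2).eventually_ne ht1] with y h1 h2 h3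
  exact line_identity hA h1 h2 h3

lemma exists_lineNZ {f : (Fin (n + 1) → ℝ) → ℝ} {x : Fin (n + 1) → ℝ} (hf : AnalyticAt ℝ f x)
    (h : ser f x ≠ 0) : ∃ v, v ≠ 0 ∧ LineNZ f x v := by
  rw [Ne, ser_eq_zero_iff hf] at h
  obtain ⟨r, hr, hA⟩ := hf.exists_ball_analyticOnNhd
  obtain ⟨y, hy1, hy2⟩ := ((not_eventually.1 h).and_eventually (Metric.ball_mem_nhds x hr)).exists
  by_cases hy : y = x
  · subst hy
    refine ⟨Pi.single 0 1, ?_, ?_⟩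
    · intro h; simpa using congrFun h 0
    · refine line_identity hA hy2 (t := 0) (by simpa using hy2) (by simpa using hy1)
  · refine ⟨y - x, sub_ne_zero.2 hy, line_identity hA (Metric.mem_ball_self hr) (t := 1) ?_ ?_⟩
    · simpa using hy2
    · simpa using hy1

/-- The coordinate direction of the distinguished variable. -/
noncomputable def e0 : Fin (n + 1) → ℝ := Pi.single 0 1

lemma e0_ne : (e0 : Fin (n + 1) → ℝ) ≠ 0 := fun h => by simpa [e0] using congrFun h 0

lemma exists_lin {v : Fin (n + 1) → ℝ} (hv : v ≠ 0) :
    ∃ L : (Fin (n + 1) → ℝ) ≃L[ℝ] (Fin (n + 1) → ℝ), L e0 = v :=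
  SeparatingDual.exists_continuousLinearEquiv_apply_eq e0_ne hv

/-- If `f` does not vanish identically along the distinguished axis, then its Taylor series is
regular. -/
lemma LineNZ.ax_ne {f : (Fin (n + 1) → ℝ) → ℝ} {x : Fin (n + 1) → ℝ} (hf : AnalyticAt ℝ f x)
    (h : LineNZ f x e0) : ax (ser f x) ≠ 0 := by
  intro h0
  apply h
  have h1 := ser_spec hf
  have hc : Tendsto (fun t : ℝ => t • (e0 : Fin (n + 1) → ℝ)) (𝓝 0) (𝓝 0) := by
    have : Continuous (fun t : ℝ => t • (e0 : Fin (n + 1) → ℝ)) := by fun_prop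
    exact this.tendsto' _ _ (by simp)
  filter_upwards [hc.eventually h1] with t ht
  rw [ht]
  unfold evalS
  refine (tsum_congr fun α => ?_).trans tsum_zero
  by_cases hα : ∃ i : Fin n, α i.succ ≠ 0
  · obtain ⟨i, hi⟩ := hα
    have : mono (t • (e0 : Fin (n + 1) → ℝ)) α = 0 :=
      Finset.prod_eq_zero (Finset.mem_univ i.succ) (by simp [e0, hi])
    rw [this, mul_zero]
  · push Not at hα
    have h2 : α = Finsupp.single 0 (α 0) := by
      refine Finsupp.ext fun i => Fin.cases (by simp) (fun j => ?_) i
      simp [hα j, Finsupp.single_apply, (Fin.succ_ne_zero j).symm]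
    rw [h2, ← coeff_ax, h0]
    simp

lemma LineNZ.comp {f : (Fin n → ℝ) → ℝ} {x u : Fin n → ℝ}
    (L : (Fin n → ℝ) ≃L[ℝ] (Fin n → ℝ)) (h : LineNZ f (L x) (L u)) : LineNZ (f ∘ L) x u := by
  intro h2
  apply h
  filter_upwards [h2] with t ht
  simpa using ht

/-- After a linear change of coordinates a nonzero series is regular. -/
lemma exists_lin_ax {a : CPS (n + 1)} (ha : a ≠ 0) : ∃ L, ax (lin L a) ≠ 0 := by
  obtain ⟨v, hv, h⟩ := exists_lineNZ (rep_analyticAt a 0) (by rwa [ser_rep])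
  obtain ⟨L, rfl⟩ := exists_lin hv
  refine ⟨L, ?_⟩
  rw [lin_apply]
  refine LineNZ.ax_ne (isSer_lin L a) (LineNZ.comp L ?_)
  rwa [map_zero]

/-- The ring of convergent power series is factorial, by induction on the number of variables: a
nonzero series becomes regular after a linear change of coordinates, and a regular series factors
like its Weierstrass polynomial, whose coefficients are series in one variable less. -/
instance instUFD : UniqueFactorizationMonoid (CPS n) := by
  induction n with
  | zero =>
    refine UniqueFactorizationMonoid.of_exists_prime_factors fun a ha => ⟨0, by simp, ?_⟩
    rw [Multiset.prod_zero, Associated.comm, associated_one_iff_isUnit, CPS.isUnit_iff]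
    intro h
    refine ha (Subtype.ext ?_)
    ext α
    rw [Subsingleton.elim α 0, MvPowerSeries.coeff_zero_eq_constantCoeff_apply, h]
    simp
  | succ n ih =>
    refine UniqueFactorizationMonoid.of_exists_prime_factors fun a ha => ?_
    obtain ⟨L, hL⟩ := exists_lin_ax ha
    obtain ⟨d, hd⟩ := (exists_regS_iff _).2 hL
    obtain ⟨s, hs, hsa⟩ := hd.exists_factors
    refine ⟨s.map (linE L).symm, fun b hb => ?_, ?_⟩
    · obtain ⟨p, hp, rfl⟩ := Multiset.mem_map.1 hb
      exact (MulEquiv.prime_iff (linE L).symm).2 (hs p hp)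
    · rw [Multiset.prod_hom]
      have h2 := hsa.map ((linE L).symm : CPS (n + 1) →+* CPS (n + 1))
      have h3 : (linE L).symm (lin L a) = a := (linE L).symm_apply_apply a
      simpa [h3] using h2

end Lin

section Der
variable {n : ℕ}

/-- The directional derivative. -/
noncomputable def Dv (v : Fin n → ℝ) (f : (Fin n → ℝ) → ℝ) : (Fin n → ℝ) → ℝ := fun y => fderiv ℝ f y v

lemma Dv_analyticAt {v : Fin n → ℝ} {f : (Fin n → ℝ) → ℝ} {x : Fin n → ℝ} (hf : AnalyticAt ℝ f x) :
    AnalyticAt ℝ (Dv v f) x := by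
  let L : ((Fin n → ℝ) →L[ℝ] ℝ) →L[ℝ] ℝ := ContinuousLinearMap.apply ℝ ℝ v
  exact (L.analyticAt _).comp hf.fderiv

lemma Dv_mul {v : Fin n → ℝ} {f g : (Fin n → ℝ) → ℝ} {x : Fin n → ℝ} (hf : AnalyticAt ℝ f x)
    (hg : AnalyticAt ℝ g x) : Dv v (f * g) x = f x * Dv v g x + g x * Dv v f x := by
  unfold Dv
  rw [fderiv_mul hf.differentiableAt hg.differentiableAt]
  simp

lemma Dv_congr {v : Fin n → ℝ} {f g : (Fin n → ℝ) → ℝ} {x : Fin n → ℝ} (h : f =ᶠ[𝓝 x] g) :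
    Dv v f =ᶠ[𝓝 x] Dv v g := by
  filter_upwards [h.fderiv (𝕜 := ℝ)] with y hy
  unfold Dv
  rw [hy]

/-- The directional derivative of convergent power series. -/
noncomputable def der (v : Fin n → ℝ) (a : CPS n) : CPS n := ser (Dv v (rep a 0)) 0

lemma ser_Dv {v : Fin n → ℝ} {f : (Fin n → ℝ) → ℝ} {x : Fin n → ℝ} (hf : AnalyticAt ℝ f x) :
    ser (Dv v f) x = der v (ser f x) := by
  refine IsSer.eq ?_
  have h1 : IsSer (Dv v (rep (ser f x) 0)) 0 (der v (ser f x)) :=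
    ser_spec (Dv_analyticAt (rep_analyticAt _ 0))
  have h2 := ser_spec hf
  unfold IsSer at h1 h2
  have h3 : (fun y => f (x + y)) =ᶠ[𝓝 0] rep (ser f x) 0 := by
    filter_upwards [h2] with y hy
    simp [rep, hy]
  filter_upwards [h1, Dv_congr (v := v) h3] with y h1 h4
  rw [← h1, zero_add, ← h4]
  unfold Dv
  rw [fderiv_comp_add_left]

lemma der_mul (v : Fin n → ℝ) (a b : CPS n) : der v (a * b) = a * der v b + b * der v a := by
  have ha := rep_analyticAt a 0
  have hb := rep_analyticAt b 0
  have h1 : a * b = ser (rep a 0 * rep b 0) 0 := by rw [ser_mul ha hb, ser_rep, ser_rep]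
  rw [h1, ← ser_Dv (ha.mul hb)]
  have h2 : Dv v (rep a 0 * rep b 0) =ᶠ[𝓝 0] rep a 0 * Dv v (rep b 0) + rep b 0 * Dv v (rep a 0) := by
    filter_upwards [ha.eventually_analyticAt, hb.eventually_analyticAt] with y h1 h2
    exact Dv_mul h1 h2
  rw [ser_congr h2, ser_add (ha.mul (Dv_analyticAt hb)) (hb.mul (Dv_analyticAt ha)),
    ser_mul ha (Dv_analyticAt hb), ser_mul hb (Dv_analyticAt ha), ser_rep, ser_rep]
  rfl

/-- Along a line on which `f` has a zero of finite positive order the derivative of `f` has smaller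
order, so it is not a multiple of `f`. -/
lemma not_dvd_Dv {v : Fin n → ℝ} {f : (Fin n → ℝ) → ℝ} {x : Fin n → ℝ} (hf : AnalyticAt ℝ f x)
    (h0 : f x = 0) (h : LineNZ f x v) : ¬ ser f x ∣ der v (ser f x) := by
  rw [← ser_Dv hf, ser_dvd_iff hf (Dv_analyticAt hf)]
  rintro ⟨c, hc, hfc⟩
  have hx : x + (0 : ℝ) • v = x := by simp
  have hcl : Tendsto (fun t : ℝ => x + t • v) (𝓝 0) (𝓝 x) := by
    have : Continuous (fun t : ℝ => x + t • v) := by fun_prop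
    exact this.tendsto' _ _ (by simp)
  have hF : AnalyticAt ℝ (fun t : ℝ => f (x + t • v)) 0 := analyticAt_line (by rwa [hx])
  have hC : AnalyticAt ℝ (fun t : ℝ => c (x + t • v)) 0 := analyticAt_line (by rwa [hx])
  have hd : deriv (fun t : ℝ => f (x + t • v)) =ᶠ[𝓝 0]
      (fun t : ℝ => f (x + t • v)) * (fun t : ℝ => c (x + t • v)) := by
    filter_upwards [hcl.eventually hfc, hcl.eventually hf.eventually_analyticAt] with t h1 h2
    have h3 : HasDerivAt (fun t : ℝ => x + t • v) v t := by
      have := ((hasDerivAt_id t).smul_const v).const_add x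
      simpa using this
    have h4 := h2.differentiableAt.hasFDerivAt.comp_hasDerivAt t h3
    have h5 : deriv (fun t : ℝ => f (x + t • v)) t = fderiv ℝ f (x + t • v) v := h4.deriv
    rw [h5]
    exact h1
  have h1 := hF.analyticOrderAt_deriv_add_one
  rw [analyticOrderAt_congr hd, analyticOrderAt_mul hF hC] at h1
  have h2 : (fun t : ℝ => f (x + t • v) - f (x + (0 : ℝ) • v)) = fun t : ℝ => f (x + t • v) := by
    ext t; simp [h0]
  rw [h2] at h1
  have h3 : analyticOrderAt (fun t : ℝ => f (x + t • v)) 0 ≠ ⊤ := by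
    rw [Ne, analyticOrderAt_eq_top]
    exact h
  obtain ⟨k, hk⟩ := ENat.ne_top_iff_exists.1 h3
  rw [← hk] at h1
  generalize analyticOrderAt (fun t : ℝ => c (x + t • v)) 0 = m at h1
  cases m with
  | top => simp at h1
  | coe m =>
    have : k + m + 1 = k := by exact_mod_cast h1
    omega

end Der
end RA

/-! ### Squarefree germs, radicals and global divisibility -/

namespace RA

open scoped ENNReal NNReal Topology
open Filter

section Spread
variable {n : ℕ}

/-- A regular series and a series without common factor have an elimination combination that does
not involve the distinguished variable. -/
lemma RegS.exists_elim {d : ℕ} {a b : CPS (n + 1)} (ha : RegS d (a : MS n)) (ha0 : a ≠ 0)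
    (hab : ∀ p, Prime p → p ∣ a → ¬ p ∣ b) :
    ∃ c : CPS n, c ≠ 0 ∧ ∃ A B : CPS (n + 1), incl c = A * a + B * b := by
  let I := Ideal.span {a}
  let φ : CPS n →+* CPS (n + 1) ⧸ I := (Ideal.Quotient.mk I).comp incl
  letI : Algebra (CPS n) (CPS (n + 1) ⧸ I) := φ.toAlgebra
  have hev : ∀ r : Polynomial (CPS n),
      Ideal.Quotient.mk I (ev r) = Polynomial.aeval (Ideal.Quotient.mk I zvar) r := by
    intro r
    rw [Polynomial.aeval_def, ev, Polynomial.coe_eval₂RingHom, Polynomial.hom_eval₂]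
    rfl
  obtain ⟨w, hm, hd, hass⟩ := ha.preparation
  have hz : IsIntegral (CPS n) (Ideal.Quotient.mk I (zvar : CPS (n + 1))) := by
    refine ⟨w, hm, ?_⟩
    rw [← Polynomial.aeval_def, ← hev]
    exact Ideal.Quotient.eq_zero_iff_mem.2 (Ideal.mem_span_singleton.2 hass.dvd)
  obtain ⟨q, r, hr, hb⟩ := ha.division' b
  have hbr : Ideal.Quotient.mk I b = Ideal.Quotient.mk I (ev r) := by
    rw [hb, map_add, map_mul]
    have : Ideal.Quotient.mk I a = 0 :=
      Ideal.Quotient.eq_zero_iff_mem.2 (Ideal.mem_span_singleton_self a)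
    rw [this, mul_zero, zero_add]
  have hint : IsIntegral (CPS n) (Ideal.Quotient.mk I b) := by
    rw [hbr, hev, Polynomial.aeval_eq_sum_range]
    exact IsIntegral.sum _ fun i _ => (hz.pow i).smul _
  have hnz : Ideal.Quotient.mk I b ∈ nonZeroDivisors (CPS (n + 1) ⧸ I) := by
    rw [mem_nonZeroDivisors_iff_right]
    intro x hx
    obtain ⟨x, rfl⟩ := Ideal.Quotient.mk_surjective x
    rw [← map_mul, Ideal.Quotient.eq_zero_iff_mem, Ideal.mem_span_singleton] at hx
    rw [Ideal.Quotient.eq_zero_iff_mem, Ideal.mem_span_singleton]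
    exact UniqueFactorizationMonoid.dvd_of_dvd_mul_left_of_no_prime_factors ha0
      (fun {p} h1 h2 h3 => hab p h3 h1 h2) hx
  obtain ⟨c, hc, B, hB⟩ := hint.isAlgebraic.exists_nonzero_dvd hnz
  obtain ⟨B, rfl⟩ := Ideal.Quotient.mk_surjective B
  have h1 : Ideal.Quotient.mk I (incl c) = Ideal.Quotient.mk I (b * B) := by
    rw [map_mul, ← hB]; rfl
  rw [Ideal.Quotient.eq, Ideal.mem_span_singleton] at h1
  obtain ⟨A, hA⟩ := h1
  exact ⟨c, hc, A, B, by linear_combination hA⟩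

variable {f : (Fin n → ℝ) → ℝ} {x : Fin n → ℝ}

lemma LineNZ.of_dvd {v : Fin n → ℝ} (hf : AnalyticAt ℝ f x) (h : LineNZ f x v) {p : CPS n}
    (hp : p ∣ ser f x) : LineNZ (rep p x) x v := by
  intro h0
  apply h
  rw [← ser_rep p x, ser_dvd_iff (rep_analyticAt p x) hf] at hp
  obtain ⟨c, hc, h1⟩ := hp
  have hcl : Tendsto (fun t : ℝ => x + t • v) (𝓝 0) (𝓝 x) := by
    have : Continuous (fun t : ℝ => x + t • v) := by fun_prop
    exact this.tendsto' _ _ (by simp)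
  filter_upwards [h0, hcl.eventually h1] with t h0 h1
  rw [h1, Pi.mul_apply, h0, zero_mul]

lemma ser_ne_zero_nhds (hf : AnalyticAt ℝ f x) (h : ser f x ≠ 0) : ∀ᶠ y in 𝓝 x, ser f y ≠ 0 := by
  obtain ⟨r, hr, hA⟩ := hf.exists_ball_analyticOnNhd
  filter_upwards [Metric.ball_mem_nhds x hr] with y hy h0
  rw [ser_eq_zero_iff (hA y hy)] at h0
  have := hA.eqOn_zero_of_preconnected_of_eventuallyEq_zero (convex_ball x r).isPreconnected hy h0
  exact h ((ser_eq_zero_iff hf).2 (this.eventuallyEq_of_mem (Metric.ball_mem_nhds x hr)))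

/-- The last coordinates of a vector. -/
def tl (y : Fin (n + 1) → ℝ) : Fin n → ℝ := fun i => y i.succ

lemma ser_rep_incl (c : CPS n) {x y : Fin (n + 1) → ℝ} (h : AnalyticAt ℝ (rep c (tl x)) (tl y)) :
    ser (rep (incl c) x) y = incl (ser (rep c (tl x)) (tl y)) := by
  refine IsSer.eq ?_
  filter_upwards [tendsto_tail.eventually (ser_spec h)] with w hw
  rw [coe_incl, evalS_inclS, ← hw]
  simp only [rep, coe_incl, evalS_inclS]
  rfl

/-- Squarefreeness of the germ of an analytic function is an open condition, in coordinates in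
which the germ is regular. -/
lemma squarefree_nhds_aux {f : (Fin (n + 1) → ℝ) → ℝ} {x : Fin (n + 1) → ℝ} (hf : AnalyticAt ℝ f x)
    (hl : LineNZ f x e0) (hs : Squarefree (ser f x)) : ∀ᶠ y in 𝓝 x, Squarefree (ser f y) := by
  obtain ⟨d, hd⟩ := (exists_regS_iff _).2 (hl.ax_ne hf)
  have hne : ser f x ≠ 0 := hs.ne_zero
  obtain ⟨c, hc, A, B, h⟩ := hd.exists_elim (b := der e0 (ser f x)) hne (by
    intro p hp h1 h2
    obtain ⟨c, hc⟩ := id h1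
    rw [hc, der_mul] at h2
    have h3 : p ∣ c * der e0 p := (dvd_add_right (dvd_mul_right p _)).1 h2
    rcases hp.dvd_or_dvd h3 with h4 | h4
    · exact hp.not_unit (hs p (hc ▸ mul_dvd_mul_left p h4))
    · have h5 := not_dvd_Dv (rep_analyticAt p x) ?_ (hl.of_dvd hf h1)
      · rw [ser_rep] at h5
        exact h5 h4
      · by_contra h6
        rw [← Ne, ← isUnit_ser_iff (rep_analyticAt p x), ser_rep] at h6
        exact hp.not_unit h6)
  have hD := Dv_analyticAt (v := e0) hf
  have hfun : rep (incl c) x =ᶠ[𝓝 x] rep A x * f + rep B x * Dv e0 f := by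
    refine ser_inj (rep_analyticAt _ _) (((rep_analyticAt A x).mul hf).add
      ((rep_analyticAt B x).mul hD)) ?_
    rw [ser_add ((rep_analyticAt A x).mul hf) ((rep_analyticAt B x).mul hD),
      ser_mul (rep_analyticAt A x) hf, ser_mul (rep_analyticAt B x) hD, ser_rep, ser_rep, ser_rep,
      ser_Dv hf, h]
  have htl : Tendsto (tl : (Fin (n + 1) → ℝ) → _) (𝓝 x) (𝓝 (tl x)) := by
    have : Continuous (tl : (Fin (n + 1) → ℝ) → _) := by unfold tl; fun_prop
    exact this.tendsto x
  have hcr := rep_analyticAt c (tl x)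
  filter_upwards [hfun.eventuallyEq_nhds, htl.eventually hcr.eventually_analyticAt,
    htl.eventually (ser_ne_zero_nhds hcr (by rwa [ser_rep])), hf.eventually_analyticAt,
    (rep_analyticAt A x).eventually_analyticAt, (rep_analyticAt B x).eventually_analyticAt,
    hl.nhds hf] with y h1 h2 h3 hfy hAy hBy hly
  intro q hq
  by_contra hu
  have hDy := Dv_analyticAt (v := e0) hfy
  have h4 := ser_congr h1
  rw [ser_rep_incl c h2, ser_add (hAy.mul hfy) (hBy.mul hDy), ser_mul hAy hfy, ser_mul hBy hDy,
    ser_Dv hfy] at h4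
  have hq1 : q ∣ ser f y := (dvd_mul_right q q).trans hq
  have h5 : q ∣ incl (ser (rep c (tl x)) (tl y)) := by
    rw [h4]
    refine dvd_add (hq1.mul_left _) (Dvd.dvd.mul_left ?_ _)
    obtain ⟨t, ht⟩ := hq
    rw [ht, mul_assoc, der_mul]
    exact dvd_add (dvd_mul_right _ _) ((dvd_mul_right q t).mul_right _)
  have h6 : ax q ≠ 0 := by
    intro h0
    obtain ⟨t, ht⟩ := hq1
    refine hly.ax_ne hfy ?_
    rw [ht, map_mul, h0, zero_mul]
  obtain ⟨e, he⟩ := (exists_regS_iff _).2 h6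
  have he0 : e ≠ 0 := by
    rintro rfl
    refine hu ((isUnit_iff_ax q).2 ?_)
    rw [regS_iff] at he
    exact (PowerSeries.order_eq_nat.1 he).1
  rw [← ev_C] at h5
  have h7 := he.unique' (lt_of_le_of_lt Polynomial.degree_C_le (by exact_mod_cast he0.bot_lt)) h5
  have h8 := ev_injective (h7.trans (map_zero _).symm)
  exact h3 (by simpa using h8)

lemma squarefree_linE (L : (Fin n → ℝ) ≃L[ℝ] (Fin n → ℝ)) (a : CPS n) :
    Squarefree (lin L a) ↔ Squarefree a := by
  have key : ∀ (e : CPS n ≃+* CPS n) (a : CPS n), Squarefree a → Squarefree (e a) := by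
    intro e a h q hq
    have h1 := map_dvd e.symm hq
    rw [map_mul, e.symm_apply_apply] at h1
    have h2 := (h _ h1).map e
    simpa using h2
  constructor
  · intro h
    have := key (linE L).symm _ h
    rwa [← linE_apply, RingEquiv.symm_apply_apply] at this
  · exact key (linE L) a

/-- Squarefreeness of the germ of an analytic function is an open condition. -/
lemma squarefree_nhds (hf : AnalyticAt ℝ f x) (hs : Squarefree (ser f x)) :
    ∀ᶠ y in 𝓝 x, Squarefree (ser f y) := by
  cases n with
  | zero => exact Eventually.of_forall fun y => by rwa [Subsingleton.elim y x]
  | succ n =>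
    obtain ⟨v, hv, h⟩ := exists_lineNZ hf hs.ne_zero
    obtain ⟨L, rfl⟩ := exists_lin hv
    have hx : L (L.symm x) = x := L.apply_symm_apply x
    have hf' : AnalyticAt ℝ f (L (L.symm x)) := by rwa [hx]
    have hfL : AnalyticAt ℝ (f ∘ L) (L.symm x) :=
      hf'.comp ((L : (Fin (n + 1) → ℝ) →L[ℝ] (Fin (n + 1) → ℝ)).analyticAt _)
    have h1 := squarefree_nhds_aux hfL (LineNZ.comp L (by rwa [hx])) (by
      rw [ser_comp L hf', hx, squarefree_linE]; exact hs)
    have h2 : Tendsto L.symm (𝓝 x) (𝓝 (L.symm x)) := L.symm.continuous.tendsto x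
    filter_upwards [h2.eventually h1, hf.eventually_analyticAt] with y h3 h4
    have hy : L (L.symm y) = y := L.apply_symm_apply y
    rw [ser_comp L (by rwa [hy]), hy, squarefree_linE] at h3
    exact h3

end Spread

section Rad
variable {n : ℕ} {f g : (Fin n → ℝ) → ℝ} {x : Fin n → ℝ}

/-- The germ of `f` at `x` generates the radical of the ideal generated by the germ of `g`. -/
def IsRad (f g : (Fin n → ℝ) → ℝ) (x : Fin n → ℝ) : Prop :=
  AnalyticAt ℝ f x ∧ Squarefree (ser f x) ∧ ser f x ∣ ser g x ∧ ∃ N, ser g x ∣ ser f x ^ N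

lemma IsRad.dvd_of_pow {f g : (Fin n → ℝ) → ℝ} (hf : IsRad f g x) {k : ℕ} {b : CPS n}
    (h : ser g x ∣ b ^ k) : ser f x ∣ b :=
  hf.2.1.isRadical _ _ (hf.2.2.1.trans h)

lemma IsRad.dvd {f f' g : (Fin n → ℝ) → ℝ} (hf : IsRad f g x) (hf' : IsRad f' g x) :
    ser f x ∣ ser f' x := by
  obtain ⟨N, hN⟩ := hf'.2.2.2
  exact hf.dvd_of_pow hN

/-- The squarefree part of the germ of `g` at `x` generates the radical at all points near `x`, as
squarefreeness is an open condition. -/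
lemma exists_isRad (hg : ∀ᶠ y in 𝓝 x, AnalyticAt ℝ g y) (h0 : ser g x ≠ 0) :
    ∃ f, ∀ᶠ y in 𝓝 x, IsRad f g y := by
  classical
  letI : NormalizationMonoid (CPS n) := Classical.choice inferInstance
  obtain ⟨N, hN⟩ := UniqueFactorizationMonoid.exists_dvd_radical_self_pow h0
  have h1 : UniqueFactorizationMonoid.radical (ser g x) ∣ ser g x :=
    UniqueFactorizationMonoid.radical_dvd_self
  have h2 : Squarefree (UniqueFactorizationMonoid.radical (ser g x)) :=
    UniqueFactorizationMonoid.squarefree_radical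
  set R := UniqueFactorizationMonoid.radical (ser g x)
  have hgx := hg.self_of_nhds
  have hR := rep_analyticAt R x
  rw [← ser_rep R x] at hN h1 h2
  rw [ser_dvd_iff hR hgx] at h1
  rw [← ser_pow hR, ser_dvd_iff hgx (hR.pow N)] at hN
  obtain ⟨c, hc, h1⟩ := h1
  obtain ⟨e, he, hN⟩ := hN
  refine ⟨rep R x, ?_⟩
  filter_upwards [hg, hR.eventually_analyticAt, squarefree_nhds hR h2, hc.eventually_analyticAt,
    he.eventually_analyticAt, h1.eventuallyEq_nhds, hN.eventuallyEq_nhds]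
    with y hg hR h2 hc he h1 hN
  refine ⟨hR, h2, (ser_dvd_iff hR hg).2 ⟨c, hc, h1⟩, N, ?_⟩
  rw [← ser_pow hR, ser_dvd_iff hg (hR.pow N)]
  exact ⟨e, he, hN⟩

lemma der_zero (v : Fin n → ℝ) : der v 0 = 0 := by
  have := der_mul v 0 0
  simpa using this

/-- If every prime factor of `a` divides `R` then `R` times any derivative of `a` is a multiple
of `a`. -/
lemma dvd_mul_der (v : Fin n → ℝ) {R : CPS n} (a : CPS n)
    (h : ∀ p, Prime p → p ∣ a → p ∣ R) : a ∣ R * der v a := by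
  revert h
  refine UniqueFactorizationMonoid.induction_on_prime a (fun h => ?_) (fun u hu _ => hu.dvd) ?_
  · simp [der_zero]
  · intro a p _ hp ih h
    obtain ⟨c, hc⟩ := ih fun q hq hqa => h q hq (hqa.mul_left _)
    obtain ⟨e, he⟩ := h p hp (dvd_mul_right _ _)
    refine ⟨c + e * der v p, ?_⟩
    rw [der_mul]
    linear_combination p * hc + a * der v p * he

lemma mul_der_pow (v : Fin n → ℝ) (R : CPS n) (j : ℕ) :
    R * der v (R ^ j) = j * R ^ j * der v R := by
  have h1 : der v (1 : CPS n) = 0 := by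
    have := der_mul v (1 : CPS n) 1
    simpa using this
  induction j with
  | zero => simp [h1]
  | succ j ih =>
    rw [pow_succ, der_mul]
    push_cast
    linear_combination R * ih

lemma dvd_pow_mul_der_iterate (v : Fin n → ℝ) {R a : CPS n} (h : a ∣ R * der v a) (j : ℕ) :
    a ∣ R ^ j * (der v)^[j] a := by
  induction j with
  | zero => simp
  | succ j ih =>
    obtain ⟨c, hc⟩ := ih
    obtain ⟨e, he⟩ := h
    have h1 := congrArg (der v) hc
    rw [der_mul, der_mul] at h1
    rw [Function.iterate_succ_apply']
    refine ⟨R * der v c + c * e - j * c * der v R, ?_⟩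
    linear_combination R * h1 + c * he - (der v)^[j] a * mul_der_pow v R j - j * der v R * hc

lemma isUnit_natCast_succ (k : ℕ) : IsUnit ((k : CPS n) + 1) := by
  rw [isUnit_iff_cc, map_add, map_natCast, map_one]
  positivity

/-- Each derivative transversal to a prime divisor lowers its multiplicity by exactly one. -/
lemma not_dvd_der_iterate (v : Fin n → ℝ) {p : CPS n} (hp : Prime p) (hv : ¬ p ∣ der v p) (m : ℕ) :
    ∀ t : CPS n, ¬ p ∣ t → ¬ p ∣ (der v)^[m] (p ^ m * t) := by
  induction m with
  | zero => simp
  | succ m ih =>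
    intro t ht
    rw [Function.iterate_succ_apply]
    have h1 : der v (p ^ (m + 1) * t) = p ^ m * (p * der v t + ((m : CPS n) + 1) * (t * der v p)) := by
      have h2 := mul_der_pow v p (m + 1)
      have h3 : der v (p ^ (m + 1)) = ((m : CPS n) + 1) * p ^ m * der v p := by
        refine mul_left_cancel₀ hp.ne_zero ?_
        rw [h2]
        push_cast
        ring
      rw [der_mul, h3]
      ring
    rw [h1]
    refine ih _ fun h => ?_
    have h2 := (dvd_add_right (dvd_mul_right p _)).1 h
    rw [(isUnit_natCast_succ m).dvd_mul_left] at h2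
    exact (hp.dvd_or_dvd h2).elim ht hv

end Rad

section Glob
variable {n : ℕ}

/-- Divisibility of germs at every point implies global divisibility. -/
lemma exists_global_quotient {a b : (Fin n → ℝ) → ℝ} (ha : ∀ x, AnalyticAt ℝ a x)
    (hb : ∀ x, AnalyticAt ℝ b x) (h0 : ∀ x, ser b x ≠ 0) (h : ∀ x, ser b x ∣ ser a x) :
    ∃ c : (Fin n → ℝ) → ℝ, (∀ x, AnalyticAt ℝ c x) ∧ a = b * c := by
  choose c hc using h
  have key : ∀ x, (fun y => cc (c y)) =ᶠ[𝓝 x] rep (c x) x := by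
    intro x
    have hr := rep_analyticAt (c x) x
    have h1 : a =ᶠ[𝓝 x] b * rep (c x) x := by
      refine ser_inj (ha x) ((hb x).mul hr) ?_
      rw [ser_mul (hb x) hr, ser_rep, hc]
    filter_upwards [h1.eventuallyEq_nhds, hr.eventually_analyticAt] with y h2 h3
    have h4 := ser_congr h2
    rw [ser_mul (hb y) h3, hc] at h4
    rw [mul_left_cancel₀ (h0 y) h4, ← constantCoeff_ser h3]
    rfl
  refine ⟨fun y => cc (c y), fun x => (rep_analyticAt (c x) x).congr (key x).symm, ?_⟩
  ext x
  have h1 := congrArg cc (hc x)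
  rw [map_mul] at h1
  have h2 : ∀ {f : (Fin n → ℝ) → ℝ}, AnalyticAt ℝ f x → cc (ser f x) = f x :=
    fun hf => constantCoeff_ser hf
  rw [h2 (ha x), h2 (hb x)] at h1
  exact h1

lemma ser_ne_zero_of_ne {g : (Fin n → ℝ) → ℝ} (hg : ∀ x, AnalyticAt ℝ g x) (h : g ≠ 0)
    (x : Fin n → ℝ) : ser g x ≠ 0 := by
  rw [Ne, ser_eq_zero_iff (hg x)]
  intro h1
  refine h (AnalyticOnNhd.eq_of_eventuallyEq (𝕜 := ℝ) (fun x _ => hg x)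
    (fun x _ => analyticAt_const) h1)

end Glob
end RA

/-! ### The two implications, given the second Cousin problem -/

namespace RA

open scoped ENNReal NNReal Topology
open Filter

section Final
variable {n : ℕ}

/-- Solvability of the second Cousin problem: analytic functions `F x` on neighbourhoods `U x` whose
germs divide each other on the overlaps are, up to units, the germs of one global function. -/
def Cousin (n : ℕ) : Prop :=
  ∀ (F : (Fin n → ℝ) → (Fin n → ℝ) → ℝ) (U : (Fin n → ℝ) → Set (Fin n → ℝ)),
    (∀ x, IsOpen (U x)) → (∀ x, x ∈ U x) → (∀ x, ∀ y ∈ U x, AnalyticAt ℝ (F x) y) →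
    (∀ x, ∀ y ∈ U x, ser (F x) y ≠ 0) →
    (∀ x x' y, y ∈ U x → y ∈ U x' → ser (F x) y ∣ ser (F x') y) →
    ∃ f : (Fin n → ℝ) → ℝ, ∀ x, AnalyticAt ℝ f x ∧ Associated (ser f x) (ser (F x) x)

/-- The locally defined generators of the radical of `(g)` glue to a global function. -/
lemma exists_global_isRad (hC : Cousin n) {g : (Fin n → ℝ) → ℝ} (hg : ∀ x, AnalyticAt ℝ g x)
    (h0 : g ≠ 0) : ∃ f, ∀ x, IsRad f g x := by
  have h1 : ∀ x, ∃ f, ∀ᶠ y in 𝓝 x, IsRad f g y := fun x =>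
    exists_isRad (Eventually.of_forall hg) (ser_ne_zero_of_ne hg h0 x)
  choose F hF using h1
  have h2 : ∀ x, ∃ U : Set (Fin n → ℝ), (∀ y ∈ U, IsRad (F x) g y) ∧ IsOpen U ∧ x ∈ U :=
    fun x => eventually_nhds_iff.1 (hF x)
  choose U hU hUo hUx using h2
  obtain ⟨f, hf⟩ := hC F U hUo hUx (fun x y hy => (hU x y hy).1)
    (fun x y hy => (hU x y hy).2.1.ne_zero) (fun x x' y hy hy' => (hU x y hy).dvd (hU x' y hy'))
  refine ⟨f, fun x => ⟨(hf x).1, ?_, ?_, ?_⟩⟩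
  · exact (hU x x (hUx x)).2.1.squarefree_of_dvd (hf x).2.dvd
  · exact (hf x).2.dvd.trans (hU x x (hUx x)).2.2.1
  · obtain ⟨N, hN⟩ := (hU x x (hUx x)).2.2.2
    exact ⟨N, hN.trans (pow_dvd_pow_of_dvd (hf x).2.symm.dvd N)⟩

lemma ORn_dvd {a b : ORn n} (h0 : b ≠ 0) (h : ∀ x, ser (b : (Fin n → ℝ) → ℝ) x ∣
    ser (a : (Fin n → ℝ) → ℝ) x) : b ∣ a := by
  obtain ⟨c, hc, h1⟩ := exists_global_quotient a.2 b.2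
    (ser_ne_zero_of_ne b.2 fun h => h0 (Subtype.ext h)) h
  exact ⟨⟨c, hc⟩, Subtype.ext h1⟩

lemma ser_coe_dvd {a b : ORn n} (h : b ∣ a) (x : Fin n → ℝ) : ser (b : (Fin n → ℝ) → ℝ) x ∣
    ser (a : (Fin n → ℝ) → ℝ) x := by
  obtain ⟨c, rfl⟩ := h
  exact ⟨ser (c : (Fin n → ℝ) → ℝ) x, ser_mul (b.2 x) (c.2 x)⟩

lemma Dv_iterate (v : Fin n → ℝ) {g : (Fin n → ℝ) → ℝ} (hg : ∀ x, AnalyticAt ℝ g x) (m : ℕ) :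
    ∀ x, AnalyticAt ℝ ((Dv v)^[m] g) x ∧ ser ((Dv v)^[m] g) x = (der v)^[m] (ser g x) := by
  induction m with
  | zero => exact fun x => ⟨hg x, rfl⟩
  | succ m ih =>
    intro x
    rw [Function.iterate_succ_apply', Function.iterate_succ_apply', ← (ih x).2]
    exact ⟨Dv_analyticAt (ih x).1, ser_Dv (ih x).1⟩

/-- The exponent `m` with `f ^ m ∈ (g)` is found at a single zero `x0` of `g`: it is the
multiplicity of a prime factor `p` of the germ there. With `u` the `m`-th derivative of `g` in a
direction `v` transversal to `p`, `f ^ m * u ∈ (g)` but `p` does not divide `u`, so primariness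
applies. -/
lemma radical_principal (hC : Cousin n) (q : Ideal (ORn n)) (hq : q.IsPrimary)
    (h : q.IsPrincipal) : q.radical.IsPrincipal := by
  obtain ⟨g, rfl⟩ := h
  rw [← Ideal.span] at hq ⊢
  by_cases hg0 : g = 0
  · subst hg0
    have : IsReduced (ORn n) := isReduced_of_injective (ORn n).subtype Subtype.coe_injective
    rw [Ideal.span_singleton_eq_bot.2 rfl, Ideal.radical_bot_of_isReduced]
    exact ⟨0, by simp⟩
  have hg0' : (g : (Fin n → ℝ) → ℝ) ≠ 0 := fun h => hg0 (Subtype.ext h)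
  have hgs := ser_ne_zero_of_ne g.2 hg0'
  -- A function without zeros is a unit, so a proper principal ideal has a zero.
  obtain ⟨x0, hx0⟩ : ∃ x, (g : (Fin n → ℝ) → ℝ) x = 0 := by
    by_contra! hne
    refine hq.ne_top ((Ideal.eq_top_iff_one _).2 (Ideal.mem_span_singleton.2 ?_))
    exact ORn_dvd hg0 fun x => ((isUnit_ser_iff (g.2 x)).2 (hne x)).dvd
  obtain ⟨f, hf⟩ := exists_global_isRad hC g.2 hg0'
  let f' : ORn n := ⟨f, fun x => (hf x).1⟩
  suffices h : ∃ m, f' ^ m ∈ Ideal.span {g} by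
    refine ⟨f', le_antisymm ?_ ?_⟩
    · rintro h ⟨k, hk⟩
      rw [← Ideal.span, Ideal.mem_span_singleton]
      rw [Ideal.mem_span_singleton] at hk
      refine ORn_dvd ?_ fun x => (hf x).dvd_of_pow (k := k) ?_
      · intro h1
        have h2 : f = 0 := congrArg Subtype.val h1
        have h3 := (hf x0).2.1.ne_zero
        rw [h2, ser_zero] at h3
        exact h3 rfl
      · have := ser_coe_dvd hk x
        rwa [SubmonoidClass.coe_pow, ser_pow (h.2 x)] at this
    · rw [← Ideal.span, Ideal.span_le, Set.singleton_subset_iff]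
      exact h
  obtain ⟨p, hp, hpg⟩ := WfDvdMonoid.exists_irreducible_factor
    (fun h => (isUnit_ser_iff (g.2 x0)).1 h hx0) (hgs x0)
  have hp := hp.prime
  obtain ⟨v, hv⟩ : ∃ v, LineNZ (g : (Fin n → ℝ) → ℝ) x0 v := by
    cases n with
    | zero => exact (hg0' (funext fun y => by rw [Subsingleton.elim y x0, hx0]; rfl)).elim
    | succ n =>
      obtain ⟨v, -, hv⟩ := exists_lineNZ (g.2 x0) (hgs x0)
      exact ⟨v, hv⟩
  have hpv : ¬ p ∣ der v p := by
    have h5 := not_dvd_Dv (rep_analyticAt p x0) ?_ (hv.of_dvd (g.2 x0) hpg)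
    · rwa [ser_rep] at h5
    · by_contra h6
      rw [← Ne, ← isUnit_ser_iff (rep_analyticAt p x0), ser_rep] at h6
      exact hp.not_unit h6
  obtain ⟨m, t, hgt, ht⟩ : ∃ m t, ser (g : (Fin n → ℝ) → ℝ) x0 = p ^ m * t ∧ ¬ p ∣ t :=
    ⟨_, (FiniteMultiplicity.of_prime_left hp (hgs x0)).exists_eq_pow_mul_and_not_dvd⟩
  have hD := Dv_iterate v g.2 m
  let u : ORn n := ⟨(Dv v)^[m] g, fun x => (hD x).1⟩
  have hfu : f' ^ m * u ∈ Ideal.span {g} := by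
    rw [Ideal.mem_span_singleton]
    refine ORn_dvd hg0 fun x => ?_
    have h1 : ser ((f' ^ m * u : ORn n) : (Fin n → ℝ) → ℝ) x
        = ser f x ^ m * (der v)^[m] (ser (g : (Fin n → ℝ) → ℝ) x) := by
      rw [Subring.coe_mul, ser_mul ((f' ^ m).2 x) (u.2 x), SubmonoidClass.coe_pow,
        ser_pow (f'.2 x), (hD x).2]
    rw [h1]
    refine dvd_pow_mul_der_iterate v (dvd_mul_der v _ fun p hp h => ?_) m
    obtain ⟨N, hN⟩ := (hf x).2.2.2
    exact hp.dvd_of_dvd_pow (h.trans hN)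
  refine ⟨m, ((Ideal.isPrimary_iff.1 hq).2 hfu).resolve_right ?_⟩
  rintro ⟨k, hk⟩
  rw [Ideal.mem_span_singleton] at hk
  have h1 := ser_coe_dvd hk x0
  rw [SubmonoidClass.coe_pow, ser_pow (u.2 x0), (hD x0).2] at h1
  have h2 := hp.dvd_of_dvd_pow (hpg.trans h1)
  rw [hgt] at h2
  exact not_dvd_der_iterate v hp hpv m t ht h2

/-- With `k` minimal such that `f ^ k ∈ q`, primariness allows factors `f` to be split off an
element of `q` until `f ^ k` is reached. -/
lemma principal_of_radical {A : Type*} [CommRing A] (q : Ideal A) (hq : q.IsPrimary)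
    (h : q.radical.IsPrincipal) : q.IsPrincipal := by
  classical
  obtain ⟨f, hf⟩ := h
  rw [← Ideal.span] at hf
  have h1 : ∃ k, f ^ k ∈ q := by
    have : f ∈ q.radical := by rw [hf]; exact Ideal.mem_span_singleton_self f
    exact this
  have key : ∀ m, m ≤ Nat.find h1 → ∀ g ∈ q, f ^ m ∣ g := by
    intro m
    induction m with
    | zero => simp
    | succ m ih =>
      intro hm g hg
      obtain ⟨h, rfl⟩ := ih (by omega) g hg
      have h2 : f ^ m ∉ q := Nat.find_min h1 (by omega)
      have h3 := ((Ideal.isPrimary_iff.1 hq).2 hg).resolve_left h2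
      rw [hf, Ideal.mem_span_singleton] at h3
      rw [pow_succ]
      exact mul_dvd_mul_left _ h3
  refine ⟨f ^ Nat.find h1, le_antisymm (fun g hg => ?_) ?_⟩
  · rw [← Ideal.span, Ideal.mem_span_singleton]
    exact key _ le_rfl g hg
  · rw [← Ideal.span, Ideal.span_le, Set.singleton_subset_iff]
    exact Nat.find_spec h1

end Final
end RA

/-! ### The Bochner–Martinelli formula -/

namespace RA

open scoped ENNReal NNReal Topology
open Filter

open MeasureTheory

variable {n : ℕ}

/-- The squared Euclidean norm on `ℂⁿ`. -/
def N2 (Y : Fin n → ℂ) : ℝ := ∑ l, ((Y l).re ^ 2 + (Y l).im ^ 2)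

/-- The derivative `∂φ/∂ζ̄_l`. -/
noncomputable def dbar (φ : (Fin n → ℂ) → ℂ) (l : Fin n) (ζ : Fin n → ℂ) : ℂ :=
  (fderiv ℝ φ ζ (Pi.single l 1) + Complex.I * fderiv ℝ φ ζ (Pi.single l Complex.I)) / 2

lemma N2_nonneg (Y : Fin n → ℂ) : 0 ≤ N2 Y := by unfold N2; positivity

lemma N2_continuous : Continuous (N2 (n := n)) := by unfold N2; fun_prop

lemma N2_contDiff : ContDiff ℝ 1 (N2 (n := n)) := by
  unfold N2
  refine ContDiff.sum fun l _ => ?_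
  have h1 : ContDiff ℝ 1 (fun Y : Fin n → ℂ => (Y l).re) :=
    (Complex.reCLM.comp (ContinuousLinearMap.proj (R := ℝ) (φ := fun _ : Fin n => ℂ) l)).contDiff
  have h2 : ContDiff ℝ 1 (fun Y : Fin n → ℂ => (Y l).im) :=
    (Complex.imCLM.comp (ContinuousLinearMap.proj (R := ℝ) (φ := fun _ : Fin n => ℂ) l)).contDiff
  exact (h1.pow 2).add (h2.pow 2)

lemma sq_norm_coord_le_N2 (Y : Fin n → ℂ) (l : Fin n) : ‖Y l‖ ^ 2 ≤ N2 Y := by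
  have : ‖Y l‖ ^ 2 = (Y l).re ^ 2 + (Y l).im ^ 2 := by
    rw [Complex.sq_norm, Complex.normSq_apply]; ring
  rw [this]
  exact Finset.single_le_sum (f := fun l => (Y l).re ^ 2 + (Y l).im ^ 2)
    (fun i _ => by positivity) (Finset.mem_univ l)

lemma sq_norm_le_N2 (Y : Fin n → ℂ) : ‖Y‖ ^ 2 ≤ N2 Y := by
  have : ‖Y‖ ≤ Real.sqrt (N2 Y) := by
    rw [pi_norm_le_iff_of_nonneg (Real.sqrt_nonneg _)]
    intro l
    exact Real.le_sqrt_of_sq_le (sq_norm_coord_le_N2 Y l)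
  calc ‖Y‖ ^ 2 ≤ (Real.sqrt (N2 Y)) ^ 2 := by gcongr
    _ = N2 Y := Real.sq_sqrt (N2_nonneg Y)

lemma N2_smul (t : ℝ) (Y : Fin n → ℂ) : N2 (t • Y) = t ^ 2 * N2 Y := by
  simp [N2, Finset.mul_sum]; refine Finset.sum_congr rfl fun l _ => by ring

lemma finrank_V : Module.finrank ℝ (Fin n → ℂ) = 2 * n := by
  simp [Module.finrank_pi_fintype, Complex.finrank_real_complex, mul_comm]

lemma N2_line (Y : Fin n → ℂ) (l : Fin n) (w : ℂ) (t : ℝ) :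
    N2 (Y + t • (Pi.single l w : Fin n → ℂ)) = N2 Y + (2 * ((Y l).re * w.re + (Y l).im * w.im)) * t
      + (w.re ^ 2 + w.im ^ 2) * t ^ 2 := by
  unfold N2
  rw [← Finset.add_sum_erase _ _ (Finset.mem_univ l), ← Finset.add_sum_erase _ _ (Finset.mem_univ l)]
  have : ∑ x ∈ Finset.univ.erase l, (((Y + t • (Pi.single l w : Fin n → ℂ)) x).re ^ 2 + ((Y + t • (Pi.single l w : Fin n → ℂ)) x).im ^ 2)
      = ∑ x ∈ Finset.univ.erase l, ((Y x).re ^ 2 + (Y x).im ^ 2) := by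
    refine Finset.sum_congr rfl fun x hx => ?_
    simp [Pi.single_eq_of_ne (Finset.ne_of_mem_erase hx)]
  rw [this]
  simp
  ring

/-- The coefficient `conj Y_l / (|Y|² + ε)ⁿ` of the regularised Bochner–Martinelli kernel, the
kernel itself being the case `ε = 0`. -/
noncomputable def greg (ε : ℝ) (l : Fin n) (Y : Fin n → ℂ) : ℂ :=
  (starRingEnd ℂ) (Y l) * (((N2 Y + ε) ^ n)⁻¹ : ℝ)

lemma conj_contDiff (l : Fin n) : ContDiff ℝ 1 (fun Y : Fin n → ℂ => (starRingEnd ℂ) (Y l)) :=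
  ((Complex.conjCLE : ℂ →L[ℝ] ℂ).comp
    (ContinuousLinearMap.proj (R := ℝ) (φ := fun _ : Fin n => ℂ) l)).contDiff

lemma greg_contDiff {ε : ℝ} (hε : 0 < ε) (l : Fin n) : ContDiff ℝ 1 (greg ε l) := by
  unfold greg
  refine (conj_contDiff l).mul (Complex.ofRealCLM.contDiff.comp ?_)
  refine ContDiff.inv ((N2_contDiff.add contDiff_const).pow n) fun Y => ?_
  have := N2_nonneg Y
  positivity

lemma greg_fderiv {ε : ℝ} (hε : 0 < ε) (l : Fin n) (Y : Fin n → ℂ) (w : ℂ) :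
    fderiv ℝ (greg ε l) Y (Pi.single l w) =
      (starRingEnd ℂ) w * (((N2 Y + ε) ^ n)⁻¹ : ℝ) + (starRingEnd ℂ) (Y l) *
        ((-(n * (2 * ((Y l).re * w.re + (Y l).im * w.im))) * ((N2 Y + ε) ^ (n + 1))⁻¹ : ℝ) : ℂ) := by
  have h1 := (((greg_contDiff hε l).differentiable one_ne_zero) Y).hasFDerivAt.hasLineDerivAt
    (Pi.single l w)
  refine h1.unique ?_
  unfold HasLineDerivAt
  have hp : 0 < N2 Y + ε := by have := N2_nonneg Y; positivity
  have e1 : HasDerivAt (fun t : ℝ => N2 (Y + t • (Pi.single l w : Fin n → ℂ)) + ε)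
      (2 * ((Y l).re * w.re + (Y l).im * w.im)) 0 := by
    simp_rw [N2_line]
    have := ((((hasDerivAt_id (0:ℝ)).const_mul (2 * ((Y l).re * w.re + (Y l).im * w.im))).const_add (N2 Y)).add
      (((hasDerivAt_id (0:ℝ)).pow 2).const_mul (w.re ^ 2 + w.im ^ 2))).add_const ε
    refine HasDerivAt.congr_deriv this ?_
    simp
  have e2 : HasDerivAt (fun t : ℝ => ((N2 (Y + t • (Pi.single l w : Fin n → ℂ)) + ε) ^ n)⁻¹)
      (-(n * (2 * ((Y l).re * w.re + (Y l).im * w.im))) * ((N2 Y + ε) ^ (n + 1))⁻¹) 0 := by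
    have := (e1.pow n).fun_inv (by simpa using fun h => absurd h hp.ne')
    refine HasDerivAt.congr_deriv this ?_
    simp
    rcases n with _ | m
    · simp
    · simp
      field_simp
      ring
  have e3 : HasDerivAt (fun t : ℝ => (starRingEnd ℂ) ((Y + t • (Pi.single l w : Fin n → ℂ)) l)) ((starRingEnd ℂ) w) 0 := by
    have : (fun t : ℝ => (starRingEnd ℂ) ((Y + t • (Pi.single l w : Fin n → ℂ)) l)) =
      fun t : ℝ => (starRingEnd ℂ) (Y l) + (t : ℂ) * (starRingEnd ℂ) w := by
      funext t; simp
    rw [this]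
    have := ((hasDerivAt_id (0:ℝ)).ofReal_comp.mul_const ((starRingEnd ℂ) w)).const_add ((starRingEnd ℂ) (Y l))
    simpa using this
  have := e3.mul e2.ofReal_comp
  unfold greg
  refine HasDerivAt.congr_deriv this ?_
  simp

/-- The divergence of the regularised kernel is an approximate identity, up to normalisation. -/
lemma sum_dbar_greg {ε : ℝ} (hε : 0 < ε) (Y : Fin n → ℂ) :
    ∑ l, dbar (greg ε l) l Y = ((n * ε * ((N2 Y + ε) ^ (n + 1))⁻¹ : ℝ) : ℂ) := by
  have hp : 0 < N2 Y + ε := by have := N2_nonneg Y; positivity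
  have : ∀ l, dbar (greg ε l) l Y = ((((N2 Y + ε) ^ n)⁻¹ -
      n * ((N2 Y + ε) ^ (n + 1))⁻¹ * ((Y l).re ^ 2 + (Y l).im ^ 2) : ℝ) : ℂ) := by
    intro l
    unfold dbar
    rw [greg_fderiv hε, greg_fderiv hε]
    generalize ((N2 Y + ε) ^ n)⁻¹ = a
    generalize ((N2 Y + ε) ^ (n + 1))⁻¹ = b
    rw [pow_two, pow_two]
    apply Complex.ext <;> simp <;> ring
  simp_rw [this]
  rw [← Complex.ofReal_sum]
  congr 1
  rw [Finset.sum_sub_distrib, ← Finset.mul_sum]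
  change _ - _ * N2 Y = _
  simp
  field_simp
  ring


lemma dbar_continuous {ψ : (Fin n → ℂ) → ℂ} (h : ContDiff ℝ 1 ψ) (l : Fin n) :
    Continuous (dbar ψ l) := by
  have := h.continuous_fderiv one_ne_zero
  unfold dbar
  fun_prop

lemma dbar_hasCompactSupport {ψ : (Fin n → ℂ) → ℂ} (h : HasCompactSupport ψ) (l : Fin n) :
    HasCompactSupport (dbar ψ l) := by
  have h1 := h.fderiv (𝕜 := ℝ)
  refine h1.mono fun x hx => ?_
  simp only [Function.mem_support] at hx ⊢
  intro h0
  apply hx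
  simp [dbar, h0]

/-- Integration by parts against the regularised kernel. -/
lemma ibp {ψ : (Fin n → ℂ) → ℂ} (h : ContDiff ℝ 1 ψ) (hc : HasCompactSupport ψ) {ε : ℝ} (hε : 0 < ε) :
    ∫ Y, ∑ l, greg ε l Y * dbar ψ l Y =
      - ∫ Y, ((n * ε * ((N2 Y + ε) ^ (n + 1))⁻¹ : ℝ) : ℂ) * ψ Y := by
  have key : ∀ (l : Fin n) (v : Fin n → ℂ), Integrable (fun Y => greg ε l Y * fderiv ℝ ψ Y v) ∧
      Integrable (fun Y => fderiv ℝ (greg ε l) Y v * ψ Y) ∧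
      ∫ Y, greg ε l Y * fderiv ℝ ψ Y v = - ∫ Y, fderiv ℝ (greg ε l) Y v * ψ Y := by
    intro l v
    have hg := greg_contDiff hε l
    have hgc := hg.continuous
    have hψc := h.continuous
    have hg' := (hg.continuous_fderiv one_ne_zero)
    have hψ' := (h.continuous_fderiv one_ne_zero)
    have hs := hc.fderiv_apply (𝕜 := ℝ) v
    have i1 : Integrable (fun Y => greg ε l Y * fderiv ℝ ψ Y v) :=
      Continuous.integrable_of_hasCompactSupport (by fun_prop) (hs.mul_left)
    have i2 : Integrable (fun Y => fderiv ℝ (greg ε l) Y v * ψ Y) :=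
      Continuous.integrable_of_hasCompactSupport (by fun_prop) (hc.mul_left)
    have i3 : Integrable (fun Y => greg ε l Y * ψ Y) :=
      Continuous.integrable_of_hasCompactSupport (by fun_prop) (hc.mul_left)
    exact ⟨i1, i2, integral_mul_fderiv_eq_neg_fderiv_mul_of_integrable i2 i1 i3
      (fun x _ => (hg.differentiable one_ne_zero) x) (fun x _ => (h.differentiable one_ne_zero) x)⟩
  have key2 : ∀ l : Fin n, Integrable (fun Y => greg ε l Y * dbar ψ l Y) ∧
      Integrable (fun Y => dbar (greg ε l) l Y * ψ Y) ∧
      ∫ Y, greg ε l Y * dbar ψ l Y = - ∫ Y, dbar (greg ε l) l Y * ψ Y := by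
    intro l
    obtain ⟨a1, a2, a3⟩ := key l (Pi.single l 1)
    obtain ⟨b1, b2, b3⟩ := key l (Pi.single l Complex.I)
    have e1 : (fun Y => greg ε l Y * dbar ψ l Y) = fun Y =>
        (1/2 : ℂ) * (greg ε l Y * fderiv ℝ ψ Y (Pi.single l 1)) +
        (Complex.I / 2) * (greg ε l Y * fderiv ℝ ψ Y (Pi.single l Complex.I)) := by
      funext Y; unfold dbar; ring
    have e2 : (fun Y => dbar (greg ε l) l Y * ψ Y) = fun Y =>
        (1/2 : ℂ) * (fderiv ℝ (greg ε l) Y (Pi.single l 1) * ψ Y) +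
        (Complex.I / 2) * (fderiv ℝ (greg ε l) Y (Pi.single l Complex.I) * ψ Y) := by
      funext Y; unfold dbar; ring
    rw [e1, e2]
    refine ⟨(a1.const_mul _).add (b1.const_mul _), (a2.const_mul _).add (b2.const_mul _), ?_⟩
    rw [integral_add (a1.const_mul _) (b1.const_mul _), integral_add (a2.const_mul _) (b2.const_mul _)]
    simp only [integral_const_mul]
    rw [a3, b3]; ring
  rw [integral_finsetSum _ fun l _ => (key2 l).1, Finset.sum_congr rfl fun l _ => (key2 l).2.2,
    Finset.sum_neg_distrib, ← integral_finsetSum _ fun l _ => (key2 l).2.1]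
  congr 1
  refine integral_congr_ae (Eventually.of_forall fun Y => ?_)
  simp only
  rw [← Finset.sum_mul, sum_dbar_greg hε]

/-- The normalising constant of the Bochner–Martinelli formula. -/
noncomputable def CFS (n : ℕ) : ℝ := ∫ Z : Fin n → ℂ, n * ((N2 Z + 1) ^ (n + 1))⁻¹

lemma integrable_N2 : Integrable (fun Z : Fin n → ℂ => (n : ℝ) * ((N2 Z + 1) ^ (n + 1))⁻¹) := by
  refine Integrable.const_mul ?_ _
  have := integrable_rpow_neg_one_add_norm_sq (E := Fin n → ℂ) (μ := volume) (r := 2 * (n + 1))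
    (by rw [finrank_V]; push_cast; linarith)
  refine this.mono' ?_ (Eventually.of_forall fun Z => ?_)
  · have : Continuous fun Z : Fin n → ℂ => ((N2 Z + 1) ^ (n + 1))⁻¹ := by
      have := N2_continuous (n := n)
      refine Continuous.inv₀ (by fun_prop) fun Z => ?_
      have := N2_nonneg Z
      positivity
    exact this.aestronglyMeasurable
  · have h0 := N2_nonneg Z
    rw [Real.norm_of_nonneg (by positivity)]
    have : (-(2 * ((n : ℝ) + 1)) / 2) = -((n + 1 : ℕ) : ℝ) := by push_cast; ring
    rw [this, Real.rpow_neg (by positivity), Real.rpow_natCast]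
    have := sq_norm_le_N2 Z
    gcongr (?_ ^ _)⁻¹
    linarith

lemma CFS_pos (hn : 0 < n) : 0 < CFS n := by
  unfold CFS
  rw [integral_pos_iff_support_of_nonneg _ integrable_N2]
  · have : Function.support (fun Z : Fin n → ℂ => (n : ℝ) * ((N2 Z + 1) ^ (n + 1))⁻¹) = Set.univ := by
      ext Z
      simp only [Function.mem_support, Set.mem_univ, iff_true]
      have := N2_nonneg Z
      positivity
    rw [this]
    exact isOpen_univ.measure_pos _ Set.univ_nonempty
  · intro Z
    have := N2_nonneg Z
    simp only [Pi.zero_apply]; positivity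

/-- Rescaling by `η` turns the approximate identity for `ε = η²` into the one for `ε = 1`. -/
lemma scaled {ψ : (Fin n → ℂ) → ℂ} {η : ℝ} (hη : 0 < η) :
    ∫ Y, ((n * η ^ 2 * ((N2 Y + η ^ 2) ^ (n + 1))⁻¹ : ℝ) : ℂ) * ψ Y =
      ∫ Z, ((n * ((N2 Z + 1) ^ (n + 1))⁻¹ : ℝ) : ℂ) * ψ (η • Z) := by
  have := Measure.integral_comp_smul_of_nonneg (volume : Measure (Fin n → ℂ))
    (fun Y => ((n * η ^ 2 * ((N2 Y + η ^ 2) ^ (n + 1))⁻¹ : ℝ) : ℂ) * ψ Y) η (hR := hη.le)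
  rw [finrank_V] at this
  have h2 : ∀ Z : Fin n → ℂ, ((n * η ^ 2 * ((N2 (η • Z) + η ^ 2) ^ (n + 1))⁻¹ : ℝ) : ℂ) * ψ (η • Z)
      = ((η ^ (2 * n))⁻¹ : ℝ) • (((n * ((N2 Z + 1) ^ (n + 1))⁻¹ : ℝ) : ℂ) * ψ (η • Z)) := by
    intro Z
    have h0 := N2_nonneg Z
    rw [N2_smul, Complex.real_smul, ← mul_assoc, ← Complex.ofReal_mul]
    congr 2
    have : η ^ 2 * N2 Z + η ^ 2 = η ^ 2 * (N2 Z + 1) := by ring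
    rw [this, mul_pow]
    have : (N2 Z + 1) ^ (n+1) ≠ 0 := by positivity
    field_simp
    ring
  simp_rw [h2, integral_smul] at this
  have hne : ((η ^ (2 * n))⁻¹ : ℝ) ≠ 0 := by positivity
  exact (smul_right_injective ℂ hne this).symm

lemma scaled_tendsto {ψ : (Fin n → ℂ) → ℂ} (h : Continuous ψ) (hc : HasCompactSupport ψ) :
    Tendsto (fun η : ℝ => ∫ Z, ((n * ((N2 Z + 1) ^ (n + 1))⁻¹ : ℝ) : ℂ) * ψ (η • Z)) (𝓝[>] 0)
      (𝓝 (CFS n * ψ 0)) := by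
  obtain ⟨M, hM⟩ := hc.exists_bound_of_continuous h
  have : (CFS n : ℂ) * ψ 0 = ∫ Z : Fin n → ℂ, ((n * ((N2 Z + 1) ^ (n + 1))⁻¹ : ℝ) : ℂ) * ψ 0 := by
    rw [integral_mul_const]; congr 1; exact integral_ofReal.symm
  rw [this]
  have hN := N2_continuous (n := n)
  have hcont : Continuous fun Z : Fin n → ℂ => ((n * ((N2 Z + 1) ^ (n + 1))⁻¹ : ℝ) : ℂ) := by
    refine Complex.continuous_ofReal.comp (continuous_const.mul (Continuous.inv₀ (by fun_prop) fun Z => ?_))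
    have := N2_nonneg Z
    positivity
  refine tendsto_integral_filter_of_dominated_convergence
    (fun Z => (n * ((N2 Z + 1) ^ (n + 1))⁻¹) * M) ?_ ?_ ?_ ?_
  · refine Eventually.of_forall fun η => Continuous.aestronglyMeasurable ?_
    fun_prop
  · refine Eventually.of_forall fun η => Eventually.of_forall fun Z => ?_
    have h0 := N2_nonneg Z
    rw [norm_mul, Complex.norm_real, Real.norm_of_nonneg (by positivity)]
    gcongr
    exact hM _
  · exact integrable_N2.mul_const _
  · refine Eventually.of_forall fun Z => ?_
    refine Tendsto.const_mul _ ?_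
    have : Tendsto (fun η : ℝ => ψ (η • Z)) (𝓝 0) (𝓝 (ψ ((0:ℝ) • Z))) :=
      (Continuous.tendsto (by fun_prop) 0)
    rw [zero_smul] at this
    exact this.mono_left nhdsWithin_le_nhds

/-- A locally integrable majorant of the kernels, uniform in `ε`. -/
lemma greg_bound (hn : 0 < n) {ε : ℝ} (hε : 0 ≤ ε) (l : Fin n) (Y : Fin n → ℂ) :
    ‖greg ε l Y‖ ≤ 1 * ‖Y‖ ^ (-(2 * n - 1 : ℝ)) := by
  have hn1 : (1 : ℝ) ≤ n := by exact_mod_cast hn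
  rcases eq_or_ne Y 0 with rfl | hY
  · simp [greg]; positivity
  have hY' : 0 < ‖Y‖ := norm_pos_iff.2 hY
  have h0 := sq_norm_le_N2 Y
  unfold greg
  rw [norm_mul, Complex.norm_real, Real.norm_of_nonneg (by have := N2_nonneg Y; positivity), one_mul,
    RCLike.norm_conj]
  have e : ‖Y‖ ^ (-(2 * n - 1 : ℝ)) = ‖Y‖ * ((‖Y‖ ^ 2) ^ n)⁻¹ := by
    rw [neg_sub, Real.rpow_sub hY', Real.rpow_one, ← pow_mul, ← Real.rpow_natCast]
    push_cast; rfl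
  rw [e]
  gcongr
  · have := N2_nonneg Y
    positivity
  · exact norm_le_pi_norm Y l
  · linarith

lemma greg_measurable (ε : ℝ) (l : Fin n) : Measurable (greg ε l) := by
  have := N2_continuous (n := n)
  unfold greg
  refine Measurable.mul ?_ ?_
  · exact (conj_contDiff l).continuous.measurable
  · exact Complex.measurable_ofReal.comp ((this.measurable.add_const ε).pow_const n).inv

lemma locInt (hn : 0 < n) : LocallyIntegrable (fun Y : Fin n → ℂ => ‖Y‖ ^ (-(2 * n - 1 : ℝ))) := by
  refine locallyIntegrable_of_norm_le_rpow (C := 1) (α := 2 * n - 1) (by rw [finrank_V]; omega)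
    (by rw [finrank_V]; push_cast; linarith) (Eventually.of_forall fun Y => ?_) ?_
  · rw [Real.norm_of_nonneg (by positivity), one_mul]
  · exact (Measurable.pow_const measurable_norm _).aestronglyMeasurable

/-- The Bochner–Martinelli formula at the origin, as the limit `ε → 0` of `ibp`. -/
lemma FS0 (hn : 0 < n) {ψ : (Fin n → ℂ) → ℂ} (h : ContDiff ℝ 1 ψ) (hc : HasCompactSupport ψ) :
    ∫ Y, ∑ l, greg 0 l Y * dbar ψ l Y = - (CFS n * ψ 0) := by
  have T1 := scaled_tendsto h.continuous hc
  have T2 : Tendsto (fun η : ℝ => ∫ Y, ∑ l, greg (η ^ 2) l Y * dbar ψ l Y) (𝓝[>] 0)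
      (𝓝 (∫ Y, ∑ l, greg 0 l Y * dbar ψ l Y)) := by
    refine tendsto_integral_filter_of_dominated_convergence
      (fun Y => ∑ l, ‖dbar ψ l Y‖ • ‖Y‖ ^ (-(2 * n - 1 : ℝ))) ?_ ?_ ?_ ?_
    · refine Eventually.of_forall fun η => Measurable.aestronglyMeasurable ?_
      exact Finset.measurable_fun_sum _ fun l _ =>
        (greg_measurable _ l).mul (dbar_continuous h l).measurable
    · refine Eventually.of_forall fun η => Eventually.of_forall fun Y => ?_
      refine (norm_sum_le _ _).trans (Finset.sum_le_sum fun l _ => ?_)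
      rw [norm_mul, mul_comm, smul_eq_mul]
      gcongr
      simpa using greg_bound hn (sq_nonneg η) l Y
    · refine integrable_finsetSum _ fun l _ => ?_
      exact (locInt hn).integrable_smul_left_of_hasCompactSupport (dbar_continuous h l).norm
        (dbar_hasCompactSupport hc l).norm
    · refine Eventually.of_forall fun Y => ?_
      refine tendsto_finsetSum _ fun l _ => Tendsto.mul_const _ ?_
      rcases eq_or_ne Y 0 with rfl | hY
      · simp [greg]
      have hY' : 0 < ‖Y‖ := norm_pos_iff.2 hY
      have h0 := sq_norm_le_N2 Y
      have h1 : 0 < N2 Y := by have : 0 < ‖Y‖ ^ 2 := by positivity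
                               linarith
      unfold greg
      refine Tendsto.const_mul _ ((Complex.continuous_ofReal.tendsto _).comp ?_)
      have : ContinuousAt (fun η : ℝ => ((N2 Y + η ^ 2) ^ n)⁻¹) 0 := by
        refine ContinuousAt.inv₀ (by fun_prop) ?_
        simp; intro h; exact absurd h h1.ne'
      have := this.tendsto
      simp only [ne_eq, OfNat.ofNat_ne_zero, not_false_eq_true, zero_pow] at this
      exact this.mono_left nhdsWithin_le_nhds
  refine tendsto_nhds_unique T2 (T1.neg.congr' ?_)
  filter_upwards [self_mem_nhdsWithin] with η hη
  rw [ibp h hc (pow_pos hη 2), scaled hη]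

/-- The Bochner–Martinelli formula: a compactly supported `C¹` function is recovered from its
`∂̄`-derivatives. -/
lemma FS (hn : 0 < n) {φ : (Fin n → ℂ) → ℂ} (h : ContDiff ℝ 1 φ) (hc : HasCompactSupport φ)
    (X : Fin n → ℂ) :
    ∫ ζ, ∑ l, greg 0 l (ζ - X) * dbar φ l ζ = - (CFS n * φ X) := by
  have := FS0 hn (ψ := fun Y => φ (Y + X)) (h.comp (contDiff_id.add contDiff_const))
    (hc.comp_homeomorph (Homeomorph.addRight X))
  rw [zero_add] at this
  rw [← this, ← integral_add_right_eq_self _ X]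
  refine integral_congr_ae (Eventually.of_forall fun Y => ?_)
  simp [dbar, fderiv_comp_add_right]

lemma FS_integrable (hn : 0 < n) {φ : (Fin n → ℂ) → ℂ} (h : ContDiff ℝ 1 φ) (hc : HasCompactSupport φ)
    (X : Fin n → ℂ) (l : Fin n) :
    Integrable fun ζ => greg 0 l (ζ - X) * dbar φ l ζ := by
  have : Integrable fun Y => greg 0 l Y * dbar φ l (Y + X) := by
    have h1 : Integrable fun Y : Fin n → ℂ => ‖dbar φ l (Y + X)‖ • ‖Y‖ ^ (-(2 * n - 1 : ℝ)) :=
      (locInt hn).integrable_smul_left_of_hasCompactSupport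
        (((dbar_continuous h l).comp (continuous_id.add continuous_const)).norm)
        (((dbar_hasCompactSupport hc l).comp_homeomorph (Homeomorph.addRight X)).norm)
    refine h1.mono' (((greg_measurable _ l).mul ((dbar_continuous h l).comp
      (continuous_id.add continuous_const)).measurable).aestronglyMeasurable)
      (Eventually.of_forall fun Y => ?_)
    rw [norm_mul, mul_comm, smul_eq_mul]
    gcongr
    simpa using greg_bound hn le_rfl l Y
  simpa using this.comp_sub_right X

end RA

/-! ### Analyticity of potentials -/

namespace RA

open scoped ENNReal NNReal Topology
open Filter

open MeasureTheory

variable {n : ℕ}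

/-- The inclusion `ℝⁿ ⊆ ℂⁿ`. -/
def cx (x : Fin n → ℝ) : Fin n → ℂ := fun l => (x l : ℂ)

open scoped BoundedContinuousFunction

/-- The squared distance from `x0`, truncated below at `δ`. -/
noncomputable def bcm (x0 : Fin n → ℝ) (δ : ℝ) (ζ : Fin n → ℂ) : ℝ := max (N2 (ζ - cx x0)) δ

lemma bcm_continuous (x0 : Fin n → ℝ) (δ : ℝ) : Continuous (bcm x0 δ) := by
  have := N2_continuous (n := n)
  unfold bcm
  fun_prop

/-- The function `f` as a bounded continuous function, with value `0` if it is not one. -/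
noncomputable def mkB (f : (Fin n → ℂ) → ℂ) : (Fin n → ℂ) →ᵇ ℂ :=
  open Classical in
  if h : Continuous f ∧ ∃ C, ∀ x, ‖f x‖ ≤ C then
    BoundedContinuousFunction.ofNormedAddCommGroup f h.1 h.2.choose h.2.choose_spec else 0

lemma mkB_apply {f : (Fin n → ℂ) → ℂ} (h1 : Continuous f) (h2 : ∃ C, ∀ x, ‖f x‖ ≤ C) (x) :
    mkB f x = f x := by
  unfold mkB
  rw [dif_pos ⟨h1, h2⟩]; rfl

/-- Integration against `σ`, as a continuous functional on bounded continuous functions. -/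
noncomputable def intFun (σ : (Fin n → ℂ) → ℂ) (hσ : Integrable σ) : ((Fin n → ℂ) →ᵇ ℂ) →L[ℝ] ℂ :=
  LinearMap.mkContinuous
    { toFun := fun h => ∫ ζ, h ζ * σ ζ
      map_add' := fun h k => by
        have i : ∀ h : (Fin n → ℂ) →ᵇ ℂ, Integrable fun ζ => h ζ * σ ζ := fun h =>
          hσ.bdd_mul h.continuous.aestronglyMeasurable (Eventually.of_forall h.norm_coe_le_norm)
        simp only [BoundedContinuousFunction.coe_add, Pi.add_apply, add_mul]
        exact integral_add (i h) (i k)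
      map_smul' := fun c h => by
        simp only [BoundedContinuousFunction.coe_smul, RingHom.id_apply, smul_mul_assoc]
        exact integral_smul _ _ }
    (∫ ζ, ‖σ ζ‖) (fun h => by
      simp only [LinearMap.coe_mk, AddHom.coe_mk]
      refine (norm_integral_le_integral_norm _).trans ?_
      rw [mul_comm, ← integral_const_mul]
      refine integral_mono_of_nonneg (Eventually.of_forall fun _ => norm_nonneg _)
        (hσ.norm.const_mul _) (Eventually.of_forall fun ζ => ?_)
      simp only [norm_mul]
      gcongr
      exact h.norm_coe_le_norm ζ)

lemma intFun_apply (σ : (Fin n → ℂ) → ℂ) (hσ : Integrable σ) (h : (Fin n → ℂ) →ᵇ ℂ) :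
    intFun σ hσ h = ∫ ζ, h ζ * σ ζ := rfl

lemma N2_sub_cx (W : Fin n → ℂ) (y : Fin n → ℝ) :
    N2 (W - cx y) = N2 W - (∑ l, y l * (2 * (W l).re) - ∑ l, y l ^ 2) := by
  unfold N2 cx
  rw [← Finset.sum_sub_distrib, ← Finset.sum_sub_distrib]
  refine Finset.sum_congr rfl fun l _ => ?_
  simp
  ring

/-- The potential of an integrable function vanishing near `x0` is real analytic at `x0`: the kernel
is an analytic function `Φ` of `x` with values in the bounded continuous functions of `ζ`, as
`|ζ - x|² = |ζ - x0|² (1 - q x)` where `q` is polynomial in `x` and small near `x0`. Away from the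
support of `σ` the denominator `|ζ - x0|²` is replaced by `bcm`. -/
lemma AP {σ : (Fin n → ℂ) → ℂ} (hσ : Integrable σ) {x0 : Fin n → ℝ} {δ : ℝ} (hδ : 0 < δ)
    (h0 : ∀ ζ, N2 (ζ - cx x0) < δ → σ ζ = 0) (l : Fin n) :
    AnalyticAt ℝ (fun x : Fin n → ℝ => ∫ ζ, greg 0 l (ζ - cx x) * σ ζ) x0 ∧
    ∀ᶠ x in 𝓝 x0, Integrable (fun ζ => greg 0 l (ζ - cx x) * σ ζ) := by
  have hm := bcm_continuous x0 δ
  have hmp : ∀ ζ, 0 < bcm x0 δ ζ := fun ζ => lt_max_of_lt_right hδ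
  have hmδ : ∀ ζ, δ ≤ bcm x0 δ ζ := fun ζ => le_max_right _ _
  have hmi : ∀ ζ, (bcm x0 δ ζ)⁻¹ ≤ δ⁻¹ := fun ζ => inv_anti₀ hδ (hmδ ζ)
  let s0f : (Fin n → ℂ) → ℂ := fun ζ => ((bcm x0 δ ζ)⁻¹ : ℝ)
  let sf : Fin n → (Fin n → ℂ) → ℂ := fun j ζ => ((2 * (ζ j - x0 j).re * (bcm x0 δ ζ)⁻¹ : ℝ) : ℂ)
  let tf : Fin n → (Fin n → ℂ) → ℂ := fun j ζ => (starRingEnd ℂ) (ζ j - x0 j) * ((bcm x0 δ ζ)⁻¹ : ℝ)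
  have hinvc : Continuous fun ζ => (bcm x0 δ ζ)⁻¹ := hm.inv₀ fun ζ => (hmp ζ).ne'
  have c0 : Continuous s0f := Complex.continuous_ofReal.comp hinvc
  have cs : ∀ j, Continuous (sf j) := fun j => by
    refine Complex.continuous_ofReal.comp (Continuous.mul ?_ hinvc)
    have : Continuous fun ζ : Fin n → ℂ => (ζ j - x0 j).re :=
      Complex.continuous_re.comp (by fun_prop)
    fun_prop
  have ct : ∀ j, Continuous (tf j) := fun j => by
    refine Continuous.mul (Complex.continuous_conj.comp (by fun_prop)) c0
  have hz : ∀ (j : Fin n) (ζ : Fin n → ℂ), ‖ζ j - x0 j‖ * (bcm x0 δ ζ)⁻¹ ≤ δ⁻¹ + 1 := by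
    intro j ζ
    have h1 : ‖ζ j - x0 j‖ ^ 2 ≤ bcm x0 δ ζ :=
      (sq_norm_coord_le_N2 (ζ - cx x0) j).trans (le_max_left _ _)
    have h2 : ‖ζ j - x0 j‖ ≤ 1 + bcm x0 δ ζ := by nlinarith [sq_nonneg (‖ζ j - x0 j‖ - 1)]
    calc _ ≤ (1 + bcm x0 δ ζ) * (bcm x0 δ ζ)⁻¹ := by
          have := hmp ζ
          gcongr
      _ = (bcm x0 δ ζ)⁻¹ + 1 := by have := (hmp ζ).ne'; field_simp
      _ ≤ _ := by have := hmi ζ; linarith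
  have b0 : ∃ C, ∀ x, ‖s0f x‖ ≤ C := ⟨δ⁻¹, fun ζ => by
    simp only [s0f]
    rw [Complex.norm_real, Real.norm_of_nonneg (inv_nonneg.2 (hmp ζ).le)]; exact hmi ζ⟩
  have bs : ∀ j, ∃ C, ∀ x, ‖sf j x‖ ≤ C := fun j => ⟨2 * (δ⁻¹ + 1), fun ζ => by
    simp only [sf]
    rw [Complex.norm_real, norm_mul, Real.norm_of_nonneg (inv_nonneg.2 (hmp ζ).le), norm_mul,
      mul_assoc]
    have h1 := hz j ζ
    have h2 : ‖(ζ j - x0 j).re‖ ≤ ‖ζ j - x0 j‖ := Complex.abs_re_le_norm _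
    have h3 : ‖(ζ j - x0 j).re‖ * (bcm x0 δ ζ)⁻¹ ≤ ‖ζ j - x0 j‖ * (bcm x0 δ ζ)⁻¹ := by
      have := hmp ζ
      gcongr
    rw [Real.norm_of_nonneg zero_le_two]
    linarith⟩
  have bt : ∀ j, ∃ C, ∀ x, ‖tf j x‖ ≤ C := fun j => ⟨δ⁻¹ + 1, fun ζ => by
    simp only [tf]
    rw [norm_mul, RCLike.norm_conj, Complex.norm_real, Real.norm_of_nonneg (inv_nonneg.2 (hmp ζ).le)]
    exact hz j ζ⟩
  let s0 := mkB s0f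
  let s := fun j => mkB (sf j)
  let t := fun j => mkB (tf j)
  let q : (Fin n → ℝ) → ((Fin n → ℂ) →ᵇ ℂ) := fun x =>
    ∑ j, (x j - x0 j) • s j - (∑ j, (x j - x0 j) ^ 2) • s0
  let Φ : (Fin n → ℝ) → ((Fin n → ℂ) →ᵇ ℂ) := fun x =>
    (t l * s0 ^ (n - 1) - (x l - x0 l) • s0 ^ n) * (Ring.inverse (1 - q x)) ^ n
  have hco : ∀ j, AnalyticAt ℝ (fun x : Fin n → ℝ => x j - x0 j) x0 := fun j =>
    ((ContinuousLinearMap.proj (R := ℝ) (φ := fun _ : Fin n => ℝ) j).analyticAt x0).sub analyticAt_const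
  have hq : AnalyticAt ℝ q x0 := by
    refine AnalyticAt.sub ?_ ?_
    · exact Finset.analyticAt_fun_sum _ fun j _ => (hco j).smul analyticAt_const
    · exact (Finset.analyticAt_fun_sum _ fun j _ => (hco j).pow 2).smul analyticAt_const
  have hq0 : q x0 = 0 := by simp [q]
  have hΦ : AnalyticAt ℝ Φ x0 := by
    refine AnalyticAt.mul (analyticAt_const.sub ((hco l).smul analyticAt_const)) ?_
    refine AnalyticAt.pow ?_ n
    have h1 := analyticAt_inverse_one_sub ℝ ((Fin n → ℂ) →ᵇ ℂ)
    rw [← hq0] at h1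
    exact h1.comp hq
  have hev : ∀ᶠ x in 𝓝 x0, ∀ ζ, Φ x ζ * σ ζ = greg 0 l (ζ - cx x) * σ ζ := by
    have hlt : ∀ᶠ x in 𝓝 x0, ‖q x‖ < 1 := by
      have := hq.continuousAt.norm
      rw [ContinuousAt, hq0, norm_zero] at this
      exact this.eventually_lt_const one_pos
    filter_upwards [hlt] with x hx ζ
    by_cases hs : σ ζ = 0
    · simp [hs]
    congr 1
    have hge : δ ≤ N2 (ζ - cx x0) := not_lt.1 fun h => hs (h0 ζ h)
    have hmm : bcm x0 δ ζ = N2 (ζ - cx x0) := max_eq_left hge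
    have hNp : 0 < N2 (ζ - cx x0) := hδ.trans_le hge
    have hu : IsUnit (1 - q x) := isUnit_one_sub_of_norm_lt_one hx
    have h1 : (1 - q x) * Ring.inverse (1 - q x) = 1 := Ring.mul_inverse_cancel _ hu
    have h2 : (1 - q x ζ) * (Ring.inverse (1 - q x)) ζ = 1 := by
      have := congrArg (fun f : (Fin n → ℂ) →ᵇ ℂ => f ζ) h1
      simpa using this
    have h3 : (Ring.inverse (1 - q x)) ζ = (1 - q x ζ)⁻¹ := eq_inv_of_mul_eq_one_right h2
    have hqv : q x ζ = (((∑ j, (x j - x0 j) * (2 * ((ζ - cx x0) j).re) - ∑ j, (x j - x0 j) ^ 2) *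
        (N2 (ζ - cx x0))⁻¹ : ℝ) : ℂ) := by
      have : q x ζ = ∑ j, ((x j - x0 j : ℝ) : ℂ) * sf j ζ - ((∑ j, (x j - x0 j) ^ 2 : ℝ) : ℂ) * s0f ζ := by
        simp only [q, s, s0, BoundedContinuousFunction.coe_sub, Pi.sub_apply,
          BoundedContinuousFunction.coe_sum, Finset.sum_apply, BoundedContinuousFunction.coe_smul,
          mkB_apply (cs _) (bs _), mkB_apply c0 b0, Complex.real_smul]
      rw [this]
      simp only [sf, s0f, hmm, ← Complex.ofReal_mul, ← Complex.ofReal_sum, ← Complex.ofReal_sub]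
      congr 1
      rw [sub_mul, Finset.sum_mul (s := Finset.univ) (f := fun j => (x j - x0 j) * (2 * ((ζ - cx x0) j).re))]
      congr 1
      refine Finset.sum_congr rfl fun j _ => ?_
      simp [cx]; ring
    have hN : N2 (ζ - cx x) = N2 (ζ - cx x0) * (1 - ((∑ j, (x j - x0 j) * (2 * ((ζ - cx x0) j).re) - ∑ j, (x j - x0 j) ^ 2) *
        (N2 (ζ - cx x0))⁻¹)) := by
      have e : ζ - cx x = (ζ - cx x0) - cx (fun j => x j - x0 j) := by
        funext j; simp [cx]
      rw [e, N2_sub_cx, mul_sub, mul_one, mul_comm (N2 (ζ - cx x0)) (_ * _), mul_assoc,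
        inv_mul_cancel₀ hNp.ne', mul_one]
    have hΦv : Φ x ζ = (tf l ζ * s0f ζ ^ (n - 1) - ((x l - x0 l : ℝ) : ℂ) * s0f ζ ^ n) * ((1 - q x ζ)⁻¹) ^ n := by
      simp only [Φ, BoundedContinuousFunction.coe_mul, Pi.mul_apply, BoundedContinuousFunction.coe_sub,
        Pi.sub_apply, BoundedContinuousFunction.coe_pow, Pi.pow_apply, BoundedContinuousFunction.coe_smul,
        t, s0, mkB_apply (ct _) (bt _), mkB_apply c0 b0, Complex.real_smul, h3]
    have hn : n - 1 + 1 = n := Nat.sub_add_cancel (Fin.pos l)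
    have hΦ2 : tf l ζ * s0f ζ ^ (n - 1) - ((x l - x0 l : ℝ) : ℂ) * s0f ζ ^ n =
        (starRingEnd ℂ) ((ζ - cx x) l) * (((N2 (ζ - cx x0)) ^ n)⁻¹ : ℝ) := by
      have : tf l ζ * s0f ζ ^ (n - 1) = (starRingEnd ℂ) (ζ l - x0 l) * s0f ζ ^ n := by
        rw [← hn, pow_succ]; simp only [tf, s0f, hn]; ring
      rw [this]
      simp only [s0f, hmm]
      simp [cx]
      ring
    rw [hΦv, hΦ2, hqv]
    unfold greg
    rw [add_zero, hN, mul_assoc]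
    congr 1
    rw [← Complex.ofReal_one, ← Complex.ofReal_sub, ← Complex.ofReal_inv, ← Complex.ofReal_pow,
      ← Complex.ofReal_mul]
    congr 1
    rw [mul_pow, mul_inv, inv_pow]
  constructor
  · have := (intFun σ hσ).analyticAt (Φ x0) |>.comp hΦ
    refine this.congr ?_
    filter_upwards [hev] with x hx
    simp only [Function.comp, intFun_apply]
    exact integral_congr_ae (Eventually.of_forall hx)
  · filter_upwards [hev] with x hx
    have : Integrable fun ζ => Φ x ζ * σ ζ :=
      hσ.bdd_mul (Φ x).continuous.aestronglyMeasurable (Eventually.of_forall (Φ x).norm_coe_le_norm)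
    exact this.congr (Eventually.of_forall hx)

end RA

/-! ### Complexification of real-analytic functions -/

namespace RA

open scoped ENNReal NNReal Topology
open Filter

variable {n : ℕ}

/-- The real part of a complex vector. -/
def reV (z : Fin n → ℂ) : Fin n → ℝ := fun l => (z l).re

@[simp] lemma reV_cx (x : Fin n → ℝ) : reV (cx x) = x := by funext l; simp [reV, cx]

lemma norm_cx (x : Fin n → ℝ) : ‖cx x‖ = ‖x‖ := by
  simp [Pi.norm_def, cx, Complex.nnnorm_real]

lemma cx_sub (x y : Fin n → ℝ) : cx x - cx y = cx (x - y) := by funext l; simp [cx]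
lemma cx_add (x y : Fin n → ℝ) : cx (x + y) = cx x + cx y := by funext l; simp [cx]

lemma dist_cx (x y : Fin n → ℝ) : dist (cx x) (cx y) = dist x y := by
  rw [dist_eq_norm, dist_eq_norm, cx_sub, norm_cx]

lemma cx_continuous : Continuous (cx (n := n)) := by unfold cx; fun_prop
lemma reV_continuous : Continuous (reV (n := n)) := by
  unfold reV; exact continuous_pi fun l => Complex.continuous_re.comp (continuous_apply l)

lemma dist_cx_reV (z : Fin n → ℂ) (x : Fin n → ℝ) : dist (cx (reV z)) (cx x) ≤ dist z (cx x) := by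
  rw [dist_pi_le_iff dist_nonneg]
  intro l
  refine le_trans ?_ (dist_le_pi_dist z (cx x) l)
  simp only [cx, reV, dist_eq_norm, ← Complex.ofReal_sub, Complex.norm_real]
  have := Complex.abs_re_le_norm (z l - x l)
  simpa using this

lemma dist_reV (z : Fin n → ℂ) (x : Fin n → ℝ) : dist z (cx (reV z)) ≤ dist z (cx x) := by
  rw [dist_pi_le_iff dist_nonneg]
  intro l
  refine le_trans ?_ (dist_le_pi_dist z (cx x) l)
  simp only [cx, reV, dist_eq_norm]
  have h1 : z l - ((z l).re : ℂ) = (z l).im * Complex.I := by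
    apply Complex.ext <;> simp
  rw [h1, norm_mul, Complex.norm_I, mul_one, Complex.norm_real]
  have := Complex.abs_im_le_norm (z l - x l)
  simpa using this

lemma mono_cx (y : Fin n → ℝ) (α : Fin n →₀ ℕ) : mono (cx y) α = ((mono y α : ℝ) : ℂ) := by
  simp [mono, cx]

lemma nrm_le_of_coeff {𝕜 𝕜' : Type*} [NormedField 𝕜] [NormedField 𝕜'] {ι : Type*} [Fintype ι]
    (ρ : ι → ℝ≥0) (a : MvPowerSeries ι 𝕜)
    (b : MvPowerSeries ι 𝕜') (h : ∀ α, ‖MvPowerSeries.coeff α a‖ ≤ ‖MvPowerSeries.coeff α b‖) :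
    nrm ρ a ≤ nrm ρ b := by
  refine ENNReal.tsum_le_tsum fun α => ?_
  gcongr ?_ * _
  simp only [enorm_eq_nnnorm]
  exact_mod_cast h α

lemma nn_of_norm_lt {𝕜 : Type*} [NormedField 𝕜] {ι : Type*} [Fintype ι] {y : ι → 𝕜} {r : ℝ≥0}
    (h : ‖y‖ < r) (i : ι) : ‖y i‖₊ ≤ r := by
  have := (norm_le_pi_norm y i).trans h.le
  exact_mod_cast this

/-- Identity principle along the real points: a holomorphic function vanishing on `ℝⁿ` near `x`
vanishes near `x`, since the real and imaginary parts of its Taylor coefficients at `x` do. -/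
lemma eq_zero_of_real {G : (Fin n → ℂ) → ℂ} {x : Fin n → ℝ} (hG : AnalyticAt ℂ G (cx x))
    (h : ∀ᶠ y in 𝓝 x, G (cx y) = 0) : G =ᶠ[𝓝 (cx x)] 0 := by
  obtain ⟨r, hr, a, ha, hev⟩ := exists_evalS hG
  let aR : MvPowerSeries (Fin n) ℝ := fun α => (MvPowerSeries.coeff α a).re
  let aI : MvPowerSeries (Fin n) ℝ := fun α => (MvPowerSeries.coeff α a).im
  have hcR : ∀ α, MvPowerSeries.coeff α aR = (MvPowerSeries.coeff α a).re := fun _ => rfl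
  have hcI : ∀ α, MvPowerSeries.coeff α aI = (MvPowerSeries.coeff α a).im := fun _ => rfl
  have nR : nrm (fun _ => r) aR ≠ ∞ := ne_top_of_le_ne_top ha
    (nrm_le_of_coeff _ _ _ fun α => Complex.abs_re_le_norm _)
  have nI : nrm (fun _ => r) aI ≠ ∞ := ne_top_of_le_ne_top ha
    (nrm_le_of_coeff _ _ _ fun α => Complex.abs_im_le_norm _)
  have hz : ∀ᶠ y : Fin n → ℝ in 𝓝 0, evalS a (cx y) = 0 := by
    have h1 : ∀ᶠ y : Fin n → ℝ in 𝓝 0, ‖y‖ < r := by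
      have : Tendsto (fun y : Fin n → ℝ => ‖y‖) (𝓝 0) (𝓝 ‖(0 : Fin n → ℝ)‖) := continuous_norm.tendsto 0
      rw [norm_zero] at this
      exact this.eventually_lt_const (by exact_mod_cast hr)
    have h2 : ∀ᶠ y : Fin n → ℝ in 𝓝 0, G (cx (x + y)) = 0 := by
      have : Tendsto (fun y : Fin n → ℝ => x + y) (𝓝 0) (𝓝 x) := by
        have : Tendsto (fun y : Fin n → ℝ => x + y) (𝓝 0) (𝓝 (x + 0)) :=
          (Continuous.tendsto (by fun_prop) 0)
        rwa [add_zero] at this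
      exact this.eventually h
    filter_upwards [h1, h2] with y hy hy2
    rw [← hev (cx y) (by rwa [norm_cx]), ← cx_add, hy2]
  have hsm : ∀ᶠ y : Fin n → ℝ in 𝓝 0, Summable fun α => MvPowerSeries.coeff α a * mono (cx y) α := by
    have h1 : ∀ᶠ y : Fin n → ℝ in 𝓝 0, ‖y‖ < r := by
      have : Tendsto (fun y : Fin n → ℝ => ‖y‖) (𝓝 0) (𝓝 ‖(0 : Fin n → ℝ)‖) := continuous_norm.tendsto 0
      rw [norm_zero] at this
      exact this.eventually_lt_const (by exact_mod_cast hr)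
    filter_upwards [h1] with y hy
    exact (summable_norm_evalS ha (nn_of_norm_lt (by rwa [norm_cx]))).of_norm
  have eR : aR = 0 := by
    refine eq_zero_of_evalS hr nR ?_
    filter_upwards [hz, hsm] with y hy hs
    have := congrArg Complex.re hy
    unfold evalS at this ⊢
    rw [Complex.re_tsum hs] at this
    simp only [mono_cx, Complex.re_mul_ofReal] at this
    simpa [hcR] using this
  have eI : aI = 0 := by
    refine eq_zero_of_evalS hr nI ?_
    filter_upwards [hz, hsm] with y hy hs
    have := congrArg Complex.im hy
    unfold evalS at this ⊢
    rw [Complex.im_tsum hs] at this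
    simp only [mono_cx, Complex.im_mul_ofReal] at this
    simpa [hcI] using this
  have ea : a = 0 := by
    ext α
    apply Complex.ext
    · rw [← hcR, eR]; simp
    · rw [← hcI, eI]; simp
  have : ∀ᶠ z in 𝓝 (cx x), ‖z - cx x‖ < r := by
    have : Tendsto (fun z : Fin n → ℂ => ‖z - cx x‖) (𝓝 (cx x)) (𝓝 ‖cx x - cx x‖) :=
      (Continuous.tendsto (by fun_prop) _)
    rw [sub_self, norm_zero] at this
    exact this.eventually_lt_const (by exact_mod_cast hr)
  filter_upwards [this] with z hz
  have := hev _ hz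
  rw [add_sub_cancel, ea] at this
  rw [this]
  simp [evalS]

lemma exists_complexification {f : (Fin n → ℝ) → ℝ} {x0 : Fin n → ℝ} (hf : AnalyticAt ℝ f x0) :
    ∃ R > 0, ∃ F : (Fin n → ℂ) → ℂ, AnalyticOnNhd ℂ F (Metric.ball (cx x0) R) ∧
      ∀ x ∈ Metric.ball x0 R, F (cx x) = f x := by
  obtain ⟨r, hr, a, ha, hev⟩ := exists_evalS hf
  let b : MvPowerSeries (Fin n) ℂ := fun α => ((MvPowerSeries.coeff α a : ℝ) : ℂ)
  have hb : ∀ α, MvPowerSeries.coeff α b = ((MvPowerSeries.coeff α a : ℝ) : ℂ) := fun _ => rfl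
  have nb : nrm (fun _ => r) b ≠ ∞ := ne_top_of_le_ne_top ha
    (nrm_le_of_coeff _ _ _ fun α => by rw [hb, Complex.norm_real])
  refine ⟨r, by exact_mod_cast hr, fun z => evalS b (z - cx x0), ?_, ?_⟩
  · intro z hz
    have h1 : ‖z - cx x0‖ < r := by rwa [← dist_eq_norm]
    exact (evalS_analyticAt nb h1).comp_of_eq (analyticAt_id.sub analyticAt_const) rfl
  · intro x hx
    have h1 : ‖x - x0‖ < r := by rwa [← dist_eq_norm]
    have := hev _ h1
    rw [add_sub_cancel] at this
    rw [this]
    change evalS b (cx x - cx x0) = _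
    rw [cx_sub]
    unfold evalS
    rw [Complex.ofReal_tsum]
    refine tsum_congr fun α => ?_
    rw [hb, mono_cx]; push_cast; rfl

/-- `v` is the value at `z` of a holomorphic extension of `f` to a ball around the real part of `z`.
-/
def IsExt (f : (Fin n → ℝ) → ℝ) (z : Fin n → ℂ) (v : ℂ) : Prop :=
  ∃ R > 0, ∃ F : (Fin n → ℂ) → ℂ, z ∈ Metric.ball (cx (reV z)) R ∧
    AnalyticOnNhd ℂ F (Metric.ball (cx (reV z)) R) ∧
    (∀ x ∈ Metric.ball (reV z) R, F (cx x) = f x) ∧ F z = v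

lemma IsExt.unique {f : (Fin n → ℝ) → ℝ} {z : Fin n → ℂ} {v w : ℂ} (h : IsExt f z v)
    (h' : IsExt f z w) : v = w := by
  obtain ⟨R, hR, F, hz, hF, hr, rfl⟩ := h
  obtain ⟨R', hR', F', hz', hF', hr', rfl⟩ := h'
  let s := Metric.ball (cx (reV z)) (min R R')
  have hs1 : s ⊆ Metric.ball (cx (reV z)) R := Metric.ball_subset_ball (min_le_left _ _)
  have hs2 : s ⊆ Metric.ball (cx (reV z)) R' := Metric.ball_subset_ball (min_le_right _ _)
  have hmin : 0 < min R R' := lt_min hR hR'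
  have hc : cx (reV z) ∈ s := Metric.mem_ball_self hmin
  have hsub : (F - F') =ᶠ[𝓝 (cx (reV z))] 0 := by
    refine eq_zero_of_real ((hF _ (hs1 hc)).sub (hF' _ (hs2 hc))) ?_
    filter_upwards [Metric.ball_mem_nhds (reV z) hmin] with y hy
    rw [Pi.sub_apply, hr y (Metric.ball_subset_ball (min_le_left _ _) hy),
      hr' y (Metric.ball_subset_ball (min_le_right _ _) hy), sub_self]
  have := (hF.mono hs1).eqOn_of_preconnected_of_eventuallyEq (hF'.mono hs2)
    ((convex_ball (cx (reV z)) (min R R')).isPreconnected) hc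
    (by filter_upwards [hsub] with y hy; exact sub_eq_zero.1 hy)
  exact this (show dist _ _ < min R R' from lt_min hz hz')

open Classical in
/-- The complexification of `f`, with value `0` at points to which `f` does not extend in the sense
of `IsExt`. It depends on `f` only, so that extensions of a cocycle again satisfy the cocycle
relation. -/
noncomputable def Ext (f : (Fin n → ℝ) → ℝ) (z : Fin n → ℂ) : ℂ :=
  if h : ∃ v, IsExt f z v then h.choose else 0

lemma Ext_eq {f : (Fin n → ℝ) → ℝ} {z : Fin n → ℂ} {v : ℂ} (h : IsExt f z v) : Ext f z = v := by
  unfold Ext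
  have h' : ∃ v, IsExt f z v := ⟨v, h⟩
  rw [dif_pos h']
  exact h'.choose_spec.unique h

/-- Centres have to be moved from `x0` to the real part of `z`, whence the radius `R / 2`. -/
lemma Ext_eq_of_ball {f : (Fin n → ℝ) → ℝ} {x0 : Fin n → ℝ} {R : ℝ} {F : (Fin n → ℂ) → ℂ}
    (hF : AnalyticOnNhd ℂ F (Metric.ball (cx x0) R))
    (hr : ∀ x ∈ Metric.ball x0 R, F (cx x) = f x) {z : Fin n → ℂ}
    (hz : z ∈ Metric.ball (cx x0) (R / 2)) : Ext f z = F z := by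
  refine Ext_eq ⟨R / 2, dist_nonneg.trans_lt hz, F, (dist_reV z x0).trans_lt hz, hF.mono ?_, ?_, rfl⟩
  · refine Metric.ball_subset_ball' ?_
    have := (dist_cx_reV z x0).trans_lt hz
    linarith
  · intro x hx
    refine hr x (Metric.ball_subset_ball' ?_ hx)
    have := (dist_cx_reV z x0).trans_lt hz
    rw [dist_cx] at this
    linarith

lemma Ext_spec {f : (Fin n → ℝ) → ℝ} {x0 : Fin n → ℝ} (hf : AnalyticAt ℝ f x0) :
    AnalyticAt ℂ (Ext f) (cx x0) ∧ Ext f (cx x0) = f x0 := by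
  obtain ⟨R, hR, F, hF, hr⟩ := exists_complexification hf
  constructor
  · refine (hF _ (Metric.mem_ball_self hR)).congr ?_
    filter_upwards [Metric.ball_mem_nhds (cx x0) (half_pos hR)] with z hz
    exact (Ext_eq_of_ball hF hr hz).symm
  · rw [Ext_eq_of_ball hF hr (Metric.mem_ball_self (half_pos hR)), hr _ (Metric.mem_ball_self hR)]

lemma Ext_sub {f g h : (Fin n → ℝ) → ℝ} {x0 : Fin n → ℝ} (hf : AnalyticAt ℝ f x0)
    (hg : AnalyticAt ℝ g x0) (hh : AnalyticAt ℝ h x0) (he : ∀ᶠ x in 𝓝 x0, f x - g x = h x) :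
    ∀ᶠ z in 𝓝 (cx x0), Ext f z - Ext g z = Ext h z := by
  have : (Ext f - Ext g - Ext h) =ᶠ[𝓝 (cx x0)] 0 := by
    refine eq_zero_of_real (((Ext_spec hf).1.sub (Ext_spec hg).1).sub (Ext_spec hh).1) ?_
    filter_upwards [he, hf.eventually_analyticAt, hg.eventually_analyticAt,
      hh.eventually_analyticAt] with x hx h1 h2 h3
    simp only [Pi.sub_apply]
    rw [(Ext_spec h1).2, (Ext_spec h2).2, (Ext_spec h3).2, ← hx]
    push_cast; ring
  filter_upwards [this] with z hz
  exact sub_eq_zero.1 hz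

end RA

/-! ### Partitions of unity and cut-offs near the real points -/

namespace RA

open scoped ENNReal NNReal Topology
open Filter

open MeasureTheory
open scoped ContDiff Manifold

variable {n : ℕ}

/-- A locally finite `C¹` partition of unity subordinate to `U`. -/
lemma exists_PU (U : (Fin n → ℝ) → Set (Fin n → ℝ)) (hU : ∀ x, IsOpen (U x)) (hm : ∀ x, x ∈ U x) :
    ∃ χ : (Fin n → ℝ) → (Fin n → ℝ) → ℝ, (∀ j, ContDiff ℝ 1 (χ j)) ∧
      ∀ x0, ∃ J : Finset (Fin n → ℝ), (∀ j ∈ J, x0 ∈ U j) ∧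
        ∀ᶠ x in 𝓝 x0, (∀ j ∉ J, χ j x = 0) ∧ ∑ j ∈ J, χ j x = 1 := by
  obtain ⟨ρ, hρ⟩ := SmoothPartitionOfUnity.exists_isSubordinate 𝓘(ℝ, Fin n → ℝ)
    (isClosed_univ (X := Fin n → ℝ)) U hU (fun x _ => Set.mem_iUnion.2 ⟨x, hm x⟩)
  refine ⟨fun j => ρ j, fun j => ?_, fun x0 => ⟨ρ.fintsupport x0, fun j hj => ?_, ?_⟩⟩
  · have h1 : ContDiff ℝ ∞ (ρ j) := (ρ j).contMDiff.contDiff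
    exact h1.of_le (by exact_mod_cast le_top)
  · exact hρ j ((ρ.mem_fintsupport_iff x0 j).1 hj)
  · filter_upwards [ρ.eventually_finsupport_subset x0] with x hx
    refine ⟨fun j hj => ?_, ρ.sum_finsupport' x (Set.mem_univ _) hx⟩
    by_contra hne
    exact hj (hx ((ρ.mem_finsupport x).2 hne))

lemma dbar_congr {g h : (Fin n → ℂ) → ℂ} {ζ : Fin n → ℂ} (e : g =ᶠ[𝓝 ζ] h) (l : Fin n) :
    dbar g l ζ = dbar h l ζ := by
  unfold dbar
  rw [e.fderiv_eq (𝕜 := ℝ)]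

lemma dbar_add {g h : (Fin n → ℂ) → ℂ} {ζ : Fin n → ℂ} (hg : DifferentiableAt ℝ g ζ)
    (hh : DifferentiableAt ℝ h ζ) (l : Fin n) :
    dbar (g + h) l ζ = dbar g l ζ + dbar h l ζ := by
  unfold dbar
  rw [fderiv_add hg hh]
  simp; ring

lemma dbar_analytic {g : (Fin n → ℂ) → ℂ} {ζ : Fin n → ℂ} (hg : AnalyticAt ℂ g ζ) (l : Fin n) :
    dbar g l ζ = 0 := by
  unfold dbar
  have h1 := hg.differentiableAt
  rw [h1.fderiv_restrictScalars ℝ]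
  have : (Pi.single l Complex.I : Fin n → ℂ) = Complex.I • Pi.single l (1 : ℂ) := by
    rw [← Pi.single_smul]; simp
  simp only [ContinuousLinearMap.coe_restrictScalars', this, map_smul, smul_eq_mul]
  rw [← mul_assoc, Complex.I_mul_I]; simp

lemma contDiffAt_of_analytic {g : (Fin n → ℂ) → ℂ} {ζ : Fin n → ℂ} (hg : AnalyticAt ℂ g ζ) :
    ContDiffAt ℝ 1 g ζ := (hg.restrictScalars (𝕜 := ℝ)).contDiffAt

lemma reV_contDiff : ContDiff ℝ 1 (reV (n := n)) := by
  rw [contDiff_pi]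
  intro l
  exact (Complex.reCLM.comp (ContinuousLinearMap.proj (R := ℝ) (φ := fun _ : Fin n => ℂ) l)).contDiff

lemma eventually_reV {p : (Fin n → ℝ) → Prop} {x0 : Fin n → ℝ} (h : ∀ᶠ x in 𝓝 x0, p x) :
    ∀ᶠ ζ in 𝓝 (cx x0), p (reV ζ) := by
  have := (reV_continuous (n := n)).tendsto (cx x0)
  rw [reV_cx] at this
  exact this.eventually h

lemma eventually_cx {p : (Fin n → ℂ) → Prop} {x0 : Fin n → ℝ} (h : ∀ᶠ z in 𝓝 (cx x0), p z) :
    ∀ᶠ x in 𝓝 x0, p (cx x) := (cx_continuous.tendsto x0).eventually h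

lemma volume_range_cx (hn : 0 < n) : volume (Set.range (cx (n := n))) = 0 := by
  let L : (Fin n → ℝ) →ₗ[ℝ] (Fin n → ℂ) :=
    { toFun := cx
      map_add' := cx_add
      map_smul' := fun c x => by funext l; simp [cx] }
  have h1 : (Set.range (cx (n := n))) = (LinearMap.range L : Set (Fin n → ℂ)) := by
    rw [LinearMap.coe_range]; rfl
  rw [h1]
  refine Measure.addHaar_submodule _ _ fun h => ?_
  have : (fun _ => Complex.I : Fin n → ℂ) ∈ LinearMap.range L := by rw [h]; trivial
  obtain ⟨x, hx⟩ := this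
  have := congrArg Complex.im (congrFun hx ⟨0, hn⟩)
  simp [L, cx] at this

/-- Functions that are continuous near `ℝⁿ` agree near `ℝⁿ` with integrable ones: as `ℝⁿ` is a null
set in `ℂⁿ`, they can be cut off to open neighbourhoods on which they have finite integral. -/
lemma exists_cutoff (hn : 0 < n) (ρ : Fin n → (Fin n → ℂ) → ℂ)
    (h : ∀ x : Fin n → ℝ, ∀ᶠ ζ in 𝓝 (cx x), ∀ l, ContinuousAt (ρ l) ζ) :
    ∃ σ : Fin n → (Fin n → ℂ) → ℂ, (∀ l, Integrable (σ l)) ∧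
      ∀ x : Fin n → ℝ, ∀ᶠ ζ in 𝓝 (cx x), ∀ l, σ l ζ = ρ l ζ := by
  -- On `A m` the functions are bounded by `m`; intersecting with neighbourhoods `O m` of `ℝⁿ` of volume
  -- below `2⁻ᵐ / (m + 1)` gives summable bounds for the integral over the union `B`.
  let A : ℕ → Set (Fin n → ℂ) := fun m => {ζ | ∀ᶠ ζ' in 𝓝 ζ, ∀ l, ContinuousAt (ρ l) ζ' ∧ ‖ρ l ζ'‖ < m}
  have hA : ∀ m, IsOpen (A m) := fun m => isOpen_setOf_eventually_nhds
  have hO : ∀ m : ℕ, ∃ O : Set (Fin n → ℂ), Set.range (cx (n := n)) ⊆ O ∧ IsOpen O ∧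
      volume O < (2⁻¹ ^ m / (m + 1) : ℝ≥0∞) := by
    intro m
    refine Set.exists_isOpen_lt_of_lt _ _ ?_
    rw [volume_range_cx hn]
    refine ENNReal.div_pos ?_ ?_
    · exact (ENNReal.pow_pos (by simp) m).ne'
    · exact_mod_cast ENNReal.natCast_ne_top (m + 1)
  choose O hO1 hO2 hO3 using hO
  let B : Set (Fin n → ℂ) := ⋃ m, A m ∩ O m
  have hB : IsOpen B := isOpen_iUnion fun m => (hA m).inter (hO2 m)
  have hBx : ∀ x : Fin n → ℝ, cx x ∈ B := by
    intro x
    have hc := (h x).self_of_nhds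
    obtain ⟨m, hm⟩ := exists_nat_gt (∑ l, ‖ρ l (cx x)‖)
    refine Set.mem_iUnion.2 ⟨m, ?_, hO1 m ⟨x, rfl⟩⟩
    have : ∀ l, ∀ᶠ ζ in 𝓝 (cx x), ‖ρ l ζ‖ < m := by
      intro l
      refine (hc l).norm.eventually_lt_const ?_
      exact (Finset.single_le_sum (f := fun l => ‖ρ l (cx x)‖) (fun _ _ => norm_nonneg _)
        (Finset.mem_univ l)).trans_lt hm
    filter_upwards [h x, eventually_all.2 this] with ζ h1 h2 l
    exact ⟨h1 l, h2 l⟩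
  refine ⟨fun l => B.indicator (ρ l), fun l => ?_, fun x => ?_⟩
  · rw [integrable_indicator_iff hB.measurableSet]
    constructor
    · refine ContinuousOn.aestronglyMeasurable ?_ hB.measurableSet
      intro ζ hζ
      obtain ⟨m, hm, -⟩ := Set.mem_iUnion.1 hζ
      exact (hm.self_of_nhds l).1.continuousWithinAt
    · unfold HasFiniteIntegral
      refine (lintegral_iUnion_le _ _).trans_lt ?_
      have : ∀ m : ℕ, ∫⁻ ζ in A m ∩ O m, ‖ρ l ζ‖ₑ ≤ 2⁻¹ ^ m := by
        intro m
        calc ∫⁻ ζ in A m ∩ O m, ‖ρ l ζ‖ₑ ≤ ∫⁻ ζ in A m ∩ O m, ((m : ℝ≥0∞) + 1) := by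
              refine setLIntegral_mono' ((hA m).inter (hO2 m)).measurableSet fun ζ hζ => ?_
              have h1 : ‖ρ l ζ‖ < m := (hζ.1.self_of_nhds l).2
              have h2 : ‖ρ l ζ‖₊ ≤ (m : ℝ≥0) := by exact_mod_cast h1.le
              have h3 : ‖ρ l ζ‖ₑ ≤ (m : ℝ≥0∞) := by
                rw [enorm_eq_nnnorm]; exact_mod_cast h2
              exact h3.trans (le_add_right le_rfl)
          _ = ((m : ℝ≥0∞) + 1) * volume (A m ∩ O m) := by rw [setLIntegral_const]
          _ ≤ ((m : ℝ≥0∞) + 1) * (2⁻¹ ^ m / (m + 1)) := by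
              gcongr
              exact (measure_mono Set.inter_subset_right).trans (hO3 m).le
          _ = 2⁻¹ ^ m := ENNReal.mul_div_cancel (by simp) (by exact_mod_cast ENNReal.natCast_ne_top (m + 1))
      refine (ENNReal.tsum_le_tsum this).trans_lt ?_
      rw [ENNReal.tsum_geometric]
      simp
  · filter_upwards [hB.mem_nhds (hBx x)] with ζ hζ l
    exact Set.indicator_of_mem hζ _

end RA

/-! ### The first Cousin problem -/

namespace RA

open scoped ENNReal NNReal Topology
open Filter

open MeasureTheory
open scoped ContDiff

variable {n : ℕ}

/-- Near a real point the sum over the partition of unity is finite. -/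
lemma finsum_PU {χ : (Fin n → ℝ) → (Fin n → ℝ) → ℝ} {x0 : Fin n → ℝ} {J : Finset (Fin n → ℝ)}
    (h : ∀ᶠ x in 𝓝 x0, (∀ j ∉ J, χ j x = 0) ∧ ∑ j ∈ J, χ j x = 1)
    (a : (Fin n → ℝ) → (Fin n → ℂ) → ℂ) :
    ∀ᶠ ζ in 𝓝 (cx x0), ∑ᶠ j, (χ j (reV ζ) : ℂ) * a j ζ = ∑ j ∈ J, (χ j (reV ζ) : ℂ) * a j ζ := by
  filter_upwards [eventually_reV h] with ζ hζ
  refine finsum_eq_sum_of_support_subset _ fun j hj => ?_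
  by_contra hne
  exact hj (by simp [hζ.1 j hne])

/-- Averaging, over the partition of unity, functions that agree near a real point. -/
lemma finsum_PU_const {χ : (Fin n → ℝ) → (Fin n → ℝ) → ℝ} {x0 : Fin n → ℝ}
    {J : Finset (Fin n → ℝ)}
    (h : ∀ᶠ x in 𝓝 x0, (∀ j ∉ J, χ j x = 0) ∧ ∑ j ∈ J, χ j x = 1)
    (a : (Fin n → ℝ) → (Fin n → ℂ) → ℂ) (b : (Fin n → ℂ) → ℂ)
    (hab : ∀ j ∈ J, ∀ᶠ ζ in 𝓝 (cx x0), a j ζ = b ζ) :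
    ∀ᶠ ζ in 𝓝 (cx x0), ∑ᶠ j, (χ j (reV ζ) : ℂ) * a j ζ = b ζ := by
  filter_upwards [finsum_PU h a, (eventually_all_finset J).2 hab, eventually_reV h] with ζ h1 h2 h3
  rw [h1, Finset.sum_congr rfl fun j hj => by rw [h2 j hj], ← Finset.sum_mul, ← Complex.ofReal_sum,
    h3.2]
  simp

lemma dbar_continuousAt {g : (Fin n → ℂ) → ℂ} {ζ : Fin n → ℂ} (h : ContDiffAt ℝ 1 g ζ) (l : Fin n) :
    ContinuousAt (dbar g l) ζ := by
  have h1 : ContinuousAt (fderiv ℝ g) ζ :=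
    (h.fderiv_right (m := 0) (by simp)).continuousAt
  unfold dbar
  fun_prop

lemma eventually_contDiffAt {g : (Fin n → ℂ) → ℂ} {ζ : Fin n → ℂ} (h : ContDiffAt ℝ 1 g ζ) :
    ∀ᶠ z in 𝓝 ζ, ContDiffAt ℝ 1 g z := h.eventually (by simp)

/-- If `W` is `C¹` near `cx x0` and `σ` is a globally integrable
extension of `∂̄W`, then `W` plus the (normalised) potential of `σ` is real analytic at `x0`. -/
lemma analytic_correction (hn : 0 < n) {W : (Fin n → ℂ) → ℂ} {x0 : Fin n → ℝ}
    (hW : ContDiffAt ℝ 1 W (cx x0)) {σ : Fin n → (Fin n → ℂ) → ℂ} (hσ : ∀ l, Integrable (σ l))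
    (hd : ∀ᶠ ζ in 𝓝 (cx x0), ∀ l, σ l ζ = dbar W l ζ) :
    AnalyticAt ℝ (fun x => W (cx x) +
      (CFS n : ℂ)⁻¹ * ∑ l, ∫ ζ, greg 0 l (ζ - cx x) * σ l ζ) x0 := by
  obtain ⟨r, hr, hrW⟩ := Metric.eventually_nhds_iff_ball.1 (eventually_contDiffAt hW)
  let ψ : ContDiffBump (cx x0) := ⟨r / 3, r / 2, by positivity, by linarith⟩
  let φ : (Fin n → ℂ) → ℂ := fun ζ => (ψ ζ : ℂ) * W ζ
  have hφ : ContDiff ℝ 1 φ := by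
    rw [contDiff_iff_contDiffAt]
    intro ζ
    by_cases hζ : ζ ∈ Metric.ball (cx x0) r
    · have h1 : ContDiffAt ℝ 1 (fun ζ => (ψ ζ : ℂ)) ζ :=
        Complex.ofRealCLM.contDiff.contDiffAt.comp ζ ψ.contDiff.contDiffAt
      exact h1.mul (hrW ζ hζ)
    · have h1 : ζ ∈ (Metric.closedBall (cx x0) (r / 2))ᶜ := by
        intro h2
        apply hζ
        rw [Metric.mem_closedBall] at h2
        rw [Metric.mem_ball]; linarith
      have h2 : φ =ᶠ[𝓝 ζ] fun _ => 0 := by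
        filter_upwards [Metric.isClosed_closedBall.isOpen_compl.mem_nhds h1] with z hz
        have : ψ z = 0 := by
          refine ψ.zero_of_le_dist ?_
          by_contra hlt
          exact hz (Metric.mem_closedBall.2 (not_le.1 hlt).le)
        simp [φ, this]
      exact contDiffAt_const.congr_of_eventuallyEq h2
  have hφc : HasCompactSupport φ := by
    have h1 : HasCompactSupport (fun ζ => (ψ ζ : ℂ)) :=
      ψ.hasCompactSupport.comp_left (g := fun t : ℝ => (t : ℂ)) (by simp)
    exact h1.mul_right
  have hφW : φ =ᶠ[𝓝 (cx x0)] W := by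
    filter_upwards [ψ.eventuallyEq_one] with z hz
    simp [φ, hz]
  have hdi : ∀ l, Integrable (dbar φ l) := fun l =>
    (dbar_continuous hφ l).integrable_of_hasCompactSupport (dbar_hasCompactSupport hφc l)
  have hτ : ∀ᶠ ζ in 𝓝 (cx x0), ∀ l, σ l ζ - dbar φ l ζ = 0 := by
    filter_upwards [hd, hφW.eventuallyEq_nhds] with ζ h1 h2 l
    rw [h1 l, dbar_congr h2 l, sub_self]
  obtain ⟨δ, hδ, hδτ⟩ := Metric.eventually_nhds_iff_ball.1 hτ
  have hA := fun l => AP (x0 := x0) ((hσ l).sub (hdi l)) (pow_pos hδ 2) (fun ζ hζ => by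
    refine hδτ ζ ?_ l
    rw [Metric.mem_ball, dist_eq_norm]
    exact lt_of_pow_lt_pow_left₀ 2 hδ.le ((sq_norm_le_N2 _).trans_lt hζ)) l
  have hC : (CFS n : ℂ) ≠ 0 := by exact_mod_cast (CFS_pos hn).ne'
  have hS : AnalyticAt ℝ (fun x => (CFS n : ℂ)⁻¹ *
      ∑ l, ∫ ζ, greg 0 l (ζ - cx x) * (σ l - dbar φ l) ζ) x0 :=
    analyticAt_const.mul (Finset.analyticAt_fun_sum _ fun l _ => (hA l).1)
  refine hS.congr ?_
  filter_upwards [eventually_all.2 fun l => (hA l).2, eventually_cx hφW] with x h1 h2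
  have h3 : ∀ l, ∫ ζ, greg 0 l (ζ - cx x) * σ l ζ =
      (∫ ζ, greg 0 l (ζ - cx x) * (σ l - dbar φ l) ζ) + ∫ ζ, greg 0 l (ζ - cx x) * dbar φ l ζ := by
    intro l
    rw [← integral_add (h1 l) (FS_integrable hn hφ hφc (cx x) l)]
    congr 1; ext ζ
    simp only [Pi.sub_apply]; ring
  have h4 := FS hn hφ hφc (cx x)
  rw [integral_finsetSum _ fun l _ => FS_integrable hn hφ hφc (cx x) l] at h4
  simp only [h3, Finset.sum_add_distrib]
  rw [h4, h2]
  field_simp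
  ring

/-- The first Cousin problem, `H¹(ℝⁿ, 𝒪) = 0`. The functions `W i` split the complexified cocycle
by a partition of unity; the analytic splitting is the real part of `W i` corrected by the
potential `w` of their common `∂̄`-derivative. -/
lemma cousin_one (hn : 0 < n) (U : (Fin n → ℝ) → Set (Fin n → ℝ)) (hU : ∀ x, IsOpen (U x))
    (hm : ∀ x, x ∈ U x) (f : (Fin n → ℝ) → (Fin n → ℝ) → (Fin n → ℝ) → ℝ)
    (hf : ∀ i j, ∀ x ∈ U i, x ∈ U j → AnalyticAt ℝ (f i j) x)
    (hc : ∀ i j k, ∀ x ∈ U i, x ∈ U j → x ∈ U k → f i j x + f j k x = f i k x) :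
    ∃ c : (Fin n → ℝ) → (Fin n → ℝ) → ℝ, (∀ i, ∀ x ∈ U i, AnalyticAt ℝ (c i) x) ∧
      ∀ i k, ∀ x ∈ U i, x ∈ U k → c i x - c k x = f i k x := by
  obtain ⟨χ, hχ, hJ⟩ := exists_PU U hU hm
  let W : (Fin n → ℝ) → (Fin n → ℂ) → ℂ := fun i ζ => ∑ᶠ j, (χ j (reV ζ) : ℂ) * Ext (f i j) ζ
  have hχc : ∀ j (ζ : Fin n → ℂ), ContDiffAt ℝ 1 (fun ζ => (χ j (reV ζ) : ℂ)) ζ := fun j ζ =>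
    (Complex.ofRealCLM.contDiff.comp ((hχ j).comp reV_contDiff)).contDiffAt
  have hW : ∀ i, ∀ x ∈ U i, ContDiffAt ℝ 1 (W i) (cx x) := by
    intro i x hx
    obtain ⟨J, hJ1, hJ2⟩ := hJ x
    refine ContDiffAt.congr_of_eventuallyEq ?_ (finsum_PU hJ2 fun j => Ext (f i j))
    refine ContDiffAt.sum fun j hj => ?_
    exact (hχc j _).mul (contDiffAt_of_analytic (Ext_spec (hf i j x hx (hJ1 j hj))).1)
  have hWd : ∀ i k, ∀ x ∈ U i, x ∈ U k →
      ∀ᶠ ζ in 𝓝 (cx x), W i ζ = W k ζ + Ext (f i k) ζ := by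
    intro i k x hi hk
    obtain ⟨J, hJ1, hJ2⟩ := hJ x
    have h1 := finsum_PU_const hJ2 (fun j ζ => Ext (f i j) ζ - Ext (f k j) ζ) (Ext (f i k))
      (fun j hj => by
        refine Ext_sub (hf i j x hi (hJ1 j hj)) (hf k j x hk (hJ1 j hj)) (hf i k x hi hk) ?_
        filter_upwards [(hU i).mem_nhds hi, (hU k).mem_nhds hk, (hU j).mem_nhds (hJ1 j hj)]
          with y h1 h2 h3
        rw [← hc i k j y h1 h2 h3]; ring)
    filter_upwards [h1, finsum_PU hJ2 (fun j ζ => Ext (f i j) ζ - Ext (f k j) ζ),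
      finsum_PU hJ2 fun j => Ext (f i j), finsum_PU hJ2 fun j => Ext (f k j)] with ζ h1 h2 h3 h4
    have h5 : W i ζ - W k ζ = Ext (f i k) ζ := by
      rw [← h1, h2]
      show (∑ᶠ j, _) - (∑ᶠ j, _) = _
      rw [h3, h4, ← Finset.sum_sub_distrib]
      exact Finset.sum_congr rfl fun j _ => by ring
    rw [← h5]; ring
  have hWdb : ∀ i k, ∀ x ∈ U i, x ∈ U k → ∀ᶠ ζ in 𝓝 (cx x), ∀ l, dbar (W i) l ζ = dbar (W k) l ζ := by
    intro i k x hi hk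
    have hE := (Ext_spec (hf i k x hi hk)).1
    have h0 : W i =ᶠ[𝓝 (cx x)] (W k + Ext (f i k)) := hWd i k x hi hk
    filter_upwards [h0.eventuallyEq_nhds, eventually_contDiffAt (hW k x hk),
      hE.eventually_analyticAt] with ζ h1 h2 h3 l
    rw [dbar_congr h1, dbar_add (h2.differentiableAt (by simp))
      ((contDiffAt_of_analytic h3).differentiableAt (by simp)), dbar_analytic h3, add_zero]
  -- The common `∂̄`-derivative of the `W i`, defined globally by averaging.
  let ρ : Fin n → (Fin n → ℂ) → ℂ := fun l ζ => ∑ᶠ j, (χ j (reV ζ) : ℂ) * dbar (W j) l ζ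
  have hρ : ∀ i, ∀ x ∈ U i, ∀ᶠ ζ in 𝓝 (cx x), ∀ l, ρ l ζ = dbar (W i) l ζ := by
    intro i x hx
    obtain ⟨J, hJ1, hJ2⟩ := hJ x
    rw [eventually_all]
    intro l
    refine finsum_PU_const hJ2 (fun j => dbar (W j) l) (dbar (W i) l) fun j hj => ?_
    filter_upwards [hWdb j i x (hJ1 j hj) hx] with ζ h using h l
  have hρc : ∀ x : Fin n → ℝ, ∀ᶠ ζ in 𝓝 (cx x), ∀ l, ContinuousAt (ρ l) ζ := by
    intro x
    filter_upwards [(hρ x x (hm x)).eventually_nhds, eventually_contDiffAt (hW x x (hm x))]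
      with ζ h1 h2 l
    refine (dbar_continuousAt h2 l).congr ?_
    filter_upwards [h1] with z hz using (hz l).symm
  obtain ⟨σ, hσ, hσρ⟩ := exists_cutoff hn ρ hρc
  let w : (Fin n → ℝ) → ℂ := fun x => (CFS n : ℂ)⁻¹ * ∑ l, ∫ ζ, greg 0 l (ζ - cx x) * σ l ζ
  refine ⟨fun i x => (W i (cx x) + w x).re, fun i x hx => ?_, fun i k x hi hk => ?_⟩
  · have h1 := analytic_correction hn (hW i x hx) hσ (by
      filter_upwards [hσρ x, hρ i x hx] with ζ h1 h2 l
      rw [h1, h2])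
    exact (Complex.reCLM.analyticAt _).comp h1
  · have h1 := (hWd i k x hi hk).self_of_nhds
    rw [(Ext_spec (hf i k x hi hk)).2] at h1
    simp only [h1, Complex.add_re, Complex.ofReal_re]
    ring

end RA

/-! ### Analytic square roots and the second Cousin problem -/

namespace RA

open scoped ENNReal NNReal Topology
open Filter

variable {n : ℕ}

/-- Compatible analytic functions on open sets glue. -/
lemma glue {ι : Type*} {V : ι → Set (Fin n → ℝ)} {g : ι → (Fin n → ℝ) → ℝ}
    (hV : ∀ i, IsOpen (V i)) (hg : ∀ i, AnalyticOnNhd ℝ (g i) (V i))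
    (h : ∀ i j z, z ∈ V i → z ∈ V j → g i z = g j z) :
    ∃ f : (Fin n → ℝ) → ℝ, ∀ i, ∀ z ∈ V i, AnalyticAt ℝ f z ∧ f z = g i z := by
  classical
  let f : (Fin n → ℝ) → ℝ := fun z => if hz : ∃ i, z ∈ V i then g hz.choose z else 0
  have hf : ∀ i, ∀ z ∈ V i, f z = g i z := by
    intro i z hz
    have hz' : ∃ i, z ∈ V i := ⟨i, hz⟩
    simp only [f, dif_pos hz']
    exact h _ _ _ hz'.choose_spec hz
  refine ⟨f, fun i z hz => ⟨(hg i z hz).congr ?_, hf i z hz⟩⟩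
  filter_upwards [(hV i).mem_nhds hz] with y hy using (hf i y hy).symm

/-- Two analytic square roots of one function on a convex open set agree up to one global sign. -/
lemma eqOn_or_eqOn_neg {f g : (Fin n → ℝ) → ℝ} {V : Set (Fin n → ℝ)} (hV : Convex ℝ V)
    (hf : AnalyticOnNhd ℝ f V) (hg : AnalyticOnNhd ℝ g V) (hO : IsOpen V)
    (h : ∀ z ∈ V, f z ^ 2 = g z ^ 2) : (∀ z ∈ V, f z = g z) ∨ ∀ z ∈ V, f z = - g z := by
  by_cases hw : ∀ z ∈ V, f z = g z
  · exact Or.inl hw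
  · push Not at hw
    obtain ⟨w, hw, hne⟩ := hw
    right
    refine hf.eqOn_of_preconnected_of_eventuallyEq hg.neg hV.isPreconnected hw ?_
    have h1 : ∀ᶠ z in 𝓝 w, f z ≠ g z :=
      ((hf w hw).continuousAt.prodMk (hg w hw).continuousAt).eventually
        (isOpen_ne_fun continuous_fst continuous_snd |>.mem_nhds hne)
    filter_upwards [h1, hO.mem_nhds hw] with z h2 h3
    exact (sq_eq_sq_iff_eq_or_eq_neg.1 (h z h3)).resolve_left h2

/-- `f` is an analytic square root of `G` on `V`. -/
def IsSqrt (G f : (Fin n → ℝ) → ℝ) (V : Set (Fin n → ℝ)) : Prop :=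
  AnalyticOnNhd ℝ f V ∧ ∀ z ∈ V, f z ^ 2 = G z

/-- An analytic square root on a ball extends to a larger ball: the local square roots on balls of
radius a Lebesgue number, centred in the closed ball, are normalised to agree with `f`. -/
lemma sqrt_extend {G f : (Fin n → ℝ) → ℝ} {R : ℝ} (hR : 0 < R)
    (hloc : ∀ x, ∃ r > 0, ∃ g, IsSqrt G g (Metric.ball x r))
    (hf : IsSqrt G f (Metric.ball 0 R)) :
    ∃ δ > 0, ∃ f', IsSqrt G f' (Metric.ball 0 (R + δ)) ∧ ∀ z ∈ Metric.ball 0 R, f' z = f z := by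
  choose r hr g hg using hloc
  obtain ⟨δ, hδ, hcov⟩ := lebesgue_number_lemma_of_metric
    (isCompact_closedBall (0 : Fin n → ℝ) R) (c := fun x => Metric.ball x (r x))
    (fun _ => Metric.isOpen_ball) (fun x _ => Set.mem_iUnion.2 ⟨x, Metric.mem_ball_self (hr x)⟩)
  have hk : ∀ y : Metric.closedBall (0 : Fin n → ℝ) R, ∃ k, IsSqrt G k (Metric.ball (y : Fin n → ℝ) δ) ∧
      ∀ z ∈ Metric.ball (0 : Fin n → ℝ) R ∩ Metric.ball (y : Fin n → ℝ) δ, f z = k z := by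
    intro y
    obtain ⟨x, hx⟩ := hcov y y.2
    have h1 : IsSqrt G (g x) (Metric.ball (y : Fin n → ℝ) δ) :=
      ⟨(hg x).1.mono hx, fun z hz => (hg x).2 z (hx hz)⟩
    rcases eqOn_or_eqOn_neg ((convex_ball (0 : Fin n → ℝ) R).inter (convex_ball (y : Fin n → ℝ) δ))
      (hf.1.mono Set.inter_subset_left) (h1.1.mono Set.inter_subset_right)
      (Metric.isOpen_ball.inter Metric.isOpen_ball)
      (fun z hz => by rw [hf.2 z hz.1, h1.2 z hz.2]) with h2 | h2
    · exact ⟨g x, h1, h2⟩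
    · exact ⟨-g x, ⟨h1.1.neg, fun z hz => by simp [h1.2 z hz]⟩, h2⟩
  choose k hk1 hk2 using hk
  have hkk : ∀ (y y' : Metric.closedBall (0 : Fin n → ℝ) R) (z : Fin n → ℝ), z ∈ Metric.ball (y : Fin n → ℝ) δ → z ∈ Metric.ball (y' : Fin n → ℝ) δ →
      k y z = k y' z := by
    intro y y' z hz hz'
    have hO : IsOpen (Metric.ball (y : Fin n → ℝ) δ ∩ Metric.ball (y' : Fin n → ℝ) δ) :=
      Metric.isOpen_ball.inter Metric.isOpen_ball
    have hyy : dist (y : Fin n → ℝ) y' < 2 * δ := by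
      have := dist_triangle_right (y : Fin n → ℝ) y' z
      rw [Metric.mem_ball'] at hz hz'
      linarith
    -- The midpoint of the two centres lies in the closed ball, so the overlap meets the open ball,
    -- where both functions agree with `f`.
    have hm : midpoint ℝ (y : Fin n → ℝ) y' ∈ closure (Metric.ball (0 : Fin n → ℝ) R) := by
      rw [closure_ball _ hR.ne']
      exact (convex_closedBall (0 : Fin n → ℝ) R).midpoint_mem y.2 y'.2
    obtain ⟨p, hp, hpR⟩ := mem_closure_iff.1 hm _ hO (by
      constructor
      · rw [Metric.mem_ball, dist_midpoint_left]
        norm_num; linarith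
      · rw [Metric.mem_ball, dist_midpoint_right]
        norm_num; linarith)
    refine ((hk1 y).1.mono Set.inter_subset_left).eqOn_of_preconnected_of_eventuallyEq
      ((hk1 y').1.mono Set.inter_subset_right)
      ((convex_ball (y : Fin n → ℝ) δ).inter (convex_ball (y' : Fin n → ℝ) δ)).isPreconnected hp ?_
      ⟨hz, hz'⟩
    filter_upwards [hO.mem_nhds hp, Metric.isOpen_ball.mem_nhds hpR] with w hw hwR
    rw [← hk2 y w ⟨hwR, hw.1⟩, hk2 y' w ⟨hwR, hw.2⟩]
  obtain ⟨f', hf'⟩ := glue (V := fun i : Option (Metric.closedBall (0 : Fin n → ℝ) R) =>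
      i.elim (Metric.ball 0 R) fun y => Metric.ball (y : Fin n → ℝ) δ)
    (g := fun i => i.elim f k)
    (by rintro (_ | y) <;> exact Metric.isOpen_ball)
    (by
      rintro (_ | y)
      · exact hf.1
      · exact (hk1 y).1)
    (by
      rintro (_ | y) (_ | y') z hz hz'
      · rfl
      · exact hk2 y' z ⟨hz, hz'⟩
      · exact (hk2 y z ⟨hz', hz⟩).symm
      · exact hkk y y' z hz hz')
  have hcov2 : ∀ z ∈ Metric.ball (0 : Fin n → ℝ) (R + δ),
      ∃ y : Metric.closedBall (0 : Fin n → ℝ) R, z ∈ Metric.ball (y : Fin n → ℝ) δ := by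
    intro z hz
    rw [mem_ball_zero_iff] at hz
    by_cases hzR : ‖z‖ ≤ R
    · exact ⟨⟨z, mem_closedBall_zero_iff.2 hzR⟩, Metric.mem_ball_self hδ⟩
    · push Not at hzR
      have hz0 : 0 < ‖z‖ := hR.trans hzR
      refine ⟨⟨(R / ‖z‖) • z, ?_⟩, ?_⟩
      · rw [mem_closedBall_zero_iff, norm_smul, Real.norm_of_nonneg (by positivity),
          div_mul_cancel₀ _ hz0.ne']
      · rw [Metric.mem_ball, dist_eq_norm]
        have : z - (R / ‖z‖) • z = (1 - R / ‖z‖) • z := by rw [sub_smul, one_smul]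
        show ‖z - (R / ‖z‖) • z‖ < δ
        rw [this, norm_smul, Real.norm_of_nonneg (by
          rw [sub_nonneg, div_le_one hz0]; exact hzR.le), sub_mul, div_mul_cancel₀ _ hz0.ne']
        linarith
  refine ⟨δ, hδ, f', ⟨fun z hz => ?_, fun z hz => ?_⟩, fun z hz => (hf' none z hz).2⟩
  · obtain ⟨y, hy⟩ := hcov2 z hz
    exact (hf' (some y) z hy).1
  · obtain ⟨y, hy⟩ := hcov2 z hz
    rw [(hf' (some y) z hy).2]
    exact (hk1 y).2 z hy

/-- A function that is locally the square of an analytic function is globally so: starting at the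
origin, the supremum of the radii of balls carrying a square root is infinite. -/
lemma exists_sqrt {G : (Fin n → ℝ) → ℝ}
    (hloc : ∀ x, ∃ r > 0, ∃ g, IsSqrt G g (Metric.ball x r)) :
    ∃ f : (Fin n → ℝ) → ℝ, ∀ z, AnalyticAt ℝ f z ∧ f z ^ 2 = G z := by
  obtain ⟨r0, hr0, g0, hg0⟩ := hloc 0
  let P : ℝ → Prop := fun R => ∃ f, IsSqrt G f (Metric.ball 0 R) ∧ f =ᶠ[𝓝 0] g0
  have hmono : ∀ {R R'}, R ≤ R' → P R' → P R := by
    rintro R R' h ⟨f, hf, h0⟩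
    exact ⟨f, ⟨hf.1.mono (Metric.ball_subset_ball h), fun z hz =>
      hf.2 z (Metric.ball_subset_ball h hz)⟩, h0⟩
  -- Square roots on concentric balls with the same germ at the centre agree, hence glue.
  have hglue : ∀ S : Set ℝ, (∀ R ∈ S, 0 < R ∧ P R) → ∃ f : (Fin n → ℝ) → ℝ,
      (∀ R ∈ S, IsSqrt G f (Metric.ball 0 R)) ∧ (S.Nonempty → f =ᶠ[𝓝 0] g0) := by
    intro S hS
    choose! k hk using fun R hR => (hS R hR).2
    have hle : ∀ i ∈ S, ∀ j ∈ S, i ≤ j → ∀ z ∈ Metric.ball (0 : Fin n → ℝ) i, k i z = k j z := by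
      intro i hi j hj hij
      exact (hk i hi).1.1.eqOn_of_preconnected_of_eventuallyEq
        ((hk j hj).1.1.mono (Metric.ball_subset_ball hij)) (convex_ball _ _).isPreconnected
        (Metric.mem_ball_self (hS i hi).1) ((hk i hi).2.trans (hk j hj).2.symm)
    obtain ⟨f, hf⟩ := glue (V := fun i : S => Metric.ball (0 : Fin n → ℝ) i) (g := fun i => k i)
      (fun _ => Metric.isOpen_ball) (fun i => (hk i i.2).1.1) (fun i j z hz hz' => by
        rcases le_total (i : ℝ) j with h | h
        · exact hle i i.2 j j.2 h z hz
        · exact (hle j j.2 i i.2 h z hz').symm)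
    refine ⟨f, fun R hR => ⟨fun z hz => (hf ⟨R, hR⟩ z hz).1, fun z hz => ?_⟩, ?_⟩
    · rw [(hf ⟨R, hR⟩ z hz).2]
      exact (hk R hR).1.2 z hz
    · rintro ⟨R, hR⟩
      filter_upwards [(hk R hR).2, Metric.ball_mem_nhds 0 (hS R hR).1] with z h1 h2
      rw [(hf ⟨R, hR⟩ z h2).2, h1]
  have hall : ∀ R, P R := by
    by_contra hcon
    push Not at hcon
    obtain ⟨R1, hR1⟩ := hcon
    let S : Set ℝ := {R | 0 < R ∧ P R}
    have hS0 : r0 ∈ S := ⟨hr0, g0, hg0, EventuallyEq.rfl⟩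
    have hbdd : BddAbove S := ⟨R1, fun R hR => by
      by_contra hlt
      exact hR1 (hmono (not_le.1 hlt).le hR.2)⟩
    obtain ⟨f, hf, hf0⟩ := hglue S fun R hR => hR
    have hpos : 0 < sSup S := hr0.trans_le (le_csSup hbdd hS0)
    have hfS : IsSqrt G f (Metric.ball 0 (sSup S)) := by
      have hz : ∀ z ∈ Metric.ball (0 : Fin n → ℝ) (sSup S), ∃ R ∈ S, z ∈ Metric.ball (0 : Fin n → ℝ) R := by
        intro z hz
        obtain ⟨R, hR, hlt⟩ := exists_lt_of_lt_csSup ⟨r0, hS0⟩ (mem_ball_zero_iff.1 hz)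
        exact ⟨R, hR, mem_ball_zero_iff.2 hlt⟩
      constructor
      · intro z hz'
        obtain ⟨R, hR, h⟩ := hz z hz'
        exact (hf R hR).1 z h
      · intro z hz'
        obtain ⟨R, hR, h⟩ := hz z hz'
        exact (hf R hR).2 z h
    obtain ⟨δ, hδ, f', hf', he⟩ := sqrt_extend hpos hloc hfS
    have h1 : sSup S + δ ∈ S := by
      refine ⟨by positivity, f', hf', EventuallyEq.trans ?_ (hf0 ⟨r0, hS0⟩)⟩
      filter_upwards [Metric.ball_mem_nhds 0 hpos] with z hz using he z hz
    have := le_csSup hbdd h1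
    linarith
  obtain ⟨f, hf, -⟩ := hglue (Set.Ioi 0) fun R hR => ⟨hR, hall R⟩
  refine ⟨f, fun z => ?_⟩
  have hz : z ∈ Metric.ball (0 : Fin n → ℝ) (‖z‖ + 1) := by rw [mem_ball_zero_iff]; linarith
  have h1 := hf (‖z‖ + 1) (Set.mem_Ioi.2 (by positivity))
  exact ⟨h1.1 z hz, h1.2 z hz⟩

lemma cc_ser {f : (Fin n → ℝ) → ℝ} {x : Fin n → ℝ} (hf : AnalyticAt ℝ f x) : cc (ser f x) = f x :=
  constantCoeff_ser hf

/-- Divisibility of germs at the points of `V` gives an analytic quotient on `V`, whose value at a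
point is the constant term of the quotient of the germs. -/
lemma exists_quotient_on {a b : (Fin n → ℝ) → ℝ} {V : Set (Fin n → ℝ)} (hV : IsOpen V)
    (ha : ∀ x ∈ V, AnalyticAt ℝ a x) (hb : ∀ x ∈ V, AnalyticAt ℝ b x) (h0 : ∀ x ∈ V, ser b x ≠ 0)
    (h : ∀ x ∈ V, ser b x ∣ ser a x) :
    ∃ c : (Fin n → ℝ) → ℝ, ∀ x ∈ V, AnalyticAt ℝ c x ∧ ser a x = ser b x * ser c x := by
  choose! c hc using h
  have key : ∀ x ∈ V, (fun y => cc (c y)) =ᶠ[𝓝 x] rep (c x) x := by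
    intro x hx
    have hr := rep_analyticAt (c x) x
    have h1 : a =ᶠ[𝓝 x] b * rep (c x) x := by
      refine ser_inj (ha x hx) ((hb x hx).mul hr) ?_
      rw [ser_mul (hb x hx) hr, ser_rep, hc x hx]
    filter_upwards [h1.eventuallyEq_nhds, hr.eventually_analyticAt, hV.mem_nhds hx] with y h2 h3 hy
    have h4 := ser_congr h2
    rw [ser_mul (hb y hy) h3, hc y hy] at h4
    rw [mul_left_cancel₀ (h0 y hy) h4, cc_ser h3]
  refine ⟨fun y => cc (c y), fun x hx => ⟨(rep_analyticAt (c x) x).congr (key x hx).symm, ?_⟩⟩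
  rw [ser_congr (key x hx), ser_rep, hc x hx]

lemma cousin_zero : Cousin 0 := by
  intro F U hU hm hF h0 h
  refine ⟨F 0, fun x => ?_⟩
  obtain rfl : x = 0 := Subsingleton.elim _ _
  exact ⟨hF 0 0 (hm 0), Associated.refl _⟩

/-- The second Cousin problem is solvable on `ℝⁿ`. Correcting the data by exponentials of a solution
of the first Cousin problem makes them agree up to sign; their squares then glue, and an analytic
square root of the result solves the problem. -/
lemma cousin (n : ℕ) : Cousin n := by
  rcases Nat.eq_zero_or_pos n with rfl | hn
  · exact cousin_zero
  intro F U hU hm hF h0 h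
  have hq : ∀ i j, ∃ q : (Fin n → ℝ) → ℝ, ∀ x ∈ U i ∩ U j, AnalyticAt ℝ q x ∧
      ser (F j) x = ser (F i) x * ser q x := fun i j =>
    exists_quotient_on ((hU i).inter (hU j)) (fun x hx => hF j x hx.2) (fun x hx => hF i x hx.1)
      (fun x hx => h0 i x hx.1) (fun x hx => h i j x hx.1 hx.2)
  choose q hq using hq
  -- The quotients `q i j = F j / F i` form a multiplicative cocycle of nowhere vanishing functions.
  have hqm : ∀ i j k, ∀ x ∈ U i, x ∈ U j → x ∈ U k → q i j x * q j k x = q i k x := by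
    intro i j k x hi hj hk
    have h1 := (hq i j x ⟨hi, hj⟩).2
    have h2 := (hq j k x ⟨hj, hk⟩).2
    rw [(hq i k x ⟨hi, hk⟩).2, h1, mul_assoc] at h2
    have h3 := congrArg cc (mul_left_cancel₀ (h0 i x hi) h2)
    rw [map_mul, cc_ser (hq i k x ⟨hi, hk⟩).1, cc_ser (hq i j x ⟨hi, hj⟩).1,
      cc_ser (hq j k x ⟨hj, hk⟩).1] at h3
    exact h3.symm
  have hqi : ∀ i, ∀ x ∈ U i, q i i x = 1 := by
    intro i x hi
    have h1 := (hq i i x ⟨hi, hi⟩).2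
    have h2 : ser (q i i) x = 1 := mul_left_cancel₀ (h0 i x hi) (by rw [← h1, mul_one])
    rw [← cc_ser (hq i i x ⟨hi, hi⟩).1, h2, map_one]
  have hqn : ∀ i j, ∀ x ∈ U i, x ∈ U j → q i j x ≠ 0 := by
    intro i j x hi hj he
    have := hqm i j i x hi hj hi
    rw [he, zero_mul, hqi i x hi] at this
    exact zero_ne_one this
  have hFq : ∀ i j, ∀ x ∈ U i, x ∈ U j → F j x = F i x * q i j x := by
    intro i j x hi hj
    have := congrArg cc (hq i j x ⟨hi, hj⟩).2
    rwa [map_mul, cc_ser (hF j x hj), cc_ser (hF i x hi), cc_ser (hq i j x ⟨hi, hj⟩).1] at this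
  obtain ⟨c, hc, hcd⟩ := cousin_one hn U hU hm (fun i j x => Real.log (q i j x ^ 2) / 2)
    (fun i j x hi hj => by
      have h1 := hqn i j x hi hj
      have h2 : AnalyticAt ℝ (fun x => q i j x ^ 2) x := (hq i j x ⟨hi, hj⟩).1.pow 2
      simp only [div_eq_mul_inv]
      have h3 : AnalyticAt ℝ Real.log (q i j x ^ 2) := analyticAt_log (by positivity)
      exact (h3.comp_of_eq h2 rfl).mul analyticAt_const)
    (fun i j k x hi hj hk => by
      have h1 := hqn i j x hi hj
      have h2 := hqn j k x hj hk
      rw [← hqm i j k x hi hj hk, mul_pow, Real.log_mul (by positivity) (by positivity)]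
      ring)
  -- The corrected data `E i` agree up to sign on the overlaps.
  let E : (Fin n → ℝ) → (Fin n → ℝ) → ℝ := fun i x => F i x * Real.exp (c i x)
  have hE : ∀ i, ∀ x ∈ U i, AnalyticAt ℝ (E i) x := fun i x hx => (hF i x hx).mul (hc i x hx).rexp'
  have hEE : ∀ i j, ∀ x ∈ U i, x ∈ U j → E j x ^ 2 = E i x ^ 2 := by
    intro i j x hi hj
    have h1 : c i x = c j x + Real.log (q i j x ^ 2) / 2 := by
      have := hcd i j x hi hj
      linarith
    have h2 : Real.exp (c i x) ^ 2 = Real.exp (c j x) ^ 2 * q i j x ^ 2 := by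
      rw [h1, Real.exp_add, mul_pow, ← Real.exp_nat_mul (Real.log _ / 2)]
      congr 1
      have h3 := hqn i j x hi hj
      rw [show ((2 : ℕ) : ℝ) * (Real.log (q i j x ^ 2) / 2) = Real.log (q i j x ^ 2) by
        push_cast; ring, Real.exp_log (by positivity)]
    simp only [E, mul_pow, h2, hFq i j x hi hj]
    ring
  have hball : ∀ x, ∃ r > 0, Metric.ball x r ⊆ U x := fun x => Metric.isOpen_iff.1 (hU x) x (hm x)
  choose r hr hrU using hball
  have hloc : ∀ x, IsSqrt (fun y => E y y ^ 2) (E x) (Metric.ball x (r x)) := fun x =>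
    ⟨fun z hz => hE x z (hrU x hz), fun z hz => hEE z x z (hm z) (hrU x hz)⟩
  obtain ⟨f, hf⟩ := exists_sqrt fun x => ⟨r x, hr x, E x, hloc x⟩
  refine ⟨f, fun x => ⟨(hf x).1, ?_⟩⟩
  have hFx := hF x x (hm x)
  have hcx := hc x x (hm x)
  obtain ⟨u, hu, hu2, hfu⟩ : ∃ u : (Fin n → ℝ) → ℝ, AnalyticAt ℝ u x ∧ (∀ y, u y * u y = 1) ∧
      f =ᶠ[𝓝 x] fun y => u y * E x y := by
    rcases eqOn_or_eqOn_neg (convex_ball x (r x)) (fun z _ => (hf z).1) (hloc x).1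
      Metric.isOpen_ball (fun z hz => by rw [(hf z).2, (hloc x).2 z hz]) with h1 | h1
    · refine ⟨fun _ => 1, analyticAt_const, fun _ => by norm_num, ?_⟩
      filter_upwards [Metric.ball_mem_nhds x (hr x)] with z hz
      rw [h1 z hz, one_mul]
    · refine ⟨fun _ => -1, analyticAt_const, fun _ => by norm_num, ?_⟩
      filter_upwards [Metric.ball_mem_nhds x (hr x)] with z hz
      rw [h1 z hz, neg_one_mul]
  refine associated_of_dvd_dvd ?_ ?_
  · rw [ser_dvd_iff (hf x).1 hFx]
    refine ⟨fun y => u y * Real.exp (- c x y), hu.mul hcx.neg.rexp', ?_⟩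
    filter_upwards [hfu] with y hy
    simp only [Pi.mul_apply, hy, E, Real.exp_neg]
    have := Real.exp_pos (c x y)
    field_simp
    linear_combination (-F x y) * hu2 y
  · rw [ser_dvd_iff hFx (hf x).1]
    refine ⟨fun y => u y * Real.exp (c x y), hu.mul hcx.rexp', ?_⟩
    filter_upwards [hfu] with y hy
    simp only [Pi.mul_apply, hy, E]
    ring

end RA

theorem stmt_19 (n : ℕ) (q : Ideal (ORn n)) (hq : q.IsPrimary)
    (hsat : saturation n (q : Set (ORn n)) = (q : Set (ORn n))) :
    q.IsPrincipal ↔ q.radical.IsPrincipal := by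
  exact ⟨RA.radical_principal (RA.cousin n) q hq, RA.principal_of_radical q hq⟩
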